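/- arXiv:1110.1543 — 3 statements merged into one kernel-verified Lean document; each statement's English description precedes it below -/
import Mathlib

section
/- Let N ≥ 2 and let B ⊂ ℝ^N be a bounded radial domain. Let 𝓑 be an open convex subset of ℝ × ℝ^N × ℝ^{N×N} containing (0,0,0), and let F : [0,∞) × B̄ × 𝓑 → ℝ satisfy: (F1) B × 𝓑 is invariant under (x,u,p,q) ↦ (Rx,u,Rp,RqR) for every hyperplane reflection matrix R ∈ ℝ^{N×N}, and F(t,Rx,u,Rp,RqR) = F(t,x,u,p,q) for every such R and all (t,x,u,p,q) ∈ (0,∞) × B × 𝓑; (F2) F is continuous on [0,∞) × B̄ × 𝓑, Lipschitz in (u,p,q) uniformly in (x,t) (there is L > 0 with |F(t,x,u,p,q) − F(t,x,ũ,p̃,q̃)| ≤ L|(u,p,q) − (ũ,p̃,q̃)| for all x ∈ B, t ≥ 0, and all pairs of points in 𝓑), and F is differentiable with respect to the matrix variable q on [0,∞) × B × 𝓑; (F3) F(·,·,0,0,0) is bounded on [0,∞) × B; (F4) there is α₀ > 0 with ∂_{q_{ij}}F(t,x,u,p,q) ξ_i ξ_j ≥ α₀|ξ|² for all (t,x,u,p,q)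 ∈ [0,∞) × B × 𝓑 and ξ ∈ ℝ^N (summation over repeated indices). Let u ∈ C^{2,1}(B × (0,∞)) ∩ C(B̄ × [0,∞)) be a classical solution of u_t = F(t,x,u,∇u,D²u) in B × (0,∞) with u = 0 on ∂B × (0,∞) and u(·,0) = u₀, such that (U1): there is e ∈ S with u₀(x) ≥ u₀(σ_e(x)) for all x ∈ B(e) and u₀ ∘ σ_e ≢ u₀ on B(e); and (U2): sup_{t ≥ 0} ‖u(·,t)‖_{L^∞(B)} < ∞. Then there exists p ∈ S such that every element of ω(u) is foliated Schwarz symmetric with respect to p. -/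
open Set Metric Filter
open scoped RealInnerProductSpace

noncomputable section

variable {N : ℕ}

/-- Reflection through the hyperplane `H(e) = {x : ⟪x,e⟫ = 0}`:
`σ_e(x) = x - 2 (x·e) e`. -/
def reflHyp (e x : EuclideanSpace ℝ (Fin N)) : EuclideanSpace ℝ (Fin N) :=
  x - (2 * ⟪x, e⟫) • e

/-- The half domain `B(e) = {x ∈ B : x·e > 0}`. -/
def halfDom (B : Set (EuclideanSpace ℝ (Fin N))) (e : EuclideanSpace ℝ (Fin N)) :
    Set (EuclideanSpace ℝ (Fin N)) := {x ∈ B | 0 < ⟪x, e⟫}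

/-- A (bounded) radial domain: an open ball or an open annulus centered at the origin. -/
def IsRadialDomain (B : Set (EuclideanSpace ℝ (Fin N))) : Prop :=
  (∃ R, 0 < R ∧ B = Metric.ball 0 R) ∨
  (∃ r R, 0 < r ∧ r < R ∧ B = {x : EuclideanSpace ℝ (Fin N) | r < ‖x‖ ∧ ‖x‖ < R})

/-- `u` is foliated Schwarz symmetric on `D` with respect to the unit vector `p`:
`u(x) ≥ u(y)` whenever `|x| = |y|` and `x·p ≥ y·p`.  (This is equivalent to axial
symmetry with respect to `ℝp` together with monotonicity in the polar angle.) -/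
def FoliatedSchwarzOn (D : Set (EuclideanSpace ℝ (Fin N)))
    (u : EuclideanSpace ℝ (Fin N) → ℝ) (p : EuclideanSpace ℝ (Fin N)) : Prop :=
  ∀ x ∈ D, ∀ y ∈ D, ‖x‖ = ‖y‖ → ⟪y, p⟫ ≤ ⟪x, p⟫ → u y ≤ u x

/-- The omega limit set of a (bounded) solution `u = u(x,t)`: all continuous
functions `z` on `B̄` which are uniform limits on `B̄` of `u(·, tₙ)` for some
sequence `tₙ → ∞`. -/
def omegaLimitSet (B : Set (EuclideanSpace ℝ (Fin N)))
    (u : EuclideanSpace ℝ (Fin N) → ℝ → ℝ) : Set (EuclideanSpace ℝ (Fin N) → ℝ) :=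
  {z | ContinuousOn z (closure B) ∧ ∃ t : ℕ → ℝ, Tendsto t atTop atTop ∧
    ∀ ε > 0, ∃ n₀ : ℕ, ∀ n ≥ n₀, ∀ x ∈ closure B, |u x (t n) - z x| ≤ ε}

/-- The matrix of the reflection through the hyperplane orthogonal to `e`:
`R_{ij} = δ_{ij} − 2 eᵢ eⱼ`. -/
def reflMat (e : EuclideanSpace ℝ (Fin N)) : Fin N → Fin N → ℝ :=
  fun i j => (if i = j then (1:ℝ) else 0) - 2 * e i * e j

/-- The conjugation `R q R` of a matrix `q` by a (symmetric) matrix `R`. -/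
def matConj (R q : Fin N → Fin N → ℝ) : Fin N → Fin N → ℝ :=
  fun i j => ∑ k, ∑ l, R i k * q k l * R l j

/-- The gradient vector `∇u ∈ ℝᴺ` associated with a differential `Du`. -/
def gradVec (Du : EuclideanSpace ℝ (Fin N) →L[ℝ] ℝ) : EuclideanSpace ℝ (Fin N) :=
  (EuclideanSpace.equiv (Fin N) ℝ).symm (fun i => Du (EuclideanSpace.single i 1))

/-- The Hessian matrix `D²u = (u_{xᵢxⱼ})` associated with a second differential. -/
def hessMat (D2 : EuclideanSpace ℝ (Fin N) →L[ℝ] EuclideanSpace ℝ (Fin N) →L[ℝ] ℝ) :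
    Fin N → Fin N → ℝ :=
  fun i j => D2 (EuclideanSpace.single i 1) (EuclideanSpace.single j 1)

/-- The set `𝓜 = {e ∈ S : z ≥ z ∘ σ_e on B(e) for all z ∈ ω(u)}`. -/
def omegaReflSet (B : Set (EuclideanSpace ℝ (Fin N)))
    (u : EuclideanSpace ℝ (Fin N) → ℝ → ℝ) : Set (EuclideanSpace ℝ (Fin N)) :=
  {e | ‖e‖ = 1 ∧ ∀ z ∈ omegaLimitSet B u, ∀ x ∈ halfDom B e, z (reflHyp e x) ≤ z x}

/-!
For a unit vector `e`, the difference `v(x,t) = u(x,t) - u(σ_e x,t)` vanishes on the boundary of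
`B(e) × (0,∞)` and, by Pucci's inequality, is a supersolution of an extremal linear equation whose
constants do not depend on `e`. Two explicit subsolutions play the role of the Harnack inequality
and of Hopf's lemma: a bump travelling along a path carries positivity of `v` from a ball to a
compact core of `B(e)`, and a barrier `e^{-mt} (a Φ^q - (1 + Φ^ε))`, with `Φ` a product of `x·e` and
a radial defining function of `B`, turns positivity on the core into `liminf v ≥ 0`. As the
constants are uniform in `e`, the set of unit vectors `e` with `z ≥ z ∘ σ_e` on `B(e)` for all
`z ∈ ω(u)` is a neighbourhood of each of its elements `e` for which some `z` is not symmetric, and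
also of the vector `e` of (U1).

Since `2 (∫_B z(x) x dx)·e = ∫_B (z - z ∘ σ_e)(x) (x·e) dx` has a nonnegative integrand, the first
moment of `z` detects asymmetry. If some `z ∈ ω(u)` has a nonzero moment `m`, connectedness of the
open hemisphere around `m` extends the inequality to all `e` with `m·e ≥ 0`, and `p = m/|m|` is an
axis. Otherwise every `z ∈ ω(u)` is symmetric under all reflections near that of (U1), and therefore
radial.
-/

open scoped Topology Matrix

/-! ### One-sided derivative estimates -/

lemma nonpos_of_hasDerivAt_of_eventually_le_nhdsLT {f : ℝ → ℝ} {d t : ℝ} (hf : HasDerivAt f d t)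
    (hmin : ∀ᶠ s in 𝓝[<] t, f t ≤ f s) : d ≤ 0 := by
  have hslope : Tendsto (slope f t) (𝓝[<] t) (𝓝 d) :=
    (hasDerivAt_iff_tendsto_slope.mp hf).mono_left (nhdsWithin_mono t fun _ hs => ne_of_lt hs)
  refine le_of_tendsto hslope ?_
  filter_upwards [hmin, self_mem_nhdsWithin] with s hs hst
  rw [slope_def_field]
  exact div_nonpos_of_nonneg_of_nonpos (sub_nonneg.mpr hs) (sub_nonpos.mpr (le_of_lt hst))

lemma le_sub_of_eventually_lt_slope {f : ℝ → ℝ} {c : ℝ} (hf : ContinuousOn f (Icc 0 1))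
    (hslope : ∀ s ∈ Ico (0 : ℝ) 1, ∀ r < c, ∀ᶠ s' in 𝓝[>] s, r < slope f s s') :
    c ≤ f 1 - f 0 := by
  have hline (s : ℝ) : HasDerivWithinAt (fun s => -f 0 - c * s) (-c) (Ici s) s := by
    simpa using (((hasDerivAt_id s).const_mul c).const_sub (-f 0)).hasDerivWithinAt
  have hneg : ∀ s ∈ Ico (0 : ℝ) 1, ∀ r, -c < r →
      ∃ᶠ s' in 𝓝[>] s, slope (fun s => -f s) s s' < r := by
    intro s hs r hr
    refine Eventually.frequently ?_
    filter_upwards [hslope s hs (-r) (by linarith)] with s' hs'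
    rw [slope_def_field] at hs' ⊢
    rw [neg_sub_neg, ← neg_sub, neg_div]
    linarith
  have hle := image_le_of_liminf_slope_right_le_deriv_boundary (f := fun s => -f s) hf.neg (by simp)
    (by fun_prop) (fun s _ => hline s) hneg (right_mem_Icc.mpr zero_le_one)
  linarith

/-- The increment of `f` in the direction `a + b` splits into one in the direction `b`, controlled
by the line derivative, and one in the direction `a`, controlled by the Lipschitz constant; no joint
differentiability is needed. -/
lemma eventually_lt_slope_of_hasLineDerivAt {E : Type*} [NormedAddCommGroup E] [NormedSpace ℝ E]
    {s : Set E} (hs : IsOpen s) {f : E → ℝ} {K : NNReal} (hf : LipschitzOnWith K f s) {a b y : E}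
    (hy : y ∈ s) {d θ : ℝ} (hd : HasLineDerivAt ℝ f d y b) (hθ : θ < d - K * ‖a‖) :
    ∀ᶠ h in 𝓝[>] (0 : ℝ), θ < h⁻¹ * (f (y + h • (a + b)) - f y) := by
  have hslope : ∀ᶠ h in 𝓝[>] (0 : ℝ), θ + K * ‖a‖ < h⁻¹ • (f (y + h • b) - f y) :=
    hd.tendsto_slope_zero_right.eventually (lt_mem_nhds (by linarith))
  have hmem (v : E) : ∀ᶠ h in 𝓝[>] (0 : ℝ), y + h • v ∈ s := by
    have hcont : Tendsto (fun h : ℝ => y + h • v) (𝓝 0) (𝓝 y) := by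
      simpa using (by fun_prop : Continuous fun h : ℝ => y + h • v).tendsto 0
    exact nhdsWithin_le_nhds (hcont.eventually (hs.mem_nhds hy))
  filter_upwards [hslope, hmem b, hmem (a + b), self_mem_nhdsWithin] with h hlt hb hab (hh : 0 < h)
  have hdist : |f (y + h • (a + b)) - f (y + h • b)| ≤ K * (h * ‖a‖) := by
    have hdiff : y + h • (a + b) - (y + h • b) = h • a := by module
    have := hf.dist_le_mul _ hab _ hb
    rwa [Real.dist_eq, dist_eq_norm, hdiff, norm_smul, Real.norm_of_nonneg hh.le] at this
  rw [smul_eq_mul, ← div_eq_inv_mul, lt_div_iff₀ hh] at hlt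
  rw [← div_eq_inv_mul, lt_div_iff₀ hh]
  linarith [(abs_le.mp hdist).1]

lemma le_sub_of_lipschitzOnWith_of_hasLineDerivAt {E : Type*} [NormedAddCommGroup E]
    [NormedSpace ℝ E] {s : Set E} (hs : IsOpen s) (hconv : Convex ℝ s) {f f' : E → ℝ} {K : NNReal}
    (hf : LipschitzOnWith K f s) {a b x : E} (hx : x ∈ s) (hxab : x + (a + b) ∈ s)
    (hd : ∀ y ∈ s, HasLineDerivAt ℝ f (f' y) y b) {c : ℝ} (hc : ∀ y ∈ s, c ≤ f' y) :
    c - K * ‖a‖ ≤ f (x + (a + b)) - f x := by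
  set γ : ℝ → E := fun r => x + r • (a + b) with hγ
  have hγs : ∀ r ∈ Icc (0 : ℝ) 1, γ r ∈ s := fun r hr => hconv.add_smul_mem hx hxab hr
  have hγc : Continuous γ := by fun_prop
  suffices h : c - K * ‖a‖ ≤ (f ∘ γ) 1 - (f ∘ γ) 0 by simpa [hγ] using h
  refine le_sub_of_eventually_lt_slope (hf.continuousOn.comp hγc.continuousOn hγs) ?_
  intro r hr θ hθ
  have hrs : γ r ∈ s := hγs r ⟨hr.1, hr.2.le⟩
  have hshift : Tendsto (fun r' => r' - r) (𝓝[>] r) (𝓝[>] 0) := by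
    refine tendsto_nhdsWithin_of_tendsto_nhds_of_eventually_within _ ?_ ?_
    · simpa using (by fun_prop : Continuous fun r' : ℝ => r' - r).tendsto r |>.mono_left
        nhdsWithin_le_nhds
    · filter_upwards [self_mem_nhdsWithin] with r' hr' using mem_Ioi.mpr (sub_pos.mpr hr')
  filter_upwards [hshift.eventually (eventually_lt_slope_of_hasLineDerivAt hs hf hrs (hd _ hrs)
    (hθ.trans_le (sub_le_sub_right (hc _ hrs) _)))] with r' hr'
  have hadd : γ r + (r' - r) • (a + b) = γ r' := by simp only [hγ]; module
  rwa [hadd] at hr'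

/-! ### Second order jets along lines -/

/-- `f` is differentiable near `0` and twice differentiable at `0`, with `f' 0 = a` and
`f'' 0 = b`. -/
def HasTwoJet (f : ℝ → ℝ) (a b : ℝ) : Prop :=
  ∃ f' : ℝ → ℝ, (∀ᶠ h in 𝓝 (0 : ℝ), HasDerivAt f (f' h) h) ∧ f' 0 = a ∧ HasDerivAt f' b 0

namespace HasTwoJet

variable {f g : ℝ → ℝ} {a b c d : ℝ}

lemma quadratic (c₀ c₁ c₂ : ℝ) :
    HasTwoJet (fun h => c₀ + c₁ * h + c₂ * h ^ 2) c₁ (2 * c₂) := by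
  refine ⟨fun h => c₁ + 2 * c₂ * h, Eventually.of_forall fun h => ?_, by simp, ?_⟩
  · refine ((((hasDerivAt_id' h).const_mul c₁).const_add c₀).add
      ((hasDerivAt_pow 2 h).const_mul c₂)).congr_deriv ?_
    push_cast
    ring
  · simpa using ((hasDerivAt_id (0 : ℝ)).const_mul (2 * c₂)).const_add c₁

lemma add (hf : HasTwoJet f a b) (hg : HasTwoJet g c d) :
    HasTwoJet (fun h => f h + g h) (a + c) (b + d) := by
  obtain ⟨f', hf', rfl, hf''⟩ := hf
  obtain ⟨g', hg', rfl, hg''⟩ := hg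
  refine ⟨fun h => f' h + g' h, ?_, rfl, hf''.add hg''⟩
  filter_upwards [hf', hg'] with h hfh hgh using hfh.add hgh

lemma const_mul (r : ℝ) (hf : HasTwoJet f a b) :
    HasTwoJet (fun h => r * f h) (r * a) (r * b) := by
  obtain ⟨f', hf', rfl, hf''⟩ := hf
  refine ⟨fun h => r * f' h, ?_, rfl, hf''.const_mul r⟩
  filter_upwards [hf'] with h hfh using hfh.const_mul r

lemma congr (hf : HasTwoJet f a b) (hgf : g =ᶠ[𝓝 0] f) : HasTwoJet g a b := by
  obtain ⟨f', hf', ha, hf''⟩ := hf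
  refine ⟨f', ?_, ha, hf''⟩
  filter_upwards [hf', hgf.eventually_nhds] with h hfh hgfh using hfh.congr_of_eventuallyEq hgfh

lemma comp {ψ ψ' : ℝ → ℝ} (hf : HasTwoJet f a b)
    (hψ : ∀ᶠ y in 𝓝 (f 0), HasDerivAt ψ (ψ' y) y) (hψ' : HasDerivAt ψ' d (f 0)) :
    HasTwoJet (fun h => ψ (f h)) (ψ' (f 0) * a) (d * a ^ 2 + ψ' (f 0) * b) := by
  obtain ⟨f', hf', rfl, hf''⟩ := hf
  have hcont : ContinuousAt f 0 := hf'.self_of_nhds.continuousAt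
  refine ⟨fun h => ψ' (f h) * f' h, ?_, rfl, ?_⟩
  · filter_upwards [hf', hcont.eventually hψ] with h hfh hψh using hψh.comp h hfh
  · refine ((hψ'.comp (0 : ℝ) hf'.self_of_nhds).mul hf'').congr_deriv ?_
    simp only [Function.comp]
    ring

lemma eq_zero_and_nonneg_of_isLocalMin (hf : HasTwoJet f a b) (hmin : IsLocalMin f 0) :
    a = 0 ∧ 0 ≤ b := by
  obtain ⟨f', hf', rfl, hf''⟩ := hf
  have ha : f' 0 = 0 := hmin.hasDerivAt_eq_zero hf'.self_of_nhds
  refine ⟨ha, ?_⟩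
  by_contra! hb
  -- if `b < 0` then `0` is a local maximum as well, so `f` is locally constant
  have hderiv : deriv f =ᶠ[𝓝 0] f' := by filter_upwards [hf'] with h hfh using hfh.deriv
  have hmax : IsLocalMax f 0 := by
    refine isLocalMax_of_deriv_deriv_neg ?_ (hderiv.self_of_nhds.trans ha)
      hf'.self_of_nhds.continuousAt
    rwa [hderiv.deriv_eq, hf''.deriv]
  have hconst : f =ᶠ[𝓝 0] fun _ => f 0 := by
    filter_upwards [hmin, hmax] with h hle hge using le_antisymm hge hle
  have hf'0 : f' =ᶠ[𝓝 0] fun _ => 0 := by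
    filter_upwards [hf', hconst.eventually_nhds] with h hfh hch
    exact hfh.unique ((hasDerivAt_const h (f 0)).congr_of_eventuallyEq hch)
  exact hb.ne ((hf''.congr_of_eventuallyEq hf'0.symm).unique (hasDerivAt_const (0 : ℝ) (0 : ℝ)))

end HasTwoJet

/-! ### Elliptic functionals on matrices -/

/-- The Euclidean space `ℝᴺ`. -/
abbrev Euc (N : ℕ) := EuclideanSpace ℝ (Fin N)

/-- The space of `N × N` matrices as the type of the variable `q` of the operator, normed by the
sup norm. -/
abbrev Mat (N : ℕ) := Fin N → Fin N → ℝ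

/-- The rank one matrix `ξ ξᵀ`. -/
def outerSq (ξ : Euc N) : Mat N := fun i j => ξ i * ξ j

/-- The identity matrix; the instance `1` on `Mat N` is the matrix all of whose entries are `1`. -/
def idMat : Mat N := fun i j => if i = j then 1 else 0

/-- The quadratic form `ξ ↦ ξᵀ M ξ`. -/
def quadForm (M : Mat N) (ξ : Euc N) : ℝ := ∑ i, ∑ j, M i j * ξ i * ξ j

/-- The linear functionals `M ↦ a_{ij} M_{ij}` that can occur as derivative of the operator in the
matrix variable: bounded by `L` and elliptic with constant `α`. -/
structure IsEllipticFunctional (L α : ℝ) (A : Mat N →L[ℝ] ℝ) : Prop where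
  norm_le : ‖A‖ ≤ L
  le_apply_outerSq : ∀ ξ : Euc N, α * ‖ξ‖ ^ 2 ≤ A (outerSq ξ)

/-- `c` is at most the value at `H` of the extremal (Pucci) operator `inf_A A H`, where `A` ranges
over the elliptic functionals with constants `L` and `α`. -/
def IsPucciLowerBound (L α : ℝ) (H : Mat N) (c : ℝ) : Prop :=
  ∀ A : Mat N →L[ℝ] ℝ, IsEllipticFunctional L α A → c ≤ A H

lemma outerSq_symm (ξ : Euc N) (i j : Fin N) : outerSq ξ i j = outerSq ξ j i := mul_comm _ _

lemma idMat_symm (i j : Fin N) : (idMat : Mat N) i j = idMat j i := by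
  simp only [idMat, eq_comm]

lemma norm_outerSq_le (ξ : Euc N) : ‖outerSq ξ‖ ≤ ‖ξ‖ ^ 2 := by
  refine (pi_norm_le_iff_of_nonneg (by positivity)).mpr fun i =>
    (pi_norm_le_iff_of_nonneg (by positivity)).mpr fun j => ?_
  rw [outerSq, norm_mul, sq]
  gcongr <;> exact PiLp.norm_apply_le ξ _

lemma norm_idMat_le : ‖(idMat : Mat N)‖ ≤ 1 := by
  refine (pi_norm_le_iff_of_nonneg zero_le_one).mpr fun i =>
    (pi_norm_le_iff_of_nonneg zero_le_one).mpr fun j => ?_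
  unfold idMat
  split_ifs <;> simp

section quadForm

variable (M M' : Mat N) (c : ℝ) (a ξ : Euc N)

lemma quadForm_outerSq : quadForm (outerSq a) ξ = ⟪a, ξ⟫ ^ 2 := by
  simp only [quadForm, outerSq, PiLp.inner_apply, sq, Finset.sum_mul_sum, RCLike.inner_apply,
    conj_trivial]
  exact Finset.sum_congr rfl fun i _ => Finset.sum_congr rfl fun j _ => by ring

lemma quadForm_idMat : quadForm idMat ξ = ‖ξ‖ ^ 2 := by
  rw [EuclideanSpace.real_norm_sq_eq]
  simp [quadForm, idMat, sq]

lemma quadForm_zero : quadForm (0 : Mat N) ξ = 0 := by simp [quadForm]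

lemma quadForm_add : quadForm (M + M') ξ = quadForm M ξ + quadForm M' ξ := by
  simp [quadForm, add_mul, Finset.sum_add_distrib]

lemma quadForm_smul : quadForm (c • M) ξ = c * quadForm M ξ := by
  simp [quadForm, Finset.mul_sum, mul_assoc]

end quadForm

lemma exists_eq_sum_outerSq {M : Mat N} (hsymm : ∀ i j, M i j = M j i)
    (hM : ∀ ξ : Euc N, 0 ≤ quadForm M ξ) :
    ∃ (m : ℕ) (ξ : Fin m → Euc N), M = ∑ k, outerSq (ξ k) := by
  have hpsd : (Matrix.of M).PosSemidef := by
    refine Matrix.PosSemidef.of_dotProduct_mulVec_nonneg ?_ fun ξ => ?_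
    · ext i j
      simp [hsymm]
    · refine (hM (WithLp.toLp 2 ξ)).trans_eq ?_
      simp only [quadForm, dotProduct, Matrix.mulVec, Finset.mul_sum, Matrix.of_apply,
        Pi.star_apply, star_trivial]
      exact Finset.sum_congr rfl fun i _ => Finset.sum_congr rfl fun j _ => by ring
  obtain ⟨m, C, hC⟩ := Matrix.posSemidef_iff_eq_sum_vecMulVec.mp hpsd
  refine ⟨m, fun k => WithLp.toLp 2 (C k), funext₂ fun i j => ?_⟩
  simpa [Matrix.sum_apply, Matrix.vecMulVec_apply, outerSq] using congrFun (congrFun hC i) j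

namespace IsEllipticFunctional

variable {L α : ℝ} {A : Mat N →L[ℝ] ℝ}

lemma abs_apply_le (hA : IsEllipticFunctional L α A) (M : Mat N) : |A M| ≤ L * ‖M‖ :=
  (A.le_opNorm M).trans (mul_le_mul_of_nonneg_right hA.norm_le (norm_nonneg _))

lemma nonneg_left (hA : IsEllipticFunctional L α A) : 0 ≤ L := (norm_nonneg A).trans hA.norm_le

lemma abs_apply_outerSq_le (hA : IsEllipticFunctional L α A) (ξ : Euc N) :
    |A (outerSq ξ)| ≤ L * ‖ξ‖ ^ 2 :=
  (hA.abs_apply_le _).trans (mul_le_mul_of_nonneg_left (norm_outerSq_le ξ) hA.nonneg_left)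

lemma abs_apply_idMat_le (hA : IsEllipticFunctional L α A) : |A idMat| ≤ L :=
  (hA.abs_apply_le _).trans (mul_le_of_le_one_right hA.nonneg_left norm_idMat_le)

lemma apply_nonneg (hA : IsEllipticFunctional L α A) (hα : 0 ≤ α) {M : Mat N}
    (hsymm : ∀ i j, M i j = M j i) (hM : ∀ ξ : Euc N, 0 ≤ quadForm M ξ) : 0 ≤ A M := by
  obtain ⟨m, ξ, rfl⟩ := exists_eq_sum_outerSq hsymm hM
  rw [map_sum]
  exact Finset.sum_nonneg fun k _ => le_trans (by positivity) (hA.le_apply_outerSq (ξ k))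

end IsEllipticFunctional

lemma IsPucciLowerBound.smul_outerSq_add_smul_idMat (L α : ℝ) {a : ℝ} (ha : 0 ≤ a) (b : ℝ)
    (g : Euc N) :
    IsPucciLowerBound L α (a • outerSq g + b • idMat) (a * (α * ‖g‖ ^ 2) - |b| * L) := by
  intro A hA
  rw [map_add, map_smul, map_smul, smul_eq_mul, smul_eq_mul]
  have habs : |b * A idMat| ≤ |b| * L := by
    rw [abs_mul]
    exact mul_le_mul_of_nonneg_left hA.abs_apply_idMat_le (abs_nonneg b)
  linarith [mul_le_mul_of_nonneg_left (hA.le_apply_outerSq g) ha, neg_abs_le (b * A idMat)]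

lemma IsPucciLowerBound.of_nonneg_sub {L α c : ℝ} (hα : 0 ≤ α) {H H' : Mat N}
    (hc : IsPucciLowerBound L α H c) (hsymm : ∀ i j, (H' - H) i j = (H' - H) j i)
    (hnonneg : ∀ ξ, 0 ≤ quadForm (H' - H) ξ) : IsPucciLowerBound L α H' c := by
  intro A hA
  have hdiff := hA.apply_nonneg hα hsymm hnonneg
  rw [map_sub] at hdiff
  linarith [hc A hA]

/-! ### Second order jets of functions on `ℝᴺ` -/

/-- The function `φ` has gradient `g` and Hessian `H` at `x`, both tested along lines through `x`
only. -/
structure HasSecondJetAt (φ : Euc N → ℝ) (g : Euc N) (H : Mat N) (x : Euc N) : Prop where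
  symm : ∀ i j, H i j = H j i
  line : ∀ ξ : Euc N, HasTwoJet (fun h => φ (x + h • ξ)) ⟪g, ξ⟫ (quadForm H ξ)

lemma tendsto_add_smul_nhds_zero (x ξ : Euc N) :
    Tendsto (fun h : ℝ => x + h • ξ) (𝓝 0) (𝓝 x) := by
  simpa using (by fun_prop : Continuous fun h : ℝ => x + h • ξ).tendsto 0

namespace HasSecondJetAt

variable {φ ψ : Euc N → ℝ} {g g' x : Euc N} {H H' : Mat N}

lemma const (c : ℝ) (x : Euc N) : HasSecondJetAt (fun _ => c) 0 0 x :=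
  ⟨fun _ _ => rfl, fun ξ => by simpa [quadForm_zero] using HasTwoJet.quadratic c 0 0⟩

lemma inner_right (e x : Euc N) : HasSecondJetAt (fun y => ⟪y, e⟫) e 0 x := by
  refine ⟨fun _ _ => rfl, fun ξ => ?_⟩
  convert HasTwoJet.quadratic ⟪x, e⟫ ⟪e, ξ⟫ 0 using 1
  · funext h
    rw [inner_add_left, inner_smul_left, conj_trivial, real_inner_comm ξ e]
    ring
  · simp [quadForm_zero]

lemma norm_sub_sq (a x : Euc N) :
    HasSecondJetAt (fun y => ‖y - a‖ ^ 2) ((2 : ℝ) • (x - a)) ((2 : ℝ) • idMat) x := by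
  refine ⟨fun i j => congrArg (2 * ·) (idMat_symm i j), fun ξ => ?_⟩
  convert HasTwoJet.quadratic (‖x - a‖ ^ 2) ⟪(2 : ℝ) • (x - a), ξ⟫ (‖ξ‖ ^ 2) using 1
  · funext h
    rw [add_sub_right_comm, norm_add_sq_real, inner_smul_right, inner_smul_left, conj_trivial,
      norm_smul, mul_pow, Real.norm_eq_abs, sq_abs]
    ring
  · rw [quadForm_smul, quadForm_idMat]

lemma add (hφ : HasSecondJetAt φ g H x) (hψ : HasSecondJetAt ψ g' H' x) :
    HasSecondJetAt (fun y => φ y + ψ y) (g + g') (H + H') x := by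
  refine ⟨fun i j => ?_, fun ξ => ?_⟩
  · simp only [Pi.add_apply, hφ.symm i j, hψ.symm i j]
  · rw [inner_add_left, quadForm_add]
    exact (hφ.line ξ).add (hψ.line ξ)

lemma sub (hφ : HasSecondJetAt φ g H x) (hψ : HasSecondJetAt ψ g' H' x) :
    HasSecondJetAt (fun y => φ y - ψ y) (g - g') (H - H') x := by
  refine ⟨fun i j => ?_, fun ξ => ?_⟩
  · simp only [Pi.sub_apply, hφ.symm i j, hψ.symm i j]
  · convert (hφ.line ξ).add ((hψ.line ξ).const_mul (-1)) using 1
    · funext h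
      ring
    · rw [inner_sub_left]
      ring
    · rw [sub_eq_add_neg, ← neg_one_smul ℝ H', quadForm_add, quadForm_smul]

lemma comp {f f' : ℝ → ℝ} {d : ℝ} (hφ : HasSecondJetAt φ g H x)
    (hf : ∀ᶠ s in 𝓝 (φ x), HasDerivAt f (f' s) s) (hf' : HasDerivAt f' d (φ x)) :
    HasSecondJetAt (fun y => f (φ y)) (f' (φ x) • g) (d • outerSq g + f' (φ x) • H) x := by
  refine ⟨fun i j => ?_, fun ξ => ?_⟩
  · simp only [Pi.add_apply, Pi.smul_apply, outerSq_symm g i j, hφ.symm i j]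
  · have h0 : φ (x + (0 : ℝ) • ξ) = φ x := by rw [zero_smul, add_zero]
    have hcomp := (hφ.line ξ).comp (ψ := f) (ψ' := f') (d := d) (by rwa [h0]) (by rwa [h0])
    rw [h0] at hcomp
    rwa [inner_smul_left, conj_trivial, quadForm_add, quadForm_smul, quadForm_smul,
      quadForm_outerSq]

lemma const_mul (hφ : HasSecondJetAt φ g H x) (a : ℝ) :
    HasSecondJetAt (fun y => a * φ y) (a • g) (a • H) x := by
  simpa using hφ.comp (f' := fun _ => a) (d := 0)
    (Eventually.of_forall fun s => by simpa using (hasDerivAt_id' s).const_mul a)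
    (hasDerivAt_const _ _)

lemma congr (hφ : HasSecondJetAt φ g H x) (hψ : ψ =ᶠ[𝓝 x] φ) : HasSecondJetAt ψ g H x :=
  ⟨hφ.symm, fun ξ => (hφ.line ξ).congr ((tendsto_add_smul_nhds_zero x ξ).eventually hψ)⟩

lemma eq_zero_and_nonneg_of_isLocalMin (hφ : HasSecondJetAt φ g H x) (hmin : IsLocalMin φ x) :
    g = 0 ∧ ∀ ξ, 0 ≤ quadForm H ξ := by
  have hline (ξ : Euc N) : ⟪g, ξ⟫ = 0 ∧ 0 ≤ quadForm H ξ := by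
    refine (hφ.line ξ).eq_zero_and_nonneg_of_isLocalMin ?_
    filter_upwards [(tendsto_add_smul_nhds_zero x ξ).eventually hmin] with h hh
    simpa using hh
  exact ⟨ext_inner_right ℝ fun ξ => by rw [(hline ξ).1, inner_zero_left], fun ξ => (hline ξ).2⟩

end HasSecondJetAt

/-! ### Supersolutions and the comparison principle -/

/-- Viscosity supersolutions: `v` is continuous on `C × [0,∞)`, vanishes on `(C \ Ω) × (0,∞)`, and
satisfies `v_t ≥ inf_A A(D²v) - L (|v| + |∇v|)` in `Ω × (0,∞)` whenever a test function `φ` touches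
it from below, for earlier times at the same point and at nearby points at the same time. -/
structure IsSupersolution (C Ω : Set (Euc N)) (L α : ℝ) (v : Euc N → ℝ → ℝ) : Prop where
  continuousOn : ContinuousOn (fun p : Euc N × ℝ => v p.1 p.2) (C ×ˢ Ici 0)
  eq_zero : ∀ x ∈ C, x ∉ Ω → ∀ t, 0 < t → v x t = 0
  sub_le_of_touching : ∀ x ∈ Ω, ∀ t, 0 < t →
    ∀ (φ : Euc N → ℝ → ℝ) (τ : ℝ) (g : Euc N) (H : Mat N) (c : ℝ),
    HasDerivAt (φ x) τ t → HasSecondJetAt (φ · t) g H x →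
    (∀ᶠ s in 𝓝[<] t, v x t - φ x t ≤ v x s - φ x s) →
    (∀ᶠ y in 𝓝 x, v x t - φ x t ≤ v y t - φ y t) →
    IsPucciLowerBound L α H c → c - L * (|v x t| + ‖g‖) ≤ τ

/-- Viscosity subsolutions at a point: `w` is touched from below at `(x,t)` by a function `φ` which
satisfies `φ_t ≤ inf_A A(D²φ) - L (|φ| + |∇φ|)` there. -/
def IsSubsolutionAt (L α : ℝ) (w : Euc N → ℝ → ℝ) (x : Euc N) (t : ℝ) : Prop :=
  ∃ (φ : Euc N → ℝ → ℝ) (τ : ℝ) (g : Euc N) (H : Mat N) (c : ℝ),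
    HasDerivAt (φ x) τ t ∧ HasSecondJetAt (φ · t) g H x ∧
    φ x t = w x t ∧ (∀ᶠ s in 𝓝 t, φ x s ≤ w x s) ∧ (∀ᶠ y in 𝓝 x, φ y t ≤ w y t) ∧
    IsPucciLowerBound L α H c ∧ τ ≤ c - L * (|w x t| + ‖g‖)

lemma hasDerivAt_mul_exp (c b t : ℝ) :
    HasDerivAt (fun s => c * Real.exp (b * s)) (b * (c * Real.exp (b * t))) t := by
  refine ((((hasDerivAt_id' t).const_mul b).exp).const_mul c).congr_deriv ?_
  ring

section comparison

variable {C Ω : Set (Euc N)} {L α : ℝ} {v w : Euc N → ℝ → ℝ}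

lemma IsSupersolution.translate (hv : IsSupersolution C Ω L α v) {t₁ : ℝ} (ht₁ : 0 ≤ t₁) :
    IsSupersolution C Ω L α (fun x t => v x (t₁ + t)) := by
  refine ⟨?_, fun x hx hxΩ t ht => hv.eq_zero x hx hxΩ _ (by linarith), ?_⟩
  · refine hv.continuousOn.comp (f := fun p : Euc N × ℝ => (p.1, t₁ + p.2)) (by fun_prop) ?_
    exact fun p hp => ⟨hp.1, add_nonneg ht₁ hp.2⟩
  · intro x hx t ht φ τ g H c hτ hjet hpast hspace hc
    have hshift : Tendsto (fun s => s - t₁) (𝓝[<] (t₁ + t)) (𝓝[<] t) := by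
      refine tendsto_nhdsWithin_of_tendsto_nhds_of_eventually_within _ ?_ ?_
      · have := (by fun_prop : Continuous fun s : ℝ => s - t₁).tendsto (t₁ + t)
        rw [add_sub_cancel_left] at this
        exact this.mono_left nhdsWithin_le_nhds
      · filter_upwards [self_mem_nhdsWithin] with s hs
        exact mem_Iio.mpr (by linarith [mem_Iio.mp hs])
    refine hv.sub_le_of_touching x hx (t₁ + t) (by linarith) (fun y s => φ y (s - t₁)) τ g H c
      (HasDerivAt.comp_sub_const _ _ (by rwa [add_sub_cancel_left])) ?_ ?_ ?_ hc
    · simpa only [add_sub_cancel_left] using hjet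
    · simpa only [add_sub_cancel_left, add_sub_cancel] using hshift.eventually hpast
    · simpa only [add_sub_cancel_left] using hspace

/-- At a point where `v - w` equals a negative multiple `-μ e^{Kt}`, `K > L`, and is above it
before and nearby, the zero order terms violate the differential inequalities. -/
lemma IsSupersolution.false_of_touching (hv : IsSupersolution C Ω L α v) (hL : 0 ≤ L)
    {x : Euc N} (hx : x ∈ Ω) {t : ℝ} (ht : 0 < t) (hw : IsSubsolutionAt L α w x t) {K μ : ℝ}
    (hK : L < K) (hμ : 0 < μ) (heq : v x t = w x t - μ * Real.exp (K * t))
    (hpast : ∀ᶠ s in 𝓝[<] t, w x s - μ * Real.exp (K * s) ≤ v x s)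
    (hspace : ∀ᶠ y in 𝓝 x, w y t - μ * Real.exp (K * t) ≤ v y t) : False := by
  obtain ⟨φ, τ, g, H, c, hτ, hjet, hφ, hφt, hφx, hc, hle⟩ := hw
  set b := μ * Real.exp (K * t)
  have hb0 : 0 < b := mul_pos hμ (Real.exp_pos _)
  have hsuper : c - L * (|v x t| + ‖g‖) ≤ τ - K * b := by
    refine hv.sub_le_of_touching x hx t ht (fun y s => φ y s - μ * Real.exp (K * s)) _ g H c
      (hτ.sub (hasDerivAt_mul_exp μ K t)) ?_ ?_ ?_ hc
    · simpa using hjet.sub (HasSecondJetAt.const b x)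
    · filter_upwards [hpast, nhdsWithin_le_nhds hφt] with s hs hφs
      linarith
    · filter_upwards [hspace, hφx] with y hy hφy
      linarith
  have habs : |v x t| ≤ |w x t| + b := by
    rw [heq]
    exact (abs_sub _ _).trans_eq (by rw [abs_of_pos hb0])
  nlinarith [mul_le_mul_of_nonneg_left habs hL, mul_lt_mul_of_pos_right hK hb0]

/-- The weight `e^{-Kt}` with `K > L` absorbs the zero order term at a negative minimum of
`(v - w) e^{-Kt}`. -/
theorem IsSupersolution.le_of_isSubsolutionAt (hv : IsSupersolution C Ω L α v) (hL : 0 ≤ L)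
    (hC : IsCompact C) (hΩC : Ω ⊆ C) (hΩ : IsOpen Ω) {T : ℝ}
    (hw : ContinuousOn (fun p : Euc N × ℝ => w p.1 p.2) (C ×ˢ Icc 0 T))
    (hinit : ∀ x ∈ C, w x 0 ≤ v x 0) (hbdry : ∀ x ∈ C, x ∉ Ω → ∀ t ∈ Icc 0 T, w x t ≤ 0)
    (hsub : ∀ x ∈ Ω, ∀ t ∈ Ioc 0 T, IsSubsolutionAt L α w x t) :
    ∀ x ∈ C, ∀ t ∈ Icc 0 T, w x t ≤ v x t := by
  intro x₀ hx₀ t₀ ht₀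
  by_contra! hneg
  set K := L + 1
  set f : Euc N × ℝ → ℝ := fun p => (v p.1 p.2 - w p.1 p.2) * Real.exp (-K * p.2) with hf
  have hfc : ContinuousOn f (C ×ˢ Icc 0 T) := by
    refine ((hv.continuousOn.mono ?_).sub hw).mul ?_
    · exact prod_mono le_rfl fun s hs => hs.1
    · exact (by fun_prop : Continuous fun p : Euc N × ℝ => Real.exp (-K * p.2)).continuousOn
  have hf_mul_exp (y : Euc N) (s : ℝ) : f (y, s) * Real.exp (K * s) = v y s - w y s := by
    rw [hf, mul_assoc, ← Real.exp_add, neg_mul, neg_add_cancel, Real.exp_zero, mul_one]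
  obtain ⟨⟨x, t⟩, ⟨hx : x ∈ C, ht : t ∈ Icc 0 T⟩, hmin⟩ :=
    (hC.prod isCompact_Icc).exists_isMinOn ⟨(x₀, t₀), hx₀, ht₀⟩ hfc
  have hμ : 0 < -f (x, t) := by
    have hle : f (x, t) ≤ f (x₀, t₀) := hmin ⟨hx₀, ht₀⟩
    have hlt : f (x₀, t₀) < 0 := mul_neg_of_neg_of_pos (by simpa using hneg) (Real.exp_pos _)
    linarith
  have hbelow : ∀ y ∈ C, ∀ s ∈ Icc 0 T, w y s - -f (x, t) * Real.exp (K * s) ≤ v y s := by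
    intro y hy s hs
    have hle : f (x, t) ≤ f (y, s) := hmin ⟨hy, hs⟩
    nlinarith [hf_mul_exp y s, mul_le_mul_of_nonneg_right hle (Real.exp_pos (K * s)).le]
  have heq : v x t = w x t - -f (x, t) * Real.exp (K * t) := by linarith [hf_mul_exp x t]
  have hpos : 0 < -f (x, t) * Real.exp (K * t) := mul_pos hμ (Real.exp_pos _)
  have ht0 : 0 < t := ht.1.lt_of_ne (by rintro rfl; linarith [hinit x hx])
  have hxΩ : x ∈ Ω := by
    by_contra hxn
    linarith [hv.eq_zero x hx hxn t ht0, hbdry x hx hxn t ht]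
  refine hv.false_of_touching hL hxΩ ht0 (hsub x hxΩ t ⟨ht0, ht.2⟩) (lt_add_one L) hμ heq ?_ ?_
  · filter_upwards [nhdsWithin_le_nhds (lt_mem_nhds ht0), self_mem_nhdsWithin] with s hs0 hst
    exact hbelow x hx s ⟨le_of_lt hs0, (le_of_lt hst).trans ht.2⟩
  · filter_upwards [hΩ.mem_nhds hxΩ] with y hy using hbelow y (hΩC hy) t ht

end comparison

lemma IsSubsolutionAt.of_hasDerivAt {L α τ c : ℝ} {w : Euc N → ℝ → ℝ} {x g : Euc N} {t : ℝ}
    {H : Mat N} (hτ : HasDerivAt (w x) τ t) (hjet : HasSecondJetAt (w · t) g H x)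
    (hc : IsPucciLowerBound L α H c) (hle : τ ≤ c - L * (|w x t| + ‖g‖)) :
    IsSubsolutionAt L α w x t :=
  ⟨w, τ, g, H, c, hτ, hjet, rfl, Eventually.of_forall fun _ => le_rfl,
    Eventually.of_forall fun _ => le_rfl, hc, hle⟩

lemma isSubsolutionAt_of_nonneg_of_eq_zero {L α : ℝ} {w : Euc N → ℝ → ℝ} {x : Euc N} {t : ℝ}
    (hnonneg : ∀ y s, 0 ≤ w y s) (hzero : w x t = 0) : IsSubsolutionAt L α w x t := by
  refine ⟨fun _ _ => 0, 0, 0, 0, 0, hasDerivAt_const t 0, HasSecondJetAt.const 0 x, hzero.symm,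
    Eventually.of_forall fun s => hnonneg x s, Eventually.of_forall fun y => hnonneg y t,
    fun A _ => (map_zero A).ge, ?_⟩
  simp [hzero]

lemma IsSubsolutionAt.sub_mul_exp {L α η : ℝ} {w : Euc N → ℝ → ℝ} {x : Euc N} {t : ℝ}
    (hw : IsSubsolutionAt L α w x t) (hL : 0 ≤ L) (hη : 0 ≤ η) :
    IsSubsolutionAt L α (fun y s => w y s - η * Real.exp (L * s)) x t := by
  obtain ⟨φ, τ, g, H, c, hτ, hjet, hφ, hφt, hφx, hc, hle⟩ := hw
  refine ⟨fun y s => φ y s - η * Real.exp (L * s), _, g, H, c,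
    hτ.sub (hasDerivAt_mul_exp η L t), ?_, congrArg (· - η * Real.exp (L * t)) hφ, ?_, ?_, hc, ?_⟩
  · simpa using hjet.sub (HasSecondJetAt.const (η * Real.exp (L * t)) x)
  · filter_upwards [hφt] with s hs using sub_le_sub_right hs _
  · filter_upwards [hφx] with y hy using sub_le_sub_right hy _
  · have hexp : 0 ≤ η * Real.exp (L * t) := by positivity
    have habs : |w x t - η * Real.exp (L * t)| ≤ |w x t| + η * Real.exp (L * t) :=
      (abs_sub _ _).trans_eq (by rw [abs_of_nonneg hexp])
    linarith [mul_le_mul_of_nonneg_left habs hL]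

lemma IsSubsolutionAt.const_mul {L α a : ℝ} {w : Euc N → ℝ → ℝ} {x : Euc N} {t : ℝ}
    (hw : IsSubsolutionAt L α w x t) (ha : 0 ≤ a) :
    IsSubsolutionAt L α (fun y s => a * w y s) x t := by
  obtain ⟨φ, τ, g, H, c, hτ, hjet, hφ, hφt, hφx, hc, hle⟩ := hw
  refine ⟨fun y s => a * φ y s, a * τ, a • g, a • H, a * c, hτ.const_mul a,
    hjet.const_mul a, congrArg (a * ·) hφ, ?_, ?_, fun A hA => ?_, ?_⟩
  · filter_upwards [hφt] with s hs using mul_le_mul_of_nonneg_left hs ha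
  · filter_upwards [hφx] with y hy using mul_le_mul_of_nonneg_left hy ha
  · simpa only [map_smul, smul_eq_mul] using mul_le_mul_of_nonneg_left (hc A hA) ha
  · rw [norm_smul, Real.norm_of_nonneg ha, abs_mul, abs_of_nonneg ha]
    linarith [mul_le_mul_of_nonneg_left hle ha]

lemma IsSupersolution.neg_mul_exp_le {C Ω : Set (Euc N)} {L α η : ℝ} {v : Euc N → ℝ → ℝ}
    (hv : IsSupersolution C Ω L α v) (hL : 0 ≤ L) (hC : IsCompact C) (hΩC : Ω ⊆ C)
    (hΩ : IsOpen Ω) (hη : 0 ≤ η) (hinit : ∀ x ∈ C, -η ≤ v x 0) :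
    ∀ x ∈ C, ∀ t, 0 ≤ t → -(η * Real.exp (L * t)) ≤ v x t := by
  intro x hx t ht
  have hle := hv.le_of_isSubsolutionAt (w := fun _ s => 0 - η * Real.exp (L * s)) (T := t) hL hC
    hΩC hΩ (by fun_prop) (fun y hy => by simpa using hinit y hy) ?_ ?_ x hx t ⟨ht, le_rfl⟩
  · rwa [zero_sub] at hle
  · intro y _ _ s _
    linarith [mul_nonneg hη (Real.exp_pos (L * s)).le]
  · intro y _ s _
    exact (isSubsolutionAt_of_nonneg_of_eq_zero (fun _ _ => le_rfl) rfl).sub_mul_exp hL hη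

/-! ### The linearized equation -/

/-- The hypotheses on the dependence of the operator on `P = (u, ∇u, D²u) ∈ 𝓑`: Lipschitz
continuity, and differentiability in the matrix variable with elliptic derivative. -/
structure IsUniformlyElliptic (𝓑 : Set (ℝ × Euc N × Mat N)) (L α : ℝ)
    (f : ℝ × Euc N × Mat N → ℝ) : Prop where
  abs_sub_le : ∀ P ∈ 𝓑, ∀ P' ∈ 𝓑, |f P - f P'| ≤ L * ‖P - P'‖
  exists_hasFDerivAt : ∀ P ∈ 𝓑, ∃ A : Mat N →L[ℝ] ℝ,
    HasFDerivAt (fun q => f (P.1, P.2.1, q)) A P.2.2 ∧ ∀ ξ : Euc N, α * ‖ξ‖ ^ 2 ≤ A (outerSq ξ)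

namespace IsUniformlyElliptic

variable {𝓑 : Set (ℝ × Euc N × Mat N)} {L α : ℝ} {f : ℝ × Euc N × Mat N → ℝ}

lemma exists_isEllipticFunctional (hf : IsUniformlyElliptic 𝓑 L α f) (hL : 0 ≤ L)
    (h𝓑 : IsOpen 𝓑) {P : ℝ × Euc N × Mat N} (hP : P ∈ 𝓑) :
    ∃ A : Mat N →L[ℝ] ℝ, HasFDerivAt (fun q => f (P.1, P.2.1, q)) A P.2.2 ∧
      IsEllipticFunctional L α A := by
  obtain ⟨A, hA, hell⟩ := hf.exists_hasFDerivAt P hP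
  refine ⟨A, hA, hA.le_of_lip' hL ?_, hell⟩
  have hcont : Continuous fun q : Mat N => (P.1, P.2.1, q) := by fun_prop
  filter_upwards [hcont.continuousAt.eventually (h𝓑.mem_nhds hP)] with q hq
  refine (hf.abs_sub_le _ hq P hP).trans_eq ?_
  obtain ⟨v, p, q₀⟩ := P
  simp [Prod.norm_def]

/-- Pucci's inequality; only the matrix variable is linearized. -/
theorem sub_le_sub (hf : IsUniformlyElliptic 𝓑 L α f) (hL : 0 ≤ L) (h𝓑 : IsOpen 𝓑)
    (hconv : Convex ℝ 𝓑) {v₁ v₂ c : ℝ} {p₁ p₂ : Euc N} {q₁ q₂ : Mat N} (h₁ : (v₁, p₁, q₁) ∈ 𝓑)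
    (h₂ : (v₂, p₂, q₂) ∈ 𝓑) (hc : IsPucciLowerBound L α (q₁ - q₂) c) :
    c - L * (|v₁ - v₂| + ‖p₁ - p₂‖) ≤ f (v₁, p₁, q₁) - f (v₂, p₂, q₂) := by
  choose! A hA hell using fun P hP => hf.exists_isEllipticFunctional hL h𝓑 (P := P) hP
  have hlip : LipschitzOnWith ⟨L, hL⟩ f 𝓑 := LipschitzOnWith.of_dist_le_mul fun P hP P' hP' => by
    rw [Real.dist_eq, dist_eq_norm]
    exact hf.abs_sub_le P hP P' hP'
  have hline : ∀ P ∈ 𝓑, HasLineDerivAt ℝ f (A P (q₁ - q₂)) P (0, 0, q₁ - q₂) := fun P hP => by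
    obtain ⟨v, p, q⟩ := P
    simpa [HasLineDerivAt] using (hA _ hP).hasLineDerivAt (q₁ - q₂)
  have hadd : (v₂, p₂, q₂) + ((v₁ - v₂, p₁ - p₂, 0) + (0, 0, q₁ - q₂)) = (v₁, p₁, q₁) := by simp
  have hmain := le_sub_of_lipschitzOnWith_of_hasLineDerivAt h𝓑 hconv hlip h₂ (hadd ▸ h₁) hline
    fun P hP => hc _ (hell P hP)
  rw [hadd] at hmain
  refine le_trans (sub_le_sub_left (mul_le_mul_of_nonneg_left ?_ hL) c) hmain
  simp [Prod.norm_def]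

end IsUniformlyElliptic

/-! ### Reflections -/

section reflection

variable {e : Euc N}

lemma reflHyp_eq_reflection (he : ‖e‖ = 1) (x : Euc N) : reflHyp e x = (ℝ ∙ e)ᗮ.reflection x := by
  simp only [reflHyp, Submodule.reflection_orthogonal_apply, Submodule.reflection_singleton_apply,
    he, real_inner_comm]
  module

lemma reflHyp_reflHyp (he : ‖e‖ = 1) (x : Euc N) : reflHyp e (reflHyp e x) = x := by
  simp only [reflHyp_eq_reflection he, Submodule.reflection_reflection]

lemma norm_reflHyp (he : ‖e‖ = 1) (x : Euc N) : ‖reflHyp e x‖ = ‖x‖ := by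
  rw [reflHyp_eq_reflection he, LinearIsometryEquiv.norm_map]

lemma inner_reflHyp_left (e x y : Euc N) : ⟪reflHyp e x, y⟫ = ⟪x, reflHyp e y⟫ := by
  simp only [reflHyp, inner_sub_left, inner_sub_right, real_inner_smul_left, real_inner_smul_right,
    real_inner_comm y e]
  ring

lemma inner_reflHyp_self (he : ‖e‖ = 1) (x : Euc N) : ⟪reflHyp e x, e⟫ = -⟪x, e⟫ := by
  rw [reflHyp, inner_sub_left, real_inner_smul_left, real_inner_self_eq_norm_sq, he]
  ring

lemma reflHyp_eq_self {x : Euc N} (h : ⟪x, e⟫ = 0) : reflHyp e x = x := by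
  simp [reflHyp, h]

lemma reflHyp_add_smul (e x ξ : Euc N) (h : ℝ) :
    reflHyp e (x + h • ξ) = reflHyp e x + h • reflHyp e ξ := by
  simp only [reflHyp, inner_add_left, real_inner_smul_left]
  module

@[fun_prop]
lemma continuous_reflHyp (e : Euc N) : Continuous (reflHyp e) := by
  unfold reflHyp
  fun_prop

lemma reflHyp_mem_closure {B : Set (Euc N)} (hB : MapsTo (reflHyp e) B B) {x : Euc N}
    (hx : x ∈ closure B) : reflHyp e x ∈ closure B :=
  hB.closure (continuous_reflHyp e) hx

lemma quadForm_eq_dotProduct (M : Mat N) (ξ : Euc N) :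
    quadForm M ξ = ξ.ofLp ⬝ᵥ Matrix.of M *ᵥ ξ.ofLp := by
  simp only [quadForm, dotProduct, Matrix.mulVec, Finset.mul_sum, Matrix.of_apply]
  exact Finset.sum_congr rfl fun i _ => Finset.sum_congr rfl fun j _ => by ring

lemma of_matConj (R q : Mat N) :
    Matrix.of (matConj R q) = Matrix.of R * Matrix.of q * Matrix.of R := by
  ext i j
  simp only [matConj, Matrix.mul_apply, Matrix.of_apply, Finset.sum_mul]
  exact Finset.sum_comm

lemma transpose_of_reflMat (e : Euc N) : (Matrix.of (reflMat e))ᵀ = Matrix.of (reflMat e) := by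
  ext i j
  simp only [Matrix.transpose_apply, Matrix.of_apply, reflMat, eq_comm]
  ring

lemma of_reflMat_mulVec (e ξ : Euc N) : Matrix.of (reflMat e) *ᵥ ξ.ofLp = (reflHyp e ξ).ofLp := by
  funext i
  simp only [Matrix.mulVec, dotProduct, Matrix.of_apply, reflMat, reflHyp, sub_mul, ite_mul,
    one_mul, zero_mul, Finset.sum_sub_distrib, Finset.sum_ite_eq, Finset.mem_univ, if_true,
    PiLp.sub_apply, PiLp.smul_apply, PiLp.inner_apply, RCLike.inner_apply, conj_trivial,
    smul_eq_mul, Finset.mul_sum, Finset.sum_mul]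
  exact congrArg _ (Finset.sum_congr rfl fun j _ => by ring)

lemma quadForm_matConj_reflMat (e : Euc N) (q : Mat N) (ξ : Euc N) :
    quadForm (matConj (reflMat e) q) ξ = quadForm q (reflHyp e ξ) := by
  rw [quadForm_eq_dotProduct, quadForm_eq_dotProduct, of_matConj, ← of_reflMat_mulVec,
    ← Matrix.mulVec_mulVec, ← Matrix.mulVec_mulVec, Matrix.dotProduct_mulVec,
    ← Matrix.mulVec_transpose, transpose_of_reflMat]

lemma matConj_reflMat_symm {q : Mat N} (hq : ∀ i j, q i j = q j i) (i j : Fin N) :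
    matConj (reflMat e) q i j = matConj (reflMat e) q j i := by
  have hq' : (Matrix.of q)ᵀ = Matrix.of q := by
    ext i j
    exact hq j i
  have hR := transpose_of_reflMat e
  have : (Matrix.of (matConj (reflMat e) q))ᵀ = Matrix.of (matConj (reflMat e) q) := by
    rw [of_matConj, Matrix.transpose_mul, Matrix.transpose_mul, hq', hR, Matrix.mul_assoc]
  exact congrFun₂ this j i

end reflection

/-- The part of the closed domain on the nonnegative side of `H(e)`. -/
def halfClo (B : Set (Euc N)) (e : Euc N) : Set (Euc N) := {x ∈ closure B | 0 ≤ ⟪x, e⟫}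

lemma isCompact_halfClo {B : Set (Euc N)} (hB : Bornology.IsBounded B) (e : Euc N) :
    IsCompact (halfClo B e) :=
  hB.isCompact_closure.inter_right
    (isClosed_Ici.preimage (by fun_prop : Continuous fun x : Euc N => ⟪x, e⟫))

lemma isOpen_halfDom {B : Set (Euc N)} (hB : IsOpen B) (e : Euc N) : IsOpen (halfDom B e) :=
  hB.inter (isOpen_Ioi.preimage (by fun_prop : Continuous fun x : Euc N => ⟪x, e⟫))

lemma halfDom_subset_halfClo (B : Set (Euc N)) (e : Euc N) : halfDom B e ⊆ halfClo B e :=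
  fun _ hx => ⟨subset_closure hx.1, hx.2.le⟩

lemma mem_frontier_or_inner_eq_zero {B : Set (Euc N)} (hB : IsOpen B) {e x : Euc N}
    (hx : x ∈ halfClo B e) (hx' : x ∉ halfDom B e) : x ∈ frontier B ∨ ⟪x, e⟫ = 0 := by
  rw [hB.frontier_eq, or_iff_not_imp_right]
  exact fun h => ⟨hx.1, fun hxB => hx' ⟨hxB, lt_of_le_of_ne hx.2 (Ne.symm h)⟩⟩

lemma reflHyp_mem_frontier {B : Set (Euc N)} (hB : IsOpen B) {e : Euc N} (he : ‖e‖ = 1)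
    (hBe : MapsTo (reflHyp e) B B) {x : Euc N} (hx : x ∈ frontier B) :
    reflHyp e x ∈ frontier B := by
  rw [hB.frontier_eq] at hx ⊢
  exact ⟨reflHyp_mem_closure hBe hx.1, fun h => hx.2 (reflHyp_reflHyp he x ▸ hBe h)⟩

/-! ### The reflected difference of a solution -/

lemma eq_sum_smul_single (ξ : Euc N) : ξ = ∑ i, ξ i • EuclideanSpace.single i (1 : ℝ) := by
  ext j
  simp [Pi.single_apply]

lemma inner_gradVec (ℓ : Euc N →L[ℝ] ℝ) (ξ : Euc N) : ⟪gradVec ℓ, ξ⟫ = ℓ ξ := by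
  conv_rhs => rw [eq_sum_smul_single ξ]
  simp [gradVec, PiLp.inner_apply]

lemma quadForm_hessMat (D2 : Euc N →L[ℝ] Euc N →L[ℝ] ℝ) (ξ : Euc N) :
    quadForm (hessMat D2) ξ = D2 ξ ξ := by
  conv_rhs => rw [eq_sum_smul_single ξ]
  simp only [map_sum, map_smul, sum_apply, smul_apply, smul_eq_mul, quadForm, hessMat,
    Finset.mul_sum]
  rw [Finset.sum_comm]
  exact Finset.sum_congr rfl fun i _ => Finset.sum_congr rfl fun j _ => by ring

lemma HasSecondJetAt.of_hasFDerivAt {f : Euc N → ℝ} {Df : Euc N → Euc N →L[ℝ] ℝ}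
    {D2 : Euc N →L[ℝ] Euc N →L[ℝ] ℝ} {x : Euc N} (hf : ∀ᶠ y in 𝓝 x, HasFDerivAt f (Df y) y)
    (hDf : HasFDerivAt Df D2 x) : HasSecondJetAt f (gradVec (Df x)) (hessMat D2) x := by
  refine ⟨fun i j => ?_, fun ξ => ?_⟩
  · simpa only [hessMat] using second_derivative_symmetric_of_eventually hf hDf
      (EuclideanSpace.single i 1) (EuclideanSpace.single j 1)
  rw [inner_gradVec, quadForm_hessMat]
  have hline (h : ℝ) : HasDerivAt (fun h : ℝ => x + h • ξ) ξ h := by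
    simpa using ((hasDerivAt_id h).smul_const ξ).const_add x
  refine ⟨fun h => Df (x + h • ξ) ξ, ?_, by simp, ?_⟩
  · filter_upwards [(tendsto_add_smul_nhds_zero x ξ).eventually hf] with h hh
      using hh.comp_hasDerivAt h (hline h)
  · have hDf' : HasFDerivAt Df D2 (x + (0 : ℝ) • ξ) := by simpa using hDf
    have hcomp : HasDerivAt (fun h : ℝ => Df (x + h • ξ)) (D2 ξ) 0 :=
      hDf'.comp_hasDerivAt 0 (hline 0)
    simpa using hcomp.clm_apply (hasDerivAt_const (0 : ℝ) ξ)

lemma HasSecondJetAt.comp_reflHyp {φ : Euc N → ℝ} {g e x : Euc N} {H : Mat N}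
    (h : HasSecondJetAt φ g H (reflHyp e x)) :
    HasSecondJetAt (fun y => φ (reflHyp e y)) (reflHyp e g) (matConj (reflMat e) H) x := by
  refine ⟨matConj_reflMat_symm h.symm, fun ξ => ?_⟩
  simpa only [reflHyp_add_smul, inner_reflHyp_left, quadForm_matConj_reflMat] using
    h.line (reflHyp e ξ)

/-- Invariance of the operator `F` and of its domain under hyperplane reflections. -/
structure IsReflectionInvariant (B : Set (Euc N)) (𝓑 : Set (ℝ × Euc N × Mat N))
    (F : ℝ → Euc N → ℝ × Euc N × Mat N → ℝ) : Prop where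
  mapsTo : ∀ e : Euc N, ‖e‖ = 1 → MapsTo (reflHyp e) B B
  mem : ∀ e : Euc N, ‖e‖ = 1 → ∀ v p q, (v, p, q) ∈ 𝓑 →
    (v, reflHyp e p, matConj (reflMat e) q) ∈ 𝓑
  eq : ∀ e : Euc N, ‖e‖ = 1 → ∀ t, 0 < t → ∀ x ∈ B, ∀ v p q, (v, p, q) ∈ 𝓑 →
    F t (reflHyp e x) (v, reflHyp e p, matConj (reflMat e) q) = F t x (v, p, q)

/-- Classical solutions `u` of `u_t = F(t,x,u,∇u,D²u)` in `B × (0,∞)` with zero boundary values on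
`∂B × (0,∞)`; `ut`, `Du`, `D2u` are the derivatives of `u`. -/
structure IsClassicalSolution (B : Set (Euc N)) (𝓑 : Set (ℝ × Euc N × Mat N))
    (F : ℝ → Euc N → ℝ × Euc N × Mat N → ℝ) (u ut : Euc N → ℝ → ℝ)
    (Du : Euc N → ℝ → Euc N →L[ℝ] ℝ) (D2u : Euc N → ℝ → Euc N →L[ℝ] Euc N →L[ℝ] ℝ) : Prop where
  continuousOn : ContinuousOn (fun p : Euc N × ℝ => u p.1 p.2) (closure B ×ˢ Ici 0)
  hasDerivAt : ∀ x ∈ B, ∀ t, 0 < t → HasDerivAt (u x) (ut x t) t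
  hasFDerivAt : ∀ x ∈ B, ∀ t, 0 < t → HasFDerivAt (u · t) (Du x t) x
  hasFDerivAt_Du : ∀ x ∈ B, ∀ t, 0 < t → HasFDerivAt (Du · t) (D2u x t) x
  mem : ∀ x ∈ B, ∀ t, 0 < t → (u x t, gradVec (Du x t), hessMat (D2u x t)) ∈ 𝓑
  eq : ∀ x ∈ B, ∀ t, 0 < t → ut x t = F t x (u x t, gradVec (Du x t), hessMat (D2u x t))
  eq_zero : ∀ x ∈ frontier B, ∀ t, 0 < t → u x t = 0

namespace IsClassicalSolution

variable {B : Set (Euc N)} {𝓑 : Set (ℝ × Euc N × Mat N)} {F : ℝ → Euc N → ℝ × Euc N × Mat N → ℝ}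
  {u ut : Euc N → ℝ → ℝ} {Du : Euc N → ℝ → Euc N →L[ℝ] ℝ}
  {D2u : Euc N → ℝ → Euc N →L[ℝ] Euc N →L[ℝ] ℝ} {L α : ℝ} {e : Euc N}

lemma hasSecondJetAt (hu : IsClassicalSolution B 𝓑 F u ut Du D2u) (hB : IsOpen B) {x : Euc N}
    (hx : x ∈ B) {t : ℝ} (ht : 0 < t) :
    HasSecondJetAt (u · t) (gradVec (Du x t)) (hessMat (D2u x t)) x := by
  refine .of_hasFDerivAt (Df := (Du · t)) ?_ (hu.hasFDerivAt_Du x hx t ht)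
  filter_upwards [hB.mem_nhds hx] with y hy using hu.hasFDerivAt y hy t ht

lemma sub_reflHyp_eq_zero (hu : IsClassicalSolution B 𝓑 F u ut Du D2u) (hB : IsOpen B)
    (he : ‖e‖ = 1) (hBe : MapsTo (reflHyp e) B B) {x : Euc N} (hx : x ∈ halfClo B e)
    (hx' : x ∉ halfDom B e) {t : ℝ} (ht : 0 < t) : u x t - u (reflHyp e x) t = 0 := by
  rcases mem_frontier_or_inner_eq_zero hB hx hx' with hfr | hxe
  · rw [hu.eq_zero x hfr t ht, hu.eq_zero _ (reflHyp_mem_frontier hB he hBe hfr) t ht, sub_zero]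
  · rw [reflHyp_eq_self hxe, sub_self]

/-- The reflected solution solves the same equation, so that Pucci's inequality applies to the
difference. -/
lemma le_sub_reflHyp (hu : IsClassicalSolution B 𝓑 F u ut Du D2u)
    (hF : ∀ t, 0 ≤ t → ∀ x ∈ B, IsUniformlyElliptic 𝓑 L α (F t x)) (hL : 0 ≤ L) (h𝓑 : IsOpen 𝓑)
    (hconv : Convex ℝ 𝓑) (hinv : IsReflectionInvariant B 𝓑 F) (he : ‖e‖ = 1) {x : Euc N}
    (hx : x ∈ B) {t : ℝ} (ht : 0 < t) {c : ℝ}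
    (hc : IsPucciLowerBound L α
      (hessMat (D2u x t) - matConj (reflMat e) (hessMat (D2u (reflHyp e x) t))) c) :
    c - L * (|u x t - u (reflHyp e x) t|
        + ‖gradVec (Du x t) - reflHyp e (gradVec (Du (reflHyp e x) t))‖)
      ≤ ut x t - ut (reflHyp e x) t := by
  have hy : reflHyp e x ∈ B := hinv.mapsTo e he hx
  have hmem := hu.mem _ hy t ht
  have heq := hinv.eq e he t ht _ hy _ _ _ hmem
  rw [reflHyp_reflHyp he] at heq
  rw [hu.eq x hx t ht, hu.eq _ hy t ht, ← heq]
  exact (hF t ht.le x hx).sub_le_sub hL h𝓑 hconv (hu.mem x hx t ht) (hinv.mem e he _ _ _ hmem) hc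

theorem isSupersolution_sub_reflHyp (hu : IsClassicalSolution B 𝓑 F u ut Du D2u) (hB : IsOpen B)
    (hF : ∀ t, 0 ≤ t → ∀ x ∈ B, IsUniformlyElliptic 𝓑 L α (F t x)) (hL : 0 ≤ L) (hα : 0 ≤ α)
    (h𝓑 : IsOpen 𝓑) (hconv : Convex ℝ 𝓑) (hinv : IsReflectionInvariant B 𝓑 F) (he : ‖e‖ = 1) :
    IsSupersolution (halfClo B e) (halfDom B e) L α fun x t => u x t - u (reflHyp e x) t := by
  have hBe := hinv.mapsTo e he
  refine ⟨?_, fun x hx hx' t ht => hu.sub_reflHyp_eq_zero hB he hBe hx hx' ht, ?_⟩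
  · refine (hu.continuousOn.mono (prod_mono (fun x hx => hx.1) le_rfl)).sub ?_
    exact hu.continuousOn.comp (f := fun p : Euc N × ℝ => (reflHyp e p.1, p.2))
      (by fun_prop) fun p hp => ⟨reflHyp_mem_closure hBe hp.1.1, hp.2⟩
  · intro x hx t ht φ τ g H c hτ hφ hpast hspace hc
    have hjet := (hu.hasSecondJetAt hB hx.1 ht).sub
      (hu.hasSecondJetAt hB (hBe hx.1) ht).comp_reflHyp
    obtain ⟨hg, hH⟩ := (hjet.sub hφ).eq_zero_and_nonneg_of_isLocalMin hspace
    have hτ' := nonpos_of_hasDerivAt_of_eventually_le_nhdsLT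
      (((hu.hasDerivAt x hx.1 t ht).sub (hu.hasDerivAt _ (hBe hx.1) t ht)).sub hτ) hpast
    have hPucci := hu.le_sub_reflHyp hF hL h𝓑 hconv hinv he hx.1 ht
      (hc.of_nonneg_sub hα (hjet.sub hφ).symm hH)
    rw [sub_eq_zero.mp hg] at hPucci
    linarith

end IsClassicalSolution

/-! ### Radial domains and their defining functions -/

/-- The radial set `{x : |x|² ∈ J}`. -/
def radialSet (N : ℕ) (J : Set ℝ) : Set (Euc N) := {x | ‖x‖ ^ 2 ∈ J}

/-- A defining function `x ↦ h(|x|²)` of the radial set `{|x|² ∈ J}`, with the derivative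
`logDeriv` of `log h` and the negative `logCurv` of its second derivative. The inequalities say that
near the boundary `logCurv` is comparable to `logDeriv²` and at least of order `h⁻²`. -/
structure RadialProfile (J : Set ℝ) where
  h : ℝ → ℝ
  logDeriv : ℝ → ℝ
  logCurv : ℝ → ℝ
  R : ℝ
  M : ℝ
  c₀ : ℝ
  C₀ : ℝ
  c₁ : ℝ
  isOpen : IsOpen J
  lt_sq : ∀ τ ∈ J, τ < R ^ 2
  continuous_h : Continuous h
  h_pos : ∀ τ ∈ J, 0 < h τ
  h_le : ∀ τ ∈ J, 0 ≤ τ → h τ ≤ M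
  h_eq_zero : ∀ τ ∈ closure J, τ ∉ J → h τ = 0
  quasiconcaveOn : QuasiconcaveOn ℝ J h
  hasDerivAt_log_h : ∀ τ ∈ J, HasDerivAt (fun s => Real.log (h s)) (logDeriv τ) τ
  hasDerivAt_logDeriv : ∀ τ ∈ J, HasDerivAt logDeriv (-logCurv τ) τ
  R_pos : 0 < R
  M_pos : 0 < M
  c₀_pos : 0 < c₀
  c₀_le_one : c₀ ≤ 1
  C₀_nonneg : 0 ≤ C₀
  c₁_pos : 0 < c₁
  sq_logDeriv_le : ∀ τ ∈ J, logDeriv τ ^ 2 ≤ logCurv τ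
  le_logDeriv : ∀ τ ∈ J, 0 ≤ τ → c₀ * logCurv τ - C₀ ≤ 4 * τ * logDeriv τ ^ 2 + 4 * logDeriv τ
  le_logCurv : ∀ τ ∈ J, 0 ≤ τ → c₀ * logCurv τ - C₀ ≤ 4 * τ * logCurv τ
  div_sq_le_logCurv : ∀ τ ∈ J, c₁ / h τ ^ 2 ≤ logCurv τ

lemma mul_le_half_mul_sq_add_sq_div {k : ℝ} (hk : 0 < k) (a y : ℝ) :
    a * y ≤ k / 2 * y ^ 2 + a ^ 2 / (2 * k) := by
  have hsq : k / 2 * y ^ 2 + a ^ 2 / (2 * k) - a * y = (k * y - a) ^ 2 / (2 * k) := by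
    field_simp
    ring
  linarith [show 0 ≤ (k * y - a) ^ 2 / (2 * k) by positivity]

/-- `k` stands for `(R² - τ)⁻¹`. -/
lemma min_mul_sq_sub_le {R : ℝ} (hR : 0 < R) (k : ℝ) :
    min 1 (2 * R ^ 2) * k ^ 2 - 8 ^ 2 / (2 * (4 * R ^ 2)) ≤ 4 * R ^ 2 * k ^ 2 - 8 * k := by
  nlinarith [mul_le_half_mul_sq_add_sq_div (by positivity : 0 < 4 * R ^ 2) 8 k,
    mul_le_mul_of_nonneg_right (min_le_right 1 (2 * R ^ 2)) (sq_nonneg k)]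

/-- The profile `h(τ) = R² - τ` of a ball. -/
def ballProfile {R : ℝ} (hR : 0 < R) : RadialProfile (Iio (R ^ 2)) where
  h τ := R ^ 2 - τ
  logDeriv τ := -(R ^ 2 - τ)⁻¹
  logCurv τ := (R ^ 2 - τ)⁻¹ ^ 2
  R := R
  M := R ^ 2
  c₀ := min 1 (2 * R ^ 2)
  C₀ := 8 ^ 2 / (2 * (4 * R ^ 2))
  c₁ := 1
  isOpen := isOpen_Iio
  lt_sq _ hτ := hτ
  continuous_h := by fun_prop
  h_pos _ hτ := sub_pos.mpr hτ
  h_le _ _ hτ := sub_le_self _ hτ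
  h_eq_zero τ hτ hτ' := by
    rw [closure_Iio] at hτ
    linarith [mem_Iic.mp hτ, notMem_Iio.mp hτ']
  quasiconcaveOn :=
    (((concaveOn_const (R ^ 2) (convex_Iio _)).sub (convexOn_id (convex_Iio _)))).quasiconcaveOn
  hasDerivAt_log_h τ hτ :=
    (((hasDerivAt_id' τ).const_sub (R ^ 2)).log (sub_pos.mpr hτ).ne').congr_deriv
      (by rw [neg_div, one_div])
  hasDerivAt_logDeriv τ hτ :=
    (((hasDerivAt_id' τ).const_sub (R ^ 2)).inv (sub_pos.mpr hτ).ne').neg.congr_deriv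
      (by rw [neg_neg, one_div, inv_pow])
  R_pos := hR
  M_pos := by positivity
  c₀_pos := by positivity
  c₀_le_one := min_le_left _ _
  C₀_nonneg := by positivity
  c₁_pos := one_pos
  sq_logDeriv_le τ _ := by rw [neg_sq]
  le_logDeriv τ hτ _ := by
    have hτk : τ * (R ^ 2 - τ)⁻¹ = R ^ 2 * (R ^ 2 - τ)⁻¹ - 1 := by
      have := (sub_pos.mpr (mem_Iio.mp hτ)).ne'
      field_simp
      ring
    linear_combination min_mul_sq_sub_le hR (R ^ 2 - τ)⁻¹ - 4 * (R ^ 2 - τ)⁻¹ * hτk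
  le_logCurv τ hτ _ := by
    have hpos := inv_pos.mpr (sub_pos.mpr (mem_Iio.mp hτ))
    have hτk : τ * (R ^ 2 - τ)⁻¹ = R ^ 2 * (R ^ 2 - τ)⁻¹ - 1 := by
      have := (sub_pos.mpr (mem_Iio.mp hτ)).ne'
      field_simp
      ring
    linear_combination min_mul_sq_sub_le hR (R ^ 2 - τ)⁻¹ - 4 * (R ^ 2 - τ)⁻¹ * hτk + 4 * hpos
  div_sq_le_logCurv τ _ := by rw [one_div, inv_pow]

section annulus

variable {r R τ : ℝ}

lemma concaveOn_sub_mul_sub (a b : ℝ) (s : Set ℝ) (hs : Convex ℝ s) :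
    ConcaveOn ℝ s fun τ => (b - τ) * (τ - a) := by
  refine ⟨hs, fun x _ y _ c d hc hd hcd => ?_⟩
  obtain rfl := eq_sub_of_add_eq hcd
  simp only [smul_eq_mul]
  nlinarith [mul_nonneg (mul_nonneg hc hd) (sq_nonneg (x - y))]

/-- With `w = R² - r²` the partial fraction identity `(R² - τ)⁻¹ (τ - r²)⁻¹ = w⁻¹ ((R² - τ)⁻¹ +
(τ - r²)⁻¹)` makes the mixed term of the square lower order. -/
lemma annulus_le_logDeriv (hr : 0 < r) (hτ : τ ∈ Ioo (r ^ 2) (R ^ 2)) {m : ℝ}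
    (hm : m = 8 * r ^ 2 / (R ^ 2 - r ^ 2) + 4) :
    min 1 (2 * r ^ 2) * ((τ - r ^ 2)⁻¹ ^ 2 + (R ^ 2 - τ)⁻¹ ^ 2) - m ^ 2 / (4 * r ^ 2)
      ≤ 4 * τ * ((τ - r ^ 2)⁻¹ - (R ^ 2 - τ)⁻¹) ^ 2 + 4 * ((τ - r ^ 2)⁻¹ - (R ^ 2 - τ)⁻¹) := by
  have hR' : R ^ 2 - τ ≠ 0 := (sub_pos.mpr hτ.2).ne'
  have hr' : τ - r ^ 2 ≠ 0 := (sub_pos.mpr hτ.1).ne'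
  have hw : R ^ 2 - r ^ 2 ≠ 0 := (sub_pos.mpr (hτ.1.trans hτ.2)).ne'
  have hb0 : 0 < (τ - r ^ 2)⁻¹ := inv_pos.mpr (sub_pos.mpr hτ.1)
  have hmixed : 8 * r ^ 2 * ((R ^ 2 - τ)⁻¹ * (τ - r ^ 2)⁻¹)
      = (m - 4) * ((R ^ 2 - τ)⁻¹ + (τ - r ^ 2)⁻¹) := by
    rw [hm]
    field_simp
    ring
  generalize (R ^ 2 - τ)⁻¹ = a at *
  generalize (τ - r ^ 2)⁻¹ = b at *
  have hτr : 4 * r ^ 2 * (b - a) ^ 2 ≤ 4 * τ * (b - a) ^ 2 :=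
    mul_le_mul_of_nonneg_right (by linarith [hτ.1]) (sq_nonneg _)
  have hmin := mul_le_mul_of_nonneg_right (min_le_right 1 (2 * r ^ 2))
    (add_nonneg (sq_nonneg b) (sq_nonneg a))
  have hk : 0 < 4 * r ^ 2 := by positivity
  have hC : m ^ 2 / (4 * r ^ 2) = m ^ 2 / (2 * (4 * r ^ 2)) + m ^ 2 / (2 * (4 * r ^ 2)) := by
    field_simp
    ring
  rw [hC]
  linarith [mul_le_half_mul_sq_add_sq_div hk m a, mul_le_half_mul_sq_add_sq_div hk m b]

lemma annulus_div_sq_le_logCurv (hτ : τ ∈ Ioo (r ^ 2) (R ^ 2)) :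
    (R ^ 2 - r ^ 2) ^ 2 / 2 / ((R ^ 2 - τ) * (τ - r ^ 2)) ^ 2
      ≤ (τ - r ^ 2)⁻¹ ^ 2 + (R ^ 2 - τ)⁻¹ ^ 2 := by
  have hR' : R ^ 2 - τ ≠ 0 := (sub_pos.mpr hτ.2).ne'
  have hr' : τ - r ^ 2 ≠ 0 := (sub_pos.mpr hτ.1).ne'
  have hsum : (τ - r ^ 2)⁻¹ ^ 2 + (R ^ 2 - τ)⁻¹ ^ 2
      = ((R ^ 2 - τ) ^ 2 + (τ - r ^ 2) ^ 2) / ((R ^ 2 - τ) * (τ - r ^ 2)) ^ 2 := by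
    field_simp
  rw [hsum]
  gcongr
  nlinarith [sq_nonneg ((R ^ 2 - τ) - (τ - r ^ 2))]

/-- The profile `h(τ) = (R² - τ)(τ - r²)` of an annulus. -/
def annulusProfile (hr : 0 < r) (hrR : r < R) : RadialProfile (Ioo (r ^ 2) (R ^ 2)) where
  h τ := (R ^ 2 - τ) * (τ - r ^ 2)
  logDeriv τ := (τ - r ^ 2)⁻¹ - (R ^ 2 - τ)⁻¹
  logCurv τ := (τ - r ^ 2)⁻¹ ^ 2 + (R ^ 2 - τ)⁻¹ ^ 2
  R := R
  M := (R ^ 2 - r ^ 2) ^ 2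
  c₀ := min 1 (2 * r ^ 2)
  C₀ := (8 * r ^ 2 / (R ^ 2 - r ^ 2) + 4) ^ 2 / (4 * r ^ 2)
  c₁ := (R ^ 2 - r ^ 2) ^ 2 / 2
  isOpen := isOpen_Ioo
  lt_sq _ hτ := hτ.2
  continuous_h := by fun_prop
  h_pos _ hτ := mul_pos (sub_pos.mpr hτ.2) (sub_pos.mpr hτ.1)
  h_le τ hτ _ := by
    rw [sq (R ^ 2 - r ^ 2)]
    gcongr <;> linarith [hτ.1, hτ.2]
  h_eq_zero τ hτ hτ' := by
    rw [closure_Ioo (by gcongr : r ^ 2 < R ^ 2).ne] at hτ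
    rcases eq_or_lt_of_le hτ.1 with rfl | hlt
    · rw [sub_self, mul_zero]
    · rw [hτ.2.antisymm (not_lt.mp fun h => hτ' ⟨hlt, h⟩), sub_self, zero_mul]
  quasiconcaveOn := (concaveOn_sub_mul_sub _ _ _ (convex_Ioo _ _)).quasiconcaveOn
  hasDerivAt_log_h τ hτ := by
    have hR' : R ^ 2 - τ ≠ 0 := (sub_pos.mpr hτ.2).ne'
    have hr' : τ - r ^ 2 ≠ 0 := (sub_pos.mpr hτ.1).ne'
    refine HasDerivAt.congr_deriv ((((hasDerivAt_id' τ).const_sub (R ^ 2)).fun_mul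
      ((hasDerivAt_id' τ).sub_const (r ^ 2))).log (mul_ne_zero hR' hr')) ?_
    field_simp
    ring
  hasDerivAt_logDeriv τ hτ := by
    refine HasDerivAt.congr_deriv
      ((((hasDerivAt_id' τ).sub_const (r ^ 2)).fun_inv (sub_pos.mpr hτ.1).ne').sub
        (((hasDerivAt_id' τ).const_sub (R ^ 2)).fun_inv (sub_pos.mpr hτ.2).ne')) ?_
    rw [neg_neg, neg_div, one_div, one_div, inv_pow, inv_pow]
    ring
  R_pos := hr.trans hrR
  M_pos := pow_pos (sub_pos.mpr (by gcongr)) 2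
  c₀_pos := by positivity
  c₀_le_one := min_le_left _ _
  C₀_nonneg := by positivity
  c₁_pos := half_pos (pow_pos (sub_pos.mpr (by gcongr)) 2)
  sq_logDeriv_le τ hτ := by
    nlinarith [mul_pos (inv_pos.mpr (sub_pos.mpr hτ.1)) (inv_pos.mpr (sub_pos.mpr hτ.2))]
  le_logDeriv τ hτ _ := annulus_le_logDeriv hr hτ rfl
  le_logCurv τ hτ _ := by
    have hmin : min 1 (2 * r ^ 2) ≤ 4 * τ := by
      linarith [hτ.1, min_le_right 1 (2 * r ^ 2), sq_nonneg r]
    refine (sub_le_self _ (by positivity)).trans (mul_le_mul_of_nonneg_right hmin (by positivity))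
  div_sq_le_logCurv _ hτ := annulus_div_sq_le_logCurv hτ

end annulus

theorem IsRadialDomain.exists_radialProfile {B : Set (Euc N)} (hB : IsRadialDomain B) :
    ∃ J, Nonempty (RadialProfile J) ∧ B = radialSet N J := by
  rcases hB with ⟨R, hR, rfl⟩ | ⟨r, R, hr, hrR, rfl⟩
  · refine ⟨_, ⟨ballProfile hR⟩, Set.ext fun x => ?_⟩
    rw [mem_ball_zero_iff, radialSet, mem_ofPred_eq, mem_Iio,
      pow_lt_pow_iff_left₀ (norm_nonneg x) hR.le two_ne_zero]
  · refine ⟨_, ⟨annulusProfile hr hrR⟩, Set.ext fun x => ?_⟩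
    rw [radialSet, mem_ofPred_eq, mem_ofPred_eq, mem_Ioo,
      pow_lt_pow_iff_left₀ (norm_nonneg x) (hr.trans hrR).le two_ne_zero,
      pow_lt_pow_iff_left₀ hr.le (norm_nonneg x) two_ne_zero]

lemma continuous_norm_sq : Continuous fun x : Euc N => ‖x‖ ^ 2 := by fun_prop

lemma mapsTo_reflHyp_radialSet {e : Euc N} (he : ‖e‖ = 1) (J : Set ℝ) :
    MapsTo (reflHyp e) (radialSet N J) (radialSet N J) := fun x hx => by
  rwa [radialSet, mem_ofPred_eq, norm_reflHyp he]

namespace RadialProfile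

variable {J : Set ℝ} (K : RadialProfile J) {x : Euc N}

include K in
lemma isOpen_radialSet : IsOpen (radialSet N J) := K.isOpen.preimage continuous_norm_sq

lemma continuous_h_norm_sq : Continuous fun x : Euc N => K.h (‖x‖ ^ 2) :=
  K.continuous_h.comp continuous_norm_sq

lemma norm_le (hx : x ∈ closure (radialSet N J)) : ‖x‖ ≤ K.R := by
  refine closure_minimal (t := {x | ‖x‖ ≤ K.R}) (fun y hy => ?_)
    (isClosed_le continuous_norm continuous_const) hx
  exact (pow_le_pow_iff_left₀ (norm_nonneg y) K.R_pos.le two_ne_zero).mp (K.lt_sq _ hy).le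

include K in
lemma isBounded_radialSet : Bornology.IsBounded (radialSet N J) :=
  isBounded_iff_forall_norm_le.mpr ⟨K.R, fun _ hx => K.norm_le (subset_closure hx)⟩

lemma h_norm_sq_nonneg (hx : x ∈ closure (radialSet N J)) : 0 ≤ K.h (‖x‖ ^ 2) :=
  closure_minimal (t := {x : Euc N | 0 ≤ K.h (‖x‖ ^ 2)}) (fun _ hy => (K.h_pos _ hy).le)
    (isClosed_le continuous_const K.continuous_h_norm_sq) hx

lemma h_norm_sq_le (hx : x ∈ closure (radialSet N J)) : K.h (‖x‖ ^ 2) ≤ K.M :=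
  closure_minimal (t := {x : Euc N | K.h (‖x‖ ^ 2) ≤ K.M}) (fun _ hy => K.h_le _ hy (sq_nonneg _))
    (isClosed_le K.continuous_h_norm_sq continuous_const) hx

lemma h_norm_sq_eq_zero (hx : x ∈ closure (radialSet N J)) (hx' : x ∉ radialSet N J) :
    K.h (‖x‖ ^ 2) = 0 := by
  refine K.h_eq_zero _ ?_ hx'
  exact map_mem_closure (f := fun y : Euc N => ‖y‖ ^ 2) continuous_norm_sq hx fun _ hy => hy

lemma mem_radialSet_of_pos (hx : x ∈ closure (radialSet N J)) (h : 0 < K.h (‖x‖ ^ 2)) :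
    x ∈ radialSet N J :=
  by_contra fun hx' => h.ne' (K.h_norm_sq_eq_zero hx hx')

lemma exists_ball_subset {d : ℝ} (hd : 0 < d) :
    ∃ ρ > 0, ∀ x ∈ radialSet N J, d ≤ K.h (‖x‖ ^ 2) → ball x ρ ⊆ radialSet N J := by
  have hcompact : IsCompact {x ∈ closure (radialSet N J) | d ≤ K.h (‖x‖ ^ 2)} :=
    K.isBounded_radialSet.isCompact_closure.inter_right
      (isClosed_le continuous_const K.continuous_h_norm_sq)
  obtain ⟨ρ, hρ, hsub⟩ := hcompact.exists_thickening_subset_open K.isOpen_radialSet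
    fun x hx => K.mem_radialSet_of_pos hx.1 (hd.trans_le hx.2)
  refine ⟨ρ, hρ, fun x hx hdx y hy => hsub ?_⟩
  exact mem_thickening_iff.mpr ⟨x, ⟨subset_closure hx, hdx⟩, hy⟩

end RadialProfile

/-! ### Propagation of positivity along a path -/

section normSqAffinePath

variable {E : Type*} [NormedAddCommGroup E] [InnerProductSpace ℝ E]

lemma norm_inv_norm_smul {l : E} (h0 : l ≠ 0) : ‖‖l‖⁻¹ • l‖ = 1 := by
  rw [norm_smul, norm_inv, norm_norm, inv_mul_cancel₀ (norm_ne_zero_iff.mpr h0)]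

lemma hasDerivAt_inv_norm_smul {l : ℝ → E} {l' : E} {s : ℝ} (hl : HasDerivAt l l' s)
    (h0 : l s ≠ 0) :
    HasDerivAt (fun s => ‖l s‖⁻¹ • l s)
      (‖l s‖⁻¹ • (l' - (⟪l s, l'⟫ / ‖l s‖ ^ 2) • l s)) s := by
  have hnorm : HasDerivAt (fun s => ‖l s‖) (⟪l s, l'⟫ / ‖l s‖) s := by
    have hsqrt := hl.norm_sq.sqrt (pow_pos (norm_pos_iff.mpr h0) 2).ne'
    simp only [Real.sqrt_sq (norm_nonneg _)] at hsqrt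
    exact hsqrt.congr_deriv (mul_div_mul_left _ _ two_ne_zero)
  refine ((hnorm.fun_inv (norm_ne_zero_iff.mpr h0)).smul hl).congr_deriv ?_
  rw [smul_sub, smul_smul, sub_eq_add_neg, ← neg_smul]
  congr 2
  field_simp

lemma norm_inv_norm_smul_sub_le {l : E} (h0 : l ≠ 0) (l' : E) :
    ‖‖l‖⁻¹ • (l' - (⟪l, l'⟫ / ‖l‖ ^ 2) • l)‖ ≤ 2 * ‖l'‖ / ‖l‖ := by
  have hl : 0 < ‖l‖ := norm_pos_iff.mpr h0
  have hproj : ‖(⟪l, l'⟫ / ‖l‖ ^ 2) • l‖ ≤ ‖l'‖ := by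
    rw [norm_smul, norm_div, norm_pow, norm_norm, div_mul_eq_mul_div, div_le_iff₀ (by positivity)]
    nlinarith [norm_inner_le_norm (𝕜 := ℝ) l l']
  rw [norm_smul, norm_inv, norm_norm, inv_mul_eq_div]
  gcongr
  linarith [norm_sub_le l' ((⟪l, l'⟫ / ‖l‖ ^ 2) • l)]

/-- The segment from `x` to `y`, rescaled radially so that the squared norm is affine along it. -/
def normSqAffinePath (x y : E) (s : ℝ) : E :=
  √(AffineMap.lineMap (‖x‖ ^ 2) (‖y‖ ^ 2) s) •
    (‖AffineMap.lineMap x y s‖⁻¹ • (AffineMap.lineMap x y s : E))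

lemma normSqAffinePath_zero (x y : E) : normSqAffinePath x y 0 = x := by
  rcases eq_or_ne x 0 with rfl | hx
  · simp [normSqAffinePath]
  · simp [normSqAffinePath, smul_smul, hx]

lemma normSqAffinePath_one (x y : E) : normSqAffinePath x y 1 = y := by
  rcases eq_or_ne y 0 with rfl | hy
  · simp [normSqAffinePath]
  · simp [normSqAffinePath, smul_smul, hy]

lemma norm_sq_lineMap_le (x y : E) {s : ℝ} (hs : s ∈ Icc (0 : ℝ) 1) :
    ‖(AffineMap.lineMap x y s : E)‖ ^ 2 ≤ AffineMap.lineMap (‖x‖ ^ 2) (‖y‖ ^ 2) s := by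
  have hdiff : AffineMap.lineMap (‖x‖ ^ 2) (‖y‖ ^ 2) s - ‖(AffineMap.lineMap x y s : E)‖ ^ 2 =
      s * (1 - s) * ‖x - y‖ ^ 2 := by
    rw [AffineMap.lineMap_apply_module, AffineMap.lineMap_apply_module, norm_add_sq_real,
      norm_sub_sq_real, norm_smul, norm_smul, inner_smul_left, inner_smul_right, mul_pow, mul_pow,
      Real.norm_eq_abs, Real.norm_eq_abs, sq_abs, sq_abs, conj_trivial, smul_eq_mul, smul_eq_mul]
    ring
  linarith [mul_nonneg (mul_nonneg hs.1 (sub_nonneg.mpr hs.2)) (sq_nonneg ‖x - y‖)]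

variable {e x y : E} {d R s : ℝ}

lemma le_inner_lineMap (hx : d ≤ ⟪x, e⟫) (hy : d ≤ ⟪y, e⟫) (hs : s ∈ Icc (0 : ℝ) 1) :
    d ≤ ⟪AffineMap.lineMap x y s, e⟫ := by
  rw [AffineMap.lineMap_apply_module, inner_add_left, inner_smul_left, inner_smul_left,
    conj_trivial, conj_trivial]
  nlinarith [mul_le_mul_of_nonneg_left hx (sub_nonneg.mpr hs.2), mul_le_mul_of_nonneg_left hy hs.1]

lemma le_norm_of_le_inner (he : ‖e‖ = 1) (hx : d ≤ ⟪x, e⟫) : d ≤ ‖x‖ := by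
  simpa [he] using hx.trans (real_inner_le_norm x e)

lemma norm_lineMap_le_sqrt (hs : s ∈ Icc (0 : ℝ) 1) :
    ‖(AffineMap.lineMap x y s : E)‖ ≤ √(AffineMap.lineMap (‖x‖ ^ 2) (‖y‖ ^ 2) s) :=
  Real.le_sqrt_of_sq_le (norm_sq_lineMap_le x y hs)

lemma norm_sq_normSqAffinePath (h0 : (AffineMap.lineMap x y s : E) ≠ 0)
    (hs : s ∈ Icc (0 : ℝ) 1) :
    ‖normSqAffinePath x y s‖ ^ 2 = AffineMap.lineMap (‖x‖ ^ 2) (‖y‖ ^ 2) s := by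
  rw [normSqAffinePath, norm_smul, norm_inv_norm_smul h0, mul_one, Real.norm_eq_abs, sq_abs,
    Real.sq_sqrt ((sq_nonneg _).trans (norm_sq_lineMap_le x y hs))]

lemma le_inner_normSqAffinePath (hd : 0 < d) (he : ‖e‖ = 1) (hx : d ≤ ⟪x, e⟫) (hy : d ≤ ⟪y, e⟫)
    (hs : s ∈ Icc (0 : ℝ) 1) : d ≤ ⟪normSqAffinePath x y s, e⟫ := by
  have hinner := le_inner_lineMap hx hy hs
  have hl : 0 < ‖(AffineMap.lineMap x y s : E)‖ := hd.trans_le (le_norm_of_le_inner he hinner)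
  have hfactor : 1 ≤ √(AffineMap.lineMap (‖x‖ ^ 2) (‖y‖ ^ 2) s) *
      ‖(AffineMap.lineMap x y s : E)‖⁻¹ := by
    rw [← div_eq_mul_inv, one_le_div hl]
    exact norm_lineMap_le_sqrt hs
  rw [normSqAffinePath, smul_smul, inner_smul_left, conj_trivial]
  nlinarith

lemma exists_hasDerivAt_normSqAffinePath (hd : 0 < d) (he : ‖e‖ = 1) (hx : d ≤ ⟪x, e⟫)
    (hy : d ≤ ⟪y, e⟫) (hxR : ‖x‖ ≤ R) (hyR : ‖y‖ ≤ R) (hs : s ∈ Icc (0 : ℝ) 1) :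
    ∃ ξ', HasDerivAt (normSqAffinePath x y) ξ' s ∧ ‖ξ'‖ ≤ 9 / 2 * R ^ 2 / d := by
  have hdl : d ≤ ‖(AffineMap.lineMap x y s : E)‖ :=
    le_norm_of_le_inner he (le_inner_lineMap hx hy hs)
  have hl0 : (AffineMap.lineMap x y s : E) ≠ 0 := norm_pos_iff.mp (hd.trans_le hdl)
  have hdr := hdl.trans (norm_lineMap_le_sqrt hs)
  have hr : 0 < √(AffineMap.lineMap (‖x‖ ^ 2) (‖y‖ ^ 2) s) := hd.trans_le hdr
  have hR : 0 ≤ R := (norm_nonneg x).trans hxR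
  have hx2 : ‖x‖ ^ 2 ≤ R ^ 2 := by gcongr
  have hy2 : ‖y‖ ^ 2 ≤ R ^ 2 := by gcongr
  have hrR : √(AffineMap.lineMap (‖x‖ ^ 2) (‖y‖ ^ 2) s) ≤ R := by
    refine Real.sqrt_le_iff.mpr ⟨hR, ?_⟩
    simpa using (convex_Iic (R ^ 2)).lineMap_mem hx2 hy2 hs
  have hderiv := ((AffineMap.hasDerivAt_lineMap (a := ‖x‖ ^ 2) (b := ‖y‖ ^ 2)).sqrt
    (Real.sqrt_pos.mp hr).ne').smul
    (hasDerivAt_inv_norm_smul (AffineMap.hasDerivAt_lineMap (a := x) (b := y)) hl0)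
  refine ⟨_, hderiv, (norm_add_le _ _).trans ?_⟩
  have hradial : |‖y‖ ^ 2 - ‖x‖ ^ 2| ≤ R ^ 2 :=
    abs_sub_le_of_nonneg_of_le (sq_nonneg _) hy2 (sq_nonneg _) hx2
  have hyx : ‖y - x‖ ≤ 2 * R := (norm_sub_le _ _).trans (by linarith)
  calc _ ≤ R * (2 * (2 * R) / d) + R ^ 2 / (2 * d) := by
        rw [norm_smul, norm_smul (_ / _), norm_inv_norm_smul hl0, mul_one,
          Real.norm_of_nonneg hr.le, norm_div, Real.norm_eq_abs,
          Real.norm_of_nonneg (by positivity)]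
        gcongr
        exact (norm_inv_norm_smul_sub_le hl0 _).trans (by gcongr)
    _ = 9 / 2 * R ^ 2 / d := by ring

end normSqAffinePath

section bump

/-- The truncated power `(ρ² - |x - ξ(t)|²)₊^{k+2} e^{-mt}`, a bump of radius `ρ` which follows the
path `ξ` and decays at the rate `m`. -/
def bump (ρ m : ℝ) (k : ℕ) (ξ : ℝ → Euc N) (x : Euc N) (t : ℝ) : ℝ :=
  Real.exp (-m * t) * max (ρ ^ 2 - ‖x - ξ t‖ ^ 2) 0 ^ (k + 2)

variable {L α ρ Ξ m : ℝ} {k : ℕ} {ξ : ℝ → Euc N} {x : Euc N} {t : ℝ}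

lemma bump_nonneg (ρ m : ℝ) (k : ℕ) (ξ : ℝ → Euc N) (x : Euc N) (t : ℝ) :
    0 ≤ bump ρ m k ξ x t := by
  unfold bump
  positivity

lemma bump_eq_zero (h : ρ ^ 2 ≤ ‖x - ξ t‖ ^ 2) : bump ρ m k ξ x t = 0 := by
  rw [bump, max_eq_right (sub_nonpos.mpr h), zero_pow (by lia), mul_zero]

lemma bump_center : bump ρ m k ξ (ξ t) t = Real.exp (-m * t) * (ρ ^ 2) ^ (k + 2) := by
  simp [bump, sq_nonneg]

lemma bump_zero_le : bump ρ m k ξ x 0 ≤ (ρ ^ 2) ^ (k + 2) := by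
  simp only [bump, mul_zero, Real.exp_zero, one_mul]
  gcongr
  exact max_le (sub_le_self _ (sq_nonneg _)) (sq_nonneg ρ)

lemma continuousOn_bump {S : Set (Euc N)} {I : Set ℝ} (hξ : ContinuousOn ξ I) :
    ContinuousOn (fun p : Euc N × ℝ => bump ρ m k ξ p.1 p.2) (S ×ˢ I) := by
  have _ : ContinuousOn (fun p : Euc N × ℝ => ξ p.2) (S ×ˢ I) :=
    hξ.comp continuousOn_snd fun p hp => hp.2
  unfold bump
  fun_prop

lemma bump_of_lt (h : ‖x - ξ t‖ ^ 2 < ρ ^ 2) :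
    bump ρ m k ξ x t = Real.exp (-m * t) * (ρ ^ 2 - ‖x - ξ t‖ ^ 2) ^ (k + 2) := by
  rw [bump, max_eq_left (sub_nonneg.mpr h.le)]

lemma hasDerivAt_bump {ξ' : Euc N} (hξ : HasDerivAt ξ ξ' t) (h : ‖x - ξ t‖ ^ 2 < ρ ^ 2) :
    HasDerivAt (bump ρ m k ξ x) (Real.exp (-m * t) * (ρ ^ 2 - ‖x - ξ t‖ ^ 2) ^ (k + 1) *
      (2 * (k + 2) * ⟪x - ξ t, ξ'⟫ - m * (ρ ^ 2 - ‖x - ξ t‖ ^ 2))) t := by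
  have hev : ∀ᶠ s in 𝓝 t, ‖x - ξ s‖ ^ 2 < ρ ^ 2 :=
    ((continuousAt_const.sub hξ.continuousAt).norm.pow 2).eventually (gt_mem_nhds h)
  have hsq := (((hξ.const_sub x).norm_sq).const_sub (ρ ^ 2)).fun_pow (k + 2)
  refine (((hasDerivAt_mul_exp 1 (-m) t).fun_mul hsq).congr_of_eventuallyEq ?_).congr_deriv ?_
  · filter_upwards [hev] with s hs using by rw [bump_of_lt hs, one_mul]
  · rw [inner_neg_right]
    push_cast
    ring

lemma hasSecondJetAt_bump (h : ‖x - ξ t‖ ^ 2 < ρ ^ 2) :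
    HasSecondJetAt (bump ρ m k ξ · t)
      (-(2 * (k + 2) * Real.exp (-m * t) * (ρ ^ 2 - ‖x - ξ t‖ ^ 2) ^ (k + 1)) • (x - ξ t))
      ((4 * (k + 2) * (k + 1) * Real.exp (-m * t) * (ρ ^ 2 - ‖x - ξ t‖ ^ 2) ^ k) •
          outerSq (x - ξ t) +
        -(2 * (k + 2) * Real.exp (-m * t) * (ρ ^ 2 - ‖x - ξ t‖ ^ 2) ^ (k + 1)) • idMat) x := by
  set E := Real.exp (-m * t)
  have hev : ∀ᶠ y in 𝓝 x, ‖y - ξ t‖ ^ 2 < ρ ^ 2 :=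
    (by fun_prop : ContinuousAt (fun y => ‖y - ξ t‖ ^ 2) x).eventually (gt_mem_nhds h)
  have hjet := (HasSecondJetAt.norm_sub_sq (ξ t) x).comp
    (f := fun p => E * (ρ ^ 2 - p) ^ (k + 2))
    (f' := fun p => -(E * (k + 2) * (ρ ^ 2 - p) ^ (k + 1)))
    (d := E * (k + 2) * (k + 1) * (ρ ^ 2 - ‖x - ξ t‖ ^ 2) ^ k)
    (Eventually.of_forall fun p => ?_) ?_
  · convert hjet.congr (hev.mono fun y hy => bump_of_lt hy) using 1
    · module
    · have houter : outerSq ((2 : ℝ) • (x - ξ t)) = (4 : ℝ) • outerSq (x - ξ t) := by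
        ext i j
        simp only [outerSq, PiLp.smul_apply, Pi.smul_apply, smul_eq_mul]
        ring
      rw [houter]
      module
  · refine ((((hasDerivAt_id' p).const_sub (ρ ^ 2)).fun_pow (k + 2)).const_mul E).congr_deriv ?_
    push_cast
    ring
  · refine ((((hasDerivAt_id' _).const_sub (ρ ^ 2)).fun_pow (k + 1)).const_mul
      (E * (k + 2))).fun_neg.congr_deriv ?_
    push_cast
    ring

/-- With `Y = |x - ξ|` and `P = ρ² - Y²`, this is the differential inequality for the bump divided
by `P^{q-2} e^{-mt}`. -/
lemma bump_inequality {P Y q : ℝ} (hL : 0 ≤ L) (hρ : 0 < ρ) (hq : 0 ≤ q)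
    (hqα : 1 + 2 * L ≤ 4 * (q - 1) * α) (hP : P = ρ ^ 2 - Y ^ 2) :
    2 * q * P * L + L * P ^ 2 + 2 * q * (L + Ξ) * P * Y ≤
      (L + q * (L + Ξ) ^ 2 + 2 * q * L / ρ ^ 2) * P ^ 2 + 4 * q * (q - 1) * α * Y ^ 2 := by
  have hdrift : 2 * q * (L + Ξ) * P * Y ≤ q * (L + Ξ) ^ 2 * P ^ 2 + q * Y ^ 2 := by
    nlinarith [mul_nonneg hq (sq_nonneg ((L + Ξ) * P - Y))]
  have hellipticity : q * (1 + 2 * L) * Y ^ 2 ≤ 4 * q * (q - 1) * α * Y ^ 2 := by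
    nlinarith [mul_le_mul_of_nonneg_right (mul_le_mul_of_nonneg_left hqα hq) (sq_nonneg Y)]
  have htrace : 0 ≤ 2 * q * L * (P ^ 2 / ρ ^ 2 + ρ ^ 2 - 2 * P) := by
    have hsq : P ^ 2 / ρ ^ 2 + ρ ^ 2 - 2 * P = (P / ρ - ρ) ^ 2 := by
      field_simp
      ring
    rw [hsq]
    positivity
  have hdiv : 2 * q * L / ρ ^ 2 * P ^ 2 = 2 * q * L * (P ^ 2 / ρ ^ 2) := by ring
  have hY : Y ^ 2 = ρ ^ 2 - P := by linarith
  rw [hY] at hdrift hellipticity ⊢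
  nlinarith

lemma isSubsolutionAt_bump (hL : 0 ≤ L) (hρ : 0 < ρ) (hk : 1 + 2 * L ≤ 4 * (k + 1) * α)
    {ξ' : Euc N} (hξ : HasDerivAt ξ ξ' t) (hΞ : ‖ξ'‖ ≤ Ξ) (x : Euc N) :
    IsSubsolutionAt L α
      (bump ρ (L + (k + 2) * (L + Ξ) ^ 2 + 2 * (k + 2) * L / ρ ^ 2) k ξ) x t := by
  set m := L + (k + 2) * (L + Ξ) ^ 2 + 2 * (k + 2) * L / ρ ^ 2 with hm
  rcases le_or_gt (ρ ^ 2) (‖x - ξ t‖ ^ 2) with hout | hin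
  · exact isSubsolutionAt_of_nonneg_of_eq_zero (bump_nonneg ρ m k ξ) (bump_eq_zero hout)
  refine .of_hasDerivAt (hasDerivAt_bump hξ hin) (hasSecondJetAt_bump hin)
    (.smul_outerSq_add_smul_idMat L α ?_ _ _) ?_
  · have := (sub_pos.mpr hin).le
    positivity
  set P := ρ ^ 2 - ‖x - ξ t‖ ^ 2 with hP
  have _ : 0 < P := sub_pos.mpr hin
  set E := Real.exp (-m * t)
  have _ : 0 < E := Real.exp_pos _
  have hinner : ⟪x - ξ t, ξ'⟫ ≤ ‖x - ξ t‖ * Ξ :=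
    (real_inner_le_norm _ _).trans (mul_le_mul_of_nonneg_left hΞ (norm_nonneg _))
  have hineq := bump_inequality (α := α) (Ξ := Ξ) (q := (k : ℝ) + 2) hL hρ (by positivity)
    (by linarith) hP
  rw [← hm] at hineq
  rw [bump_of_lt hin, norm_smul, norm_neg, abs_neg, Real.norm_of_nonneg (by positivity),
    abs_of_nonneg (by positivity), abs_of_nonneg (by positivity), ← sub_nonneg]
  calc 0 ≤ E * P ^ k * (m * P ^ 2 + 4 * (k + 2) * (k + 1) * α * ‖x - ξ t‖ ^ 2 -
        2 * (k + 2) * P * L - L * P ^ 2 - 2 * (k + 2) * P * (⟪x - ξ t, ξ'⟫ + L * ‖x - ξ t‖)) := by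
        refine mul_nonneg (by positivity) ?_
        nlinarith [mul_le_mul_of_nonneg_left hinner (by positivity : 0 ≤ 2 * ((k : ℝ) + 2) * P)]
    _ = _ := by ring

theorem IsSupersolution.le_of_path {C Ω : Set (Euc N)} {v : Euc N → ℝ → ℝ} {δ η : ℝ}
    (hv : IsSupersolution C Ω L α v) (hL : 0 ≤ L) (hC : IsCompact C) (hΩC : Ω ⊆ C)
    (hΩ : IsOpen Ω) (hρ : 0 < ρ) (hk : 1 + 2 * L ≤ 4 * (k + 1) * α)
    (hξ : ∀ s ∈ Icc (0 : ℝ) 1, ∃ ξ', HasDerivAt ξ ξ' s ∧ ‖ξ'‖ ≤ Ξ)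
    (hball : ∀ s ∈ Icc (0 : ℝ) 1, ball (ξ s) ρ ⊆ Ω) (hδ : 0 ≤ δ) (hη : 0 ≤ η)
    (hvδ : ∀ x ∈ C, x ∈ ball (ξ 0) ρ → δ ≤ v x 0) (hvη : ∀ x ∈ C, -η ≤ v x 0) :
    Real.exp (-(L + (k + 2) * (L + Ξ) ^ 2 + 2 * (k + 2) * L / ρ ^ 2)) * δ - η * Real.exp L ≤
      v (ξ 1) 1 := by
  set m := L + (k + 2) * (L + Ξ) ^ 2 + 2 * (k + 2) * L / ρ ^ 2
  set a := δ / (ρ ^ 2) ^ (k + 2)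
  have ha : 0 ≤ a := by positivity
  have haδ : a * (ρ ^ 2) ^ (k + 2) = δ := div_mul_cancel₀ δ (by positivity)
  have hout {x : Euc N} {s : ℝ} (hx : x ∉ ball (ξ s) ρ) : bump ρ m k ξ x s = 0 := by
    rw [mem_ball, dist_eq_norm, not_lt] at hx
    exact bump_eq_zero (pow_le_pow_left₀ hρ.le hx 2)
  have hle := hv.le_of_isSubsolutionAt (T := 1)
    (w := fun x s => a * bump ρ m k ξ x s - η * Real.exp (L * s)) hL hC hΩC hΩ ?_ ?_ ?_ ?_
    (ξ 1) (hΩC (hball 1 ⟨zero_le_one, le_rfl⟩ (mem_ball_self hρ))) 1 ⟨zero_le_one, le_rfl⟩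
  · calc _ = a * bump ρ m k ξ (ξ 1) 1 - η * Real.exp (L * 1) := by
          rw [bump_center, ← haδ, mul_one, mul_one]
          ring
      _ ≤ _ := hle
  · have hξc : ContinuousOn ξ (Icc 0 1) := fun s hs =>
      (hξ s hs).choose_spec.1.continuousAt.continuousWithinAt
    exact (continuousOn_const.mul (continuousOn_bump hξc)).sub
      (Continuous.continuousOn (by fun_prop))
  · intro x hx
    simp only [mul_zero, Real.exp_zero, mul_one]
    by_cases hx' : x ∈ ball (ξ 0) ρ
    · have hbump := mul_le_mul_of_nonneg_left
        (bump_zero_le (ρ := ρ) (m := m) (k := k) (ξ := ξ) (x := x)) ha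
      linarith [hvδ x hx hx']
    · rw [hout hx', mul_zero, zero_sub]
      exact hvη x hx
  · intro x _ hxΩ s hs
    rw [hout fun hx' => hxΩ (hball s hs hx'), mul_zero, zero_sub]
    exact neg_nonpos.mpr (by positivity)
  · intro x _ s hs
    obtain ⟨ξ', hξ', hΞ⟩ := hξ s ⟨hs.1.le, hs.2⟩
    exact ((isSubsolutionAt_bump hL hρ hk hξ' hΞ x).const_mul ha).sub_mul_exp hL hη

end bump

namespace RadialProfile

variable {J : Set ℝ} (K : RadialProfile J) {d : ℝ}

/-- The points of the half domain in the direction `e` which are well inside, as measured by the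
height `x·e` and the profile, with margin `d`. -/
def halfCore (e : Euc N) (d : ℝ) : Set (Euc N) :=
  {x ∈ radialSet N J | d ≤ ⟪x, e⟫ ∧ d ≤ K.h (‖x‖ ^ 2)}

lemma exists_ball_subset_halfDom (hd : 0 < d) :
    ∃ ρ > 0, ∀ e : Euc N, ‖e‖ = 1 → ∀ x ∈ K.halfCore e d,
      ball x ρ ⊆ halfDom (radialSet N J) e := by
  obtain ⟨ρ, hρ, hball⟩ := K.exists_ball_subset (N := N) hd
  refine ⟨min ρ d, lt_min hρ hd, fun e he x hx y hy => ?_⟩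
  rw [mem_ball, lt_min_iff] at hy
  refine ⟨hball x hx.1 hx.2.2 hy.1, ?_⟩
  have hinner := real_inner_le_norm (x - y) e
  rw [he, mul_one, inner_sub_left, ← dist_eq_norm, dist_comm] at hinner
  linarith [hx.2.1]

lemma exists_path_in_halfCore (hd : 0 < d) :
    ∃ Ξ : ℝ, ∀ e : Euc N, ‖e‖ = 1 → ∀ x ∈ K.halfCore e d, ∀ y ∈ K.halfCore e d,
      ∃ ξ : ℝ → Euc N, ξ 0 = x ∧ ξ 1 = y ∧ ∀ s ∈ Icc (0 : ℝ) 1, ξ s ∈ K.halfCore e d ∧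
        ∃ ξ', HasDerivAt ξ ξ' s ∧ ‖ξ'‖ ≤ Ξ := by
  refine ⟨9 / 2 * K.R ^ 2 / d, fun e he x hx y hy => ⟨normSqAffinePath x y,
    normSqAffinePath_zero x y, normSqAffinePath_one x y, fun s hs => ⟨?_, ?_⟩⟩⟩
  · have hl := hd.trans_le (le_norm_of_le_inner he (le_inner_lineMap hx.2.1 hy.2.1 hs))
    have hquasi := (K.quasiconcaveOn d).lineMap_mem ⟨hx.1, hx.2.2⟩ ⟨hy.1, hy.2.2⟩ hs
    rw [← norm_sq_normSqAffinePath (norm_pos_iff.mp hl) hs] at hquasi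
    exact ⟨hquasi.1, le_inner_normSqAffinePath hd he hx.2.1 hy.2.1 hs, hquasi.2⟩
  · exact exists_hasDerivAt_normSqAffinePath hd he hx.2.1 hy.2.1 (K.norm_le (subset_closure hx.1))
      (K.norm_le (subset_closure hy.1)) hs

theorem exists_mul_sub_le_of_halfCore {L α ρ₀ : ℝ} (hL : 0 ≤ L) (hα : 0 < α) (hd : 0 < d)
    (hρ₀ : 0 < ρ₀) :
    ∃ κ > 0, ∀ e : Euc N, ‖e‖ = 1 → ∀ v,
      IsSupersolution (halfClo (radialSet N J) e) (halfDom (radialSet N J) e) L α v →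
      ∀ x₀ ∈ K.halfCore e d, ∀ δ η : ℝ, 0 ≤ δ → 0 ≤ η →
      (∀ x ∈ halfClo (radialSet N J) e, x ∈ ball x₀ ρ₀ → δ ≤ v x 0) →
      (∀ x ∈ halfClo (radialSet N J) e, -η ≤ v x 0) →
      ∀ y ∈ K.halfCore e d, κ * δ - η * Real.exp L ≤ v y 1 := by
  obtain ⟨Ξ, hpath⟩ := K.exists_path_in_halfCore (N := N) hd
  obtain ⟨ρ₁, hρ₁, hball⟩ := K.exists_ball_subset_halfDom (N := N) hd
  obtain ⟨k, hk⟩ := exists_nat_ge ((1 + 2 * L) / (4 * α))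
  rw [div_le_iff₀ (by positivity)] at hk
  refine ⟨Real.exp (-(L + (k + 2) * (L + Ξ) ^ 2 + 2 * (k + 2) * L / min ρ₀ ρ₁ ^ 2)),
    Real.exp_pos _, fun e he v hv x₀ hx₀ δ η hδ hη hvδ hvη y hy => ?_⟩
  obtain ⟨ξ, rfl, rfl, hξ⟩ := hpath e he x₀ hx₀ y hy
  refine hv.le_of_path hL (isCompact_halfClo K.isBounded_radialSet e) (halfDom_subset_halfClo _ e)
    (isOpen_halfDom K.isOpen_radialSet e) (lt_min hρ₀ hρ₁) (k := k) (by linarith)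
    (fun s hs => (hξ s hs).2) ?_ hδ hη ?_ hvη
  · exact fun s hs => (ball_subset_ball (min_le_right _ _)).trans (hball e he _ (hξ s hs).1)
  · exact fun x hx hx' => hvδ x hx (ball_subset_ball (min_le_left _ _) hx')

end RadialProfile

/-! ### A decaying barrier -/

lemma HasSecondJetAt.rpow_of_log {φ : Euc N → ℝ} {g x : Euc N} {H : Mat N}
    (hφ : HasSecondJetAt (fun y => Real.log (φ y)) g H x) (hc : ContinuousAt φ x) (h0 : 0 < φ x)
    (κ : ℝ) :
    HasSecondJetAt (fun y => φ y ^ κ) ((φ x ^ κ * κ) • g)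
      ((φ x ^ κ * κ ^ 2) • outerSq g + (φ x ^ κ * κ) • H) x := by
  have hexp (y : ℝ) : HasDerivAt (fun y => Real.exp (y * κ)) (Real.exp (y * κ) * κ) y := by
    simpa using ((hasDerivAt_id' y).mul_const κ).exp
  have hcomp := hφ.comp (Eventually.of_forall hexp) ((hexp _).mul_const κ)
  rw [← Real.rpow_def_of_pos h0, mul_assoc, ← sq] at hcomp
  refine hcomp.congr ?_
  filter_upwards [hc.eventually (lt_mem_nhds h0)] with y hy using Real.rpow_def_of_pos hy κ

lemma isSubsolutionAt_exp_mul {L α m c : ℝ} {f : Euc N → ℝ} {g x : Euc N} {H : Mat N} (t : ℝ)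
    (hf : HasSecondJetAt f g H x) (hc : IsPucciLowerBound L α H c)
    (hle : -m * f x ≤ c - L * (|f x| + ‖g‖)) :
    IsSubsolutionAt L α (fun y s => Real.exp (-m * s) * f y) x t := by
  have hτ : HasDerivAt (fun s => Real.exp (-m * s) * f x) (Real.exp (-m * t) * (-m * f x)) t := by
    refine (((hasDerivAt_id' t).const_mul (-m)).exp.mul_const (f x)).congr_deriv ?_
    ring
  refine .of_hasDerivAt hτ (hf.const_mul _) (c := Real.exp (-m * t) * c) (fun A hA => ?_) ?_
  · simpa only [map_smul, smul_eq_mul] using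
      mul_le_mul_of_nonneg_left (hc A hA) (Real.exp_pos _).le
  · rw [norm_smul, Real.norm_of_nonneg (Real.exp_pos _).le, abs_mul,
      abs_of_pos (Real.exp_pos _)]
    linarith [mul_le_mul_of_nonneg_left hle (Real.exp_pos (-m * t)).le]

/-- Near `x`, the positive function `φ` behaves like a distance to the boundary on a logarithmic
scale: `S` measures the closeness to the boundary, and the gradient `g` and the Hessian `H` of
`log φ` satisfy `|g|² ≈ S` and `A(H) ≈ -S` for elliptic `A`, up to constants `c`, `C`. -/
structure IsLogBarrierAt (L α c C : ℝ) (φ : Euc N → ℝ) (g : Euc N) (H : Mat N) (S : ℝ)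
    (x : Euc N) : Prop where
  pos : 0 < φ x
  le : φ x ≤ C
  continuousAt : ContinuousAt φ x
  jet : HasSecondJetAt (fun y => Real.log (φ y)) g H x
  nonneg : 0 ≤ S
  le_mul : c ≤ S * φ x
  le_norm_sq : c * S - C ≤ ‖g‖ ^ 2
  norm_sq_le : ‖g‖ ^ 2 ≤ C * (S + 1)
  isPucciLowerBound : IsPucciLowerBound L α H (-(C * (S + 1)))
  apply_le : ∀ A, IsEllipticFunctional L α A → A H ≤ -c * S + C

namespace IsLogBarrierAt

variable {L α c C S a q ε m b D : ℝ} {φ : Euc N → ℝ} {g x : Euc N} {H : Mat N}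

lemma hasSecondJetAt_power_barrier (h : IsLogBarrierAt L α c C φ g H S x) (a q ε : ℝ) :
    HasSecondJetAt (fun y => a * φ y ^ q - (1 + φ y ^ ε)) ((a * φ x ^ q * q - φ x ^ ε * ε) • g)
      ((a * φ x ^ q * q ^ 2 - φ x ^ ε * ε ^ 2) • outerSq g
        + (a * φ x ^ q * q - φ x ^ ε * ε) • H) x := by
  convert ((h.jet.rpow_of_log h.continuousAt h.pos q).const_mul a).sub
    ((HasSecondJetAt.const 1 x).add (h.jet.rpow_of_log h.continuousAt h.pos ε)) using 1 <;> module

lemma isPucciLowerBound_power_barrier (h : IsLogBarrierAt L α c C φ g H S x) (ha : 0 ≤ a)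
    (hq : 0 ≤ q) (hε : 0 ≤ ε) :
    IsPucciLowerBound L α ((a * φ x ^ q * q ^ 2 - φ x ^ ε * ε ^ 2) • outerSq g
        + (a * φ x ^ q * q - φ x ^ ε * ε) • H)
      (a * φ x ^ q * (q ^ 2 * (α * ‖g‖ ^ 2) - q * (C * (S + 1)))
        - φ x ^ ε * (ε ^ 2 * (L * ‖g‖ ^ 2) + ε * (-c * S + C))) := by
  intro A hA
  have hφ := h.pos
  have hpos : q ^ 2 * (α * ‖g‖ ^ 2) - q * (C * (S + 1)) ≤ q ^ 2 * A (outerSq g) + q * A H := by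
    linarith [mul_le_mul_of_nonneg_left (hA.le_apply_outerSq g) (sq_nonneg q),
      mul_le_mul_of_nonneg_left (h.isPucciLowerBound A hA) hq]
  have hneg : ε ^ 2 * A (outerSq g) + ε * A H ≤ ε ^ 2 * (L * ‖g‖ ^ 2) + ε * (-c * S + C) := by
    linarith [mul_le_mul_of_nonneg_left ((le_abs_self _).trans (hA.abs_apply_outerSq_le g))
      (sq_nonneg ε), mul_le_mul_of_nonneg_left (h.apply_le A hA) hε]
  simp only [map_add, map_smul, smul_eq_mul]
  linarith [mul_le_mul_of_nonneg_left hpos (by positivity : 0 ≤ a * φ x ^ q),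
    mul_le_mul_of_nonneg_left hneg (by positivity : 0 ≤ φ x ^ ε)]

lemma isSubsolutionAt_of_le (h : IsLogBarrierAt L α c C φ g H S x) (hL : 0 ≤ L) (ha : 0 ≤ a)
    (hq : 0 ≤ q) (hε : 0 ≤ ε)
    (hlow : L + L * (q * ‖g‖) + q * (C * (S + 1)) ≤ q ^ 2 * (α * ‖g‖ ^ 2) + (m - 1))
    (hup : ε ^ 2 * (L * ‖g‖ ^ 2) + ε * (-c * S + C) + L + L * (ε * ‖g‖) + m ≤ -b * S + D)
    (hmid : L + m + φ x ^ ε * D ≤ a * φ x ^ q + b * (φ x ^ ε * S)) (t : ℝ) :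
    IsSubsolutionAt L α (fun y s => Real.exp (-m * s) * (a * φ y ^ q - (1 + φ y ^ ε))) x t := by
  have hφ := h.pos
  refine isSubsolutionAt_exp_mul t (h.hasSecondJetAt_power_barrier a q ε)
    (h.isPucciLowerBound_power_barrier ha hq hε) ?_
  have hψ : 0 ≤ a * φ x ^ q := by positivity
  have hΨ : 0 ≤ φ x ^ ε := by positivity
  have hval : |a * φ x ^ q - (1 + φ x ^ ε)| ≤ a * φ x ^ q + (1 + φ x ^ ε) :=
    (abs_sub _ _).trans_eq (by rw [abs_of_nonneg hψ, abs_of_nonneg (by positivity)])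
  have hgrad : |a * φ x ^ q * q - φ x ^ ε * ε| ≤ a * φ x ^ q * q + φ x ^ ε * ε :=
    (abs_sub _ _).trans_eq (by rw [abs_of_nonneg (by positivity), abs_of_nonneg (by positivity)])
  have herr := mul_le_mul_of_nonneg_left
    (add_le_add hval (mul_le_mul_of_nonneg_right hgrad (norm_nonneg g))) hL
  rw [norm_smul, Real.norm_eq_abs]
  linarith [mul_le_mul_of_nonneg_left hlow hψ, mul_le_mul_of_nonneg_left hup hΨ]

lemma lower_order_le (h : IsLogBarrierAt L α c C φ g H S x) (hα : 0 < α) (hq : 0 ≤ q)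
    (hqC : 2 * C ≤ q * (α * c)) :
    L + L * (q * ‖g‖) + q * (C * (S + 1)) ≤ q ^ 2 * (α * ‖g‖ ^ 2) +
      (q ^ 2 * α * C / 2 + q * C + L ^ 2 / (2 * α) + L) := by
  linarith [mul_le_mul_of_nonneg_left h.le_norm_sq (by positivity : 0 ≤ α / 2 * q ^ 2),
    mul_le_half_mul_sq_add_sq_div hα L (q * ‖g‖),
    mul_le_mul_of_nonneg_left hqC (mul_nonneg (half_pos one_pos).le (mul_nonneg hq h.nonneg))]

lemma upper_order_le (h : IsLogBarrierAt L α c C φ g H S x) (hL : 0 ≤ L) (hc : 0 < c) (hC : 0 < C)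
    (hε : 0 ≤ ε) (hεc : 4 * (ε * (L * C)) ≤ c) (m : ℝ) :
    ε ^ 2 * (L * ‖g‖ ^ 2) + ε * (-c * S + C) + L + L * (ε * ‖g‖) + m ≤
      -(ε * c / 2) * S + (ε * (C + c / 2 + L ^ 2 * C / c) + L + m) := by
  have hyoung : L * ‖g‖ ≤ c / (4 * C) * ‖g‖ ^ 2 + L ^ 2 * C / c := by
    refine (mul_le_half_mul_sq_add_sq_div (by positivity : 0 < c / (2 * C)) L ‖g‖).trans_eq ?_
    field_simp
    ring
  have hfirst : c / (4 * C) * ‖g‖ ^ 2 ≤ c / 4 * (S + 1) := by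
    calc c / (4 * C) * ‖g‖ ^ 2 ≤ c / (4 * C) * (C * (S + 1)) := by gcongr; exact h.norm_sq_le
      _ = _ := by field_simp
  have hsecond : ε * (L * ‖g‖ ^ 2) ≤ c / 4 * (S + 1) := by
    calc ε * (L * ‖g‖ ^ 2) ≤ ε * (L * (C * (S + 1))) := by gcongr; exact h.norm_sq_le
      _ = (ε * (L * C)) * (S + 1) := by ring
      _ ≤ c / 4 * (S + 1) := mul_le_mul_of_nonneg_right (by linarith) (by linarith [h.nonneg])
  linarith [mul_le_mul_of_nonneg_left (hyoung.trans (add_le_add_left hfirst _)) hε,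
    mul_le_mul_of_nonneg_left hsecond hε]

end IsLogBarrierAt

/-- Where `φ` is small, `S ≥ c/φ` dominates; elsewhere `φ` is bounded away from zero. -/
lemma exists_le_mul_rpow_add {c b D q ε : ℝ} (hc : 0 < c) (hb : 0 < b) (hD : 0 < D) (hq : 0 ≤ q)
    (hε : ε ≤ 1 / 2) :
    ∃ a > 0, ∀ φ S : ℝ, 0 < φ → 0 ≤ S → c ≤ S * φ → D ≤ a * φ ^ q + b * (φ ^ ε * S) := by
  set d := min 1 ((b * c / D) ^ 2)
  have _ : 0 < d := lt_min one_pos (by positivity)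
  refine ⟨D / d ^ q, by positivity, fun φ S hφ hS hcS => ?_⟩
  rcases le_total d φ with hdφ | hφd
  · calc D = D / d ^ q * d ^ q := (div_mul_cancel₀ D (by positivity)).symm
      _ ≤ D / d ^ q * φ ^ q := by gcongr
      _ ≤ _ := le_add_of_nonneg_right (by positivity)
  · have hsqrt : √φ ≤ b * c / D :=
      (Real.sqrt_le_left (by positivity)).mpr (hφd.trans (min_le_right _ _))
    have hpow : √φ ≤ φ ^ ε := by
      rw [Real.sqrt_eq_rpow]
      exact Real.rpow_le_rpow_of_exponent_ge hφ (hφd.trans (min_le_left _ _)) hε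
    have hsq : √φ * √φ = φ := Real.mul_self_sqrt hφ.le
    rw [le_div_iff₀ hD] at hsqrt
    have hcS' : c ≤ φ ^ ε * S * √φ := by
      calc c ≤ S * (√φ * √φ) := by rwa [hsq]
        _ ≤ S * (φ ^ ε * √φ) := by gcongr
        _ = _ := by ring
    have hD' : D * √φ ≤ b * (φ ^ ε * S) * √φ := by
      linarith [mul_le_mul_of_nonneg_left hcS' hb.le]
    exact (le_of_mul_le_mul_right hD' (Real.sqrt_pos.mpr hφ)).trans
      (le_add_of_nonneg_left (by positivity))

theorem exists_isSubsolutionAt_of_isLogBarrierAt {L α c C : ℝ} (hL : 0 < L) (hα : 0 < α)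
    (hc : 0 < c) (hC : 0 < C) :
    ∃ q ε m a : ℝ, 0 < q ∧ 0 < ε ∧ 0 < m ∧ 0 < a ∧
      ∀ (φ : Euc N → ℝ) (g : Euc N) (H : Mat N) (S : ℝ) (x : Euc N) (t : ℝ),
        IsLogBarrierAt L α c C φ g H S x →
        IsSubsolutionAt L α (fun y s => Real.exp (-m * s) * (a * φ y ^ q - (1 + φ y ^ ε))) x t := by
  set q := 2 * C / (α * c)
  have hq : 0 < q := by positivity
  have hqC : q * (α * c) = 2 * C := div_mul_cancel₀ _ (by positivity)
  set ε := min (1 / 2) (c / (4 * (L * C)))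
  have hε : 0 < ε := lt_min (by norm_num) (by positivity)
  have hεc : 4 * (ε * (L * C)) ≤ c := by
    have hle : ε ≤ c / (4 * (L * C)) := min_le_right _ _
    rw [le_div_iff₀ (by positivity)] at hle
    linarith
  set m := q ^ 2 * α * C / 2 + q * C + L ^ 2 / (2 * α) + L + 1 with hm
  set D := ε * (C + c / 2 + L ^ 2 * C / c) + L + m
  obtain ⟨a, ha, hmid⟩ := exists_le_mul_rpow_add (D := L + m + C ^ ε * D) hc
    (by positivity : 0 < ε * c / 2) (by positivity) hq.le (min_le_left _ _)
  refine ⟨q, ε, m, a, hq, hε, by positivity, ha, fun φ g H S x t h => ?_⟩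
  refine h.isSubsolutionAt_of_le hL.le ha.le hq.le hε.le ?_
    (h.upper_order_le hL.le hc hC hε.le hεc m)
    (le_trans ?_ (hmid _ S h.pos h.nonneg h.le_mul)) t
  · rw [hm, add_sub_cancel_right]
    exact h.lower_order_le hα hq.le hqC.ge
  · gcongr
    exacts [h.pos.le, h.le]

namespace RadialProfile

variable {J : Set ℝ} (K : RadialProfile J) {L α : ℝ} {e x : Euc N}

/-- A continuous function which is positive on the half domain in the direction `e` and vanishes on
its boundary. -/
def halfWeight (e x : Euc N) : ℝ := ⟪x, e⟫ * K.h (‖x‖ ^ 2)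

/-- The gradient of `log (K.halfWeight e)`. -/
def logGrad (e x : Euc N) : Euc N := (⟪x, e⟫)⁻¹ • e + (2 * K.logDeriv (‖x‖ ^ 2)) • x

/-- The Hessian of `log (K.halfWeight e)`. -/
def logHess (e x : Euc N) : Mat N :=
  (2 * K.logDeriv (‖x‖ ^ 2)) • idMat - ((⟪x, e⟫)⁻¹ ^ 2) • outerSq e -
    K.logCurv (‖x‖ ^ 2) • outerSq ((2 : ℝ) • x)

/-- The size of the second derivatives of `log (K.halfWeight e)`, up to constants. -/
def singularity (e x : Euc N) : ℝ := (⟪x, e⟫)⁻¹ ^ 2 + K.logCurv (‖x‖ ^ 2)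

lemma continuous_halfWeight (e : Euc N) : Continuous (K.halfWeight e) :=
  (by fun_prop : Continuous fun x : Euc N => ⟪x, e⟫).mul K.continuous_h_norm_sq

lemma halfWeight_pos (hx : x ∈ halfDom (radialSet N J) e) : 0 < K.halfWeight e x :=
  mul_pos hx.2 (K.h_pos _ hx.1)

lemma halfWeight_nonneg (hx : x ∈ halfClo (radialSet N J) e) : 0 ≤ K.halfWeight e x :=
  mul_nonneg hx.2 (K.h_norm_sq_nonneg hx.1)

lemma halfWeight_eq_zero (hx : x ∈ halfClo (radialSet N J) e)
    (hx' : x ∉ halfDom (radialSet N J) e) : K.halfWeight e x = 0 := by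
  rcases mem_frontier_or_inner_eq_zero K.isOpen_radialSet hx hx' with hfr | h0
  · rw [K.isOpen_radialSet.frontier_eq] at hfr
    rw [halfWeight, K.h_norm_sq_eq_zero hx.1 hfr.2, mul_zero]
  · rw [halfWeight, h0, zero_mul]

lemma inner_le (he : ‖e‖ = 1) (hx : x ∈ closure (radialSet N J)) : ⟪x, e⟫ ≤ K.R := by
  simpa [he] using (real_inner_le_norm x e).trans_eq (congrArg (‖x‖ * ·) he) |>.trans
    ((mul_one _).trans_le (K.norm_le hx))

lemma halfWeight_le (he : ‖e‖ = 1) (hx : x ∈ halfClo (radialSet N J) e) :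
    K.halfWeight e x ≤ K.R * K.M :=
  mul_le_mul (K.inner_le he hx.1) (K.h_norm_sq_le hx.1) (K.h_norm_sq_nonneg hx.1) K.R_pos.le

lemma halfWeight_le_of_notMem_halfCore (he : ‖e‖ = 1) {d : ℝ} (hd : 0 < d)
    (hx : x ∈ halfClo (radialSet N J) e) (hx' : x ∉ K.halfCore e d) :
    K.halfWeight e x ≤ d * max K.R K.M := by
  rcases lt_or_ge ⟪x, e⟫ d with hxe | hxe
  · calc _ ≤ d * K.M :=
        mul_le_mul hxe.le (K.h_norm_sq_le hx.1) (K.h_norm_sq_nonneg hx.1) hd.le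
      _ ≤ _ := mul_le_mul_of_nonneg_left (le_max_right _ _) hd.le
  · have hh : K.h (‖x‖ ^ 2) ≤ d := by
      by_contra! hh
      exact hx' ⟨K.mem_radialSet_of_pos hx.1 (hd.trans hh), hxe, hh.le⟩
    calc _ ≤ K.R * d := mul_le_mul (K.inner_le he hx.1) hh (K.h_norm_sq_nonneg hx.1) K.R_pos.le
      _ = d * K.R := mul_comm _ _
      _ ≤ _ := mul_le_mul_of_nonneg_left (le_max_left _ _) hd.le

lemma hasSecondJetAt_log_halfWeight (hx : x ∈ halfDom (radialSet N J) e) :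
    HasSecondJetAt (fun y => Real.log (K.halfWeight e y)) (K.logGrad e x) (K.logHess e x) x := by
  have hxe : 0 < ⟪x, e⟫ := hx.2
  have hxJ : ‖x - 0‖ ^ 2 ∈ J := by rw [sub_zero]; exact hx.1
  have hheight := (HasSecondJetAt.inner_right e x).comp (f := Real.log) (f' := fun y => y⁻¹)
    (by filter_upwards [lt_mem_nhds hxe] with y hy using Real.hasDerivAt_log hy.ne')
    (hasDerivAt_inv hxe.ne')
  have hradial := (HasSecondJetAt.norm_sub_sq 0 x).comp (f := fun s => Real.log (K.h s))
    (f' := K.logDeriv)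
    (by filter_upwards [K.isOpen.mem_nhds hxJ] with τ hτ using K.hasDerivAt_log_h τ hτ)
    (K.hasDerivAt_logDeriv _ hxJ)
  simp only [sub_zero] at hradial
  convert (hheight.add hradial).congr (ψ := fun y => Real.log (K.halfWeight e y)) ?_ using 1
  · rw [logGrad]
    module
  · rw [logHess, inv_pow]
    module
  · filter_upwards [(isOpen_halfDom K.isOpen_radialSet e).mem_nhds hx] with y hy
    exact Real.log_mul hy.2.ne' (K.h_pos _ hy.1).ne'

lemma singularity_nonneg (hx : x ∈ radialSet N J) : 0 ≤ K.singularity e x :=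
  add_nonneg (sq_nonneg _) ((sq_nonneg _).trans (K.sq_logDeriv_le _ hx))

lemma sqrt_le_singularity_mul (hx : x ∈ halfDom (radialSet N J) e) :
    √K.c₁ ≤ K.singularity e x * K.halfWeight e x := by
  have hxe : 0 < ⟪x, e⟫ := hx.2
  have hh : 0 < K.h (‖x‖ ^ 2) := K.h_pos _ hx.1
  have hcurv : √K.c₁ ^ 2 / K.h (‖x‖ ^ 2) ^ 2 ≤ K.logCurv (‖x‖ ^ 2) := by
    rw [Real.sq_sqrt K.c₁_pos.le]
    exact K.div_sq_le_logCurv _ hx.1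
  have hamgm : √K.c₁ / K.halfWeight e x ≤ K.singularity e x := by
    have hsq := sq_nonneg ((⟪x, e⟫)⁻¹ - √K.c₁ / K.h (‖x‖ ^ 2))
    have hprod : √K.c₁ / K.halfWeight e x = (⟪x, e⟫)⁻¹ * (√K.c₁ / K.h (‖x‖ ^ 2)) := by
      rw [halfWeight]
      field_simp
    rw [hprod, singularity]
    rw [← div_pow] at hcurv
    nlinarith [mul_nonneg (inv_pos.mpr hxe).le (div_nonneg (Real.sqrt_nonneg K.c₁) hh.le)]
  exact (div_le_iff₀ (K.halfWeight_pos hx)).mp hamgm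

lemma norm_sq_logGrad (he : ‖e‖ = 1) (hxe : ⟪x, e⟫ ≠ 0) :
    ‖K.logGrad e x‖ ^ 2 = (⟪x, e⟫)⁻¹ ^ 2 + 4 * K.logDeriv (‖x‖ ^ 2) +
      4 * ‖x‖ ^ 2 * K.logDeriv (‖x‖ ^ 2) ^ 2 := by
  rw [logGrad, norm_add_sq_real, norm_smul, norm_smul, inner_smul_left, inner_smul_right,
    real_inner_comm x e, he, mul_pow, mul_pow, Real.norm_eq_abs, Real.norm_eq_abs, sq_abs, sq_abs,
    conj_trivial, mul_left_comm _ _ ⟪x, e⟫, inv_mul_cancel₀ hxe]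
  ring

lemma le_norm_sq_logGrad (he : ‖e‖ = 1) (hx : x ∈ halfDom (radialSet N J) e) :
    K.c₀ * K.singularity e x - K.C₀ ≤ ‖K.logGrad e x‖ ^ 2 := by
  rw [K.norm_sq_logGrad he hx.2.ne', singularity]
  linarith [K.le_logDeriv _ hx.1 (sq_nonneg _),
    mul_le_mul_of_nonneg_right K.c₀_le_one (sq_nonneg (⟪x, e⟫)⁻¹)]

lemma norm_sq_logGrad_le (he : ‖e‖ = 1) (hx : x ∈ halfDom (radialSet N J) e) :
    ‖K.logGrad e x‖ ^ 2 ≤ (4 * K.R ^ 2 + 2) * (K.singularity e x + 1) := by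
  have hcurv := K.sq_logDeriv_le _ hx.1
  have hR : ‖x‖ ^ 2 ≤ K.R ^ 2 := (K.lt_sq _ hx.1).le
  have hx2 : ‖x‖ ^ 2 * K.logDeriv (‖x‖ ^ 2) ^ 2 ≤ K.R ^ 2 * K.logCurv (‖x‖ ^ 2) :=
    mul_le_mul hR hcurv (sq_nonneg _) (sq_nonneg _)
  rw [K.norm_sq_logGrad he hx.2.ne', singularity]
  nlinarith [sq_nonneg (K.logDeriv (‖x‖ ^ 2) - 1), mul_nonneg (sq_nonneg K.R)
    (sq_nonneg (⟪x, e⟫)⁻¹), sq_nonneg K.R, sq_nonneg (⟪x, e⟫)⁻¹]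

lemma isPucciLowerBound_logHess (hL : 0 ≤ L) (he : ‖e‖ = 1) (hx : x ∈ radialSet N J) :
    IsPucciLowerBound L α (K.logHess e x)
      (-(L * (4 * K.R ^ 2 + 1) * (K.singularity e x + 1))) := by
  intro A hA
  have hcurv := K.sq_logDeriv_le _ hx
  have hcurv0 := (sq_nonneg _).trans hcurv
  have hid : -(2 * |K.logDeriv (‖x‖ ^ 2)| * L) ≤ 2 * K.logDeriv (‖x‖ ^ 2) * A idMat := by
    refine (neg_le_neg ?_).trans (neg_abs_le _)
    rw [abs_mul, abs_mul, abs_two]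
    exact mul_le_mul_of_nonneg_left hA.abs_apply_idMat_le (by positivity)
  have he2 := mul_le_mul_of_nonneg_left ((le_abs_self _).trans (hA.abs_apply_outerSq_le e))
    (sq_nonneg (⟪x, e⟫)⁻¹)
  have hx2 := mul_le_mul_of_nonneg_left
    ((le_abs_self _).trans (hA.abs_apply_outerSq_le ((2 : ℝ) • x))) hcurv0
  rw [norm_smul, mul_pow, Real.norm_two] at hx2
  rw [he] at he2
  have hR := mul_le_mul_of_nonneg_left (K.lt_sq _ hx).le (mul_nonneg hL hcurv0)
  have habs : 2 * |K.logDeriv (‖x‖ ^ 2)| ≤ 1 + K.logCurv (‖x‖ ^ 2) := by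
    nlinarith [sq_nonneg (|K.logDeriv (‖x‖ ^ 2)| - 1), sq_abs (K.logDeriv (‖x‖ ^ 2))]
  rw [logHess, map_sub, map_sub, map_smul, map_smul, map_smul, smul_eq_mul, smul_eq_mul,
    smul_eq_mul, singularity]
  nlinarith [mul_le_mul_of_nonneg_left habs hL, mul_nonneg hL (mul_nonneg (sq_nonneg K.R)
    (sq_nonneg (⟪x, e⟫)⁻¹)), mul_nonneg hL (sq_nonneg K.R)]

lemma apply_logHess_le (hα : 0 < α) (he : ‖e‖ = 1) (hx : x ∈ radialSet N J)
    {A : Mat N →L[ℝ] ℝ} (hA : IsEllipticFunctional L α A) :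
    A (K.logHess e x) ≤
      -(α * K.c₀ / 2) * K.singularity e x + (α * K.C₀ + (2 * L) ^ 2 / (2 * (α * K.c₀))) := by
  have hαc : 0 < α * K.c₀ := mul_pos hα K.c₀_pos
  have hcurv := K.sq_logDeriv_le _ hx
  have he2 := mul_le_mul_of_nonneg_left (hA.le_apply_outerSq e) (sq_nonneg (⟪x, e⟫)⁻¹)
  have hx2 := mul_le_mul_of_nonneg_left (hA.le_apply_outerSq ((2 : ℝ) • x))
    ((sq_nonneg _).trans hcurv)
  rw [norm_smul, mul_pow, Real.norm_two] at hx2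
  rw [he] at he2
  have hid : 2 * K.logDeriv (‖x‖ ^ 2) * A idMat ≤ 2 * |K.logDeriv (‖x‖ ^ 2)| * L := by
    refine (le_abs_self _).trans ?_
    rw [abs_mul, abs_mul, abs_two]
    exact mul_le_mul_of_nonneg_left hA.abs_apply_idMat_le (by positivity)
  have hyoung : 2 * |K.logDeriv (‖x‖ ^ 2)| * L ≤
      α * K.c₀ / 2 * K.logDeriv (‖x‖ ^ 2) ^ 2 + (2 * L) ^ 2 / (2 * (α * K.c₀)) := by
    rw [← sq_abs (K.logDeriv _)]
    exact (by ring : _ = 2 * L * |K.logDeriv (‖x‖ ^ 2)|).trans_le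
      (mul_le_half_mul_sq_add_sq_div hαc _ _)
  rw [logHess, map_sub, map_sub, map_smul, map_smul, map_smul, smul_eq_mul, smul_eq_mul,
    smul_eq_mul, singularity]
  nlinarith [mul_le_mul_of_nonneg_left hcurv hαc.le,
    mul_le_mul_of_nonneg_left (K.le_logCurv _ hx (sq_nonneg _)) hα.le,
    mul_le_mul_of_nonneg_left K.c₀_le_one (mul_nonneg hα.le (sq_nonneg (⟪x, e⟫)⁻¹)),
    mul_nonneg hα.le (sq_nonneg (⟪x, e⟫)⁻¹)]

theorem exists_isLogBarrierAt (hL : 0 < L) (hα : 0 < α) :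
    ∃ c > 0, ∃ C > 0, ∀ e : Euc N, ‖e‖ = 1 → ∀ x ∈ halfDom (radialSet N J) e,
      IsLogBarrierAt L α c C (K.halfWeight e) (K.logGrad e x) (K.logHess e x)
        (K.singularity e x) x := by
  have hc₀ := K.c₀_pos
  have hC₀ := K.C₀_nonneg
  have hRM := mul_pos K.R_pos K.M_pos
  set c := min √K.c₁ (min K.c₀ (α * K.c₀ / 2))
  set C₁ := L * (4 * K.R ^ 2 + 1)
  set C₂ := α * K.C₀ + (2 * L) ^ 2 / (2 * (α * K.c₀))
  set C := K.R * K.M + K.C₀ + (4 * K.R ^ 2 + 2) + C₁ + C₂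
  have hC₁ : 0 < C₁ := by positivity
  have hC₂ : 0 ≤ C₂ := by positivity
  have hR : 0 < 4 * K.R ^ 2 + 2 := by positivity
  refine ⟨c, lt_min (Real.sqrt_pos.mpr K.c₁_pos) (lt_min hc₀ (by positivity)), C, by positivity,
    fun e he x hx => ?_⟩
  have hS := K.singularity_nonneg (e := e) hx.1
  have hc_sqrt : c ≤ √K.c₁ := min_le_left _ _
  have hc_c₀ : c ≤ K.c₀ := (min_le_right _ _).trans (min_le_left _ _)
  have hc_half : c ≤ α * K.c₀ / 2 := (min_le_right _ _).trans (min_le_right _ _)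
  refine ⟨K.halfWeight_pos hx,
    (K.halfWeight_le he (halfDom_subset_halfClo _ e hx)).trans (by linarith),
    (K.continuous_halfWeight e).continuousAt, K.hasSecondJetAt_log_halfWeight hx, hS,
    hc_sqrt.trans (K.sqrt_le_singularity_mul hx), ?_, ?_, fun A hA => ?_, fun A hA => ?_⟩
  · linarith [K.le_norm_sq_logGrad he hx, mul_le_mul_of_nonneg_right hc_c₀ hS]
  · exact (K.norm_sq_logGrad_le he hx).trans
      (mul_le_mul_of_nonneg_right (by linarith) (by linarith))
  · exact (neg_le_neg (mul_le_mul_of_nonneg_right (by linarith) (by linarith))).trans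
      (K.isPucciLowerBound_logHess hL.le he hx.1 A hA)
  · linarith [K.apply_logHess_le hα he hx.1 hA, mul_le_mul_of_nonneg_right hc_half hS]

/-- The barrier is `w(y, t) = 2 exp(-m t) (a Φ(y)^q - (1 + Φ(y)^ε))` with `Φ = K.halfWeight e`. -/
lemma exists_decaying_isSubsolutionAt (hL : 0 < L) (hα : 0 < α) :
    ∃ d > 0, ∃ Λ : ℝ, ∃ m > 0, ∃ C : ℝ, ∀ e : Euc N, ‖e‖ = 1 → ∃ w : Euc N → ℝ → ℝ,
      Continuous (fun p : Euc N × ℝ => w p.1 p.2) ∧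
      (∀ y ∈ halfDom (radialSet N J) e, ∀ t, IsSubsolutionAt L α w y t) ∧
      (∀ y ∈ halfClo (radialSet N J) e, y ∉ halfDom (radialSet N J) e → ∀ t, w y t ≤ 0) ∧
      (∀ y ∈ halfClo (radialSet N J) e, w y 0 ≤ Λ) ∧
      (∀ y ∈ halfClo (radialSet N J) e, y ∉ K.halfCore e d → w y 0 ≤ -1) ∧
      ∀ y ∈ halfClo (radialSet N J) e, ∀ t, -(C * Real.exp (-m * t)) ≤ w y t := by
  obtain ⟨c, hc, C, hC, hbarrier⟩ := K.exists_isLogBarrierAt (N := N) hL hα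
  obtain ⟨q, ε, m, a, hq, hε, hm, ha, hsub⟩ :=
    exists_isSubsolutionAt_of_isLogBarrierAt (N := N) hL hα hc hC
  have hRM : 0 < max K.R K.M := lt_max_of_lt_left K.R_pos
  set r := (1 / (2 * a)) ^ q⁻¹
  have hrq : a * r ^ q = 1 / 2 := by
    rw [Real.rpow_inv_rpow (by positivity) hq.ne']
    field_simp
  refine ⟨r / max K.R K.M, by positivity, 2 * (a * (K.R * K.M) ^ q), m, hm,
    2 * (1 + (K.R * K.M) ^ ε), fun e he => ?_⟩
  have hΦ (κ : ℝ) (hκ : 0 < κ) {y} (hy : y ∈ halfClo (radialSet N J) e) :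
      K.halfWeight e y ^ κ ∈ Icc 0 ((K.R * K.M) ^ κ) :=
    ⟨Real.rpow_nonneg (K.halfWeight_nonneg hy) κ,
      Real.rpow_le_rpow (K.halfWeight_nonneg hy) (K.halfWeight_le he hy) hκ.le⟩
  have hcont (κ : ℝ) (hκ : 0 < κ) : Continuous fun p : Euc N × ℝ => K.halfWeight e p.1 ^ κ :=
    ((K.continuous_halfWeight e).comp continuous_fst).rpow_const fun _ => Or.inr hκ.le
  refine ⟨fun y t => 2 *
      (Real.exp (-m * t) * (a * K.halfWeight e y ^ q - (1 + K.halfWeight e y ^ ε))),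
    by have := hcont q hq; have := hcont ε hε; fun_prop,
    fun y hy t => (hsub _ _ _ _ _ t (hbarrier e he y hy)).const_mul zero_le_two,
    fun y hy hy' t => ?_, fun y hy => ?_, fun y hy hy' => ?_, fun y hy t => ?_⟩
  · simp only [K.halfWeight_eq_zero hy hy', Real.zero_rpow hq.ne', Real.zero_rpow hε.ne']
    linarith [Real.exp_pos (-m * t)]
  · simp only [mul_zero, Real.exp_zero, one_mul]
    linarith [mul_le_mul_of_nonneg_left (hΦ q hq hy).2 ha.le, (hΦ ε hε hy).1]
  · have hle := K.halfWeight_le_of_notMem_halfCore he (by positivity) hy hy'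
    rw [div_mul_cancel₀ _ hRM.ne'] at hle
    simp only [mul_zero, Real.exp_zero, one_mul]
    linarith [hrq ▸ mul_le_mul_of_nonneg_left
      (Real.rpow_le_rpow (K.halfWeight_nonneg hy) hle hq.le) ha.le, (hΦ ε hε hy).1]
  · nlinarith [mul_le_mul_of_nonneg_left (hΦ ε hε hy).2 (Real.exp_pos (-m * t)).le,
      mul_nonneg (Real.exp_pos (-m * t)).le (mul_nonneg ha.le (hΦ q hq hy).1)]

theorem exists_neg_mul_exp_le (hL : 0 < L) (hα : 0 < α) :
    ∃ d > 0, ∃ Λ : ℝ, ∃ m > 0, ∃ C : ℝ, ∀ e : Euc N, ‖e‖ = 1 → ∀ v : Euc N → ℝ → ℝ,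
      IsSupersolution (halfClo (radialSet N J) e) (halfDom (radialSet N J) e) L α v →
      ∀ η : ℝ, 0 ≤ η → (∀ x ∈ halfClo (radialSet N J) e, -η ≤ v x 0) →
      (∀ x ∈ K.halfCore e d, η * Λ ≤ v x 0) →
      ∀ x ∈ halfClo (radialSet N J) e, ∀ t, 0 ≤ t → -(η * C * Real.exp (-m * t)) ≤ v x t := by
  obtain ⟨d, hd, Λ, m, hm, C, hw⟩ := K.exists_decaying_isSubsolutionAt (N := N) hL hα
  refine ⟨d, hd, Λ, m, hm, C, fun e he v hv η hη hinit hcore x hx t ht => ?_⟩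
  obtain ⟨w, hcont, hsub, hbdry, hwΛ, hw1, hlower⟩ := hw e he
  have hcomp := hv.le_of_isSubsolutionAt hL.le (isCompact_halfClo K.isBounded_radialSet e)
    (halfDom_subset_halfClo _ e) (isOpen_halfDom K.isOpen_radialSet e) (T := t)
    (w := fun y s => η * w y s) (hcont.const_mul η).continuousOn (fun y hy => ?_)
    (fun y hy hy' s _ => mul_nonpos_of_nonneg_of_nonpos hη (hbdry y hy hy' s))
    (fun y hy s _ => (hsub y hy s).const_mul hη) x hx t (right_mem_Icc.mpr ht)
  · linarith [mul_le_mul_of_nonneg_left (hlower x hx t) hη]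
  · by_cases hy' : y ∈ K.halfCore e d
    · exact (mul_le_mul_of_nonneg_left (hwΛ y hy) hη).trans (hcore y hy')
    · linarith [hinit y hy, mul_le_mul_of_nonneg_left (hw1 y hy hy') hη]

/-- After time `1` the positivity near `x₀` has spread over the core, where it then controls the
negative part forever. -/
theorem exists_eventually_neg_lt (hL : 0 < L) (hα : 0 < α) {d ρ δ : ℝ} (hd : 0 < d) (hρ : 0 < ρ)
    (hδ : 0 < δ) :
    ∃ η > 0, ∀ e : Euc N, ‖e‖ = 1 → ∀ v : Euc N → ℝ → ℝ,
      IsSupersolution (halfClo (radialSet N J) e) (halfDom (radialSet N J) e) L α v →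
      ∀ x₀ ∈ K.halfCore e d, (∀ x ∈ halfClo (radialSet N J) e, x ∈ ball x₀ ρ → δ ≤ v x 0) →
      (∀ x ∈ halfClo (radialSet N J) e, -η ≤ v x 0) →
      ∀ x ∈ halfClo (radialSet N J) e, ∀ θ > 0, ∀ᶠ t in atTop, -θ < v x t := by
  obtain ⟨d₁, hd₁, Λ, m, hm, C, hdecay⟩ := K.exists_neg_mul_exp_le (N := N) hL hα
  obtain ⟨κ, hκ, hcore⟩ := K.exists_mul_sub_le_of_halfCore (N := N) hL.le hα (lt_min hd hd₁) hρ
  have hmono {e : Euc N} {d' : ℝ} (h : min d d₁ ≤ d') :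
      K.halfCore e d' ⊆ K.halfCore e (min d d₁) :=
    fun _ hy => ⟨hy.1, h.trans hy.2.1, h.trans hy.2.2⟩
  set η := κ * δ / ((1 + |Λ|) * Real.exp L)
  have hη : 0 < η := by positivity
  have hηκ : (1 + |Λ|) * (η * Real.exp L) = κ * δ := by
    rw [mul_left_comm]
    exact div_mul_cancel₀ _ (by positivity)
  refine ⟨η, hη, fun e he v hv x₀ hx₀ hball hinit x hx θ hθ => ?_⟩
  have hlower := hdecay e he _ (hv.translate zero_le_one) (η * Real.exp L) (by positivity)
    (fun y hy => by
      simpa using hv.neg_mul_exp_le hL.le (isCompact_halfClo K.isBounded_radialSet e)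
        (halfDom_subset_halfClo _ e) (isOpen_halfDom K.isOpen_radialSet e) hη.le hinit y hy 1
        zero_le_one)
    (fun y hy => by
      have := hcore e he v hv x₀ (hmono (min_le_left _ _) hx₀) δ η hδ.le hη.le hball hinit y
        (hmono (min_le_right _ _) hy)
      rw [add_zero]
      nlinarith [mul_le_mul_of_nonneg_left (le_abs_self Λ) (by positivity : 0 ≤ η * Real.exp L)])
    x hx
  have hlim : Tendsto (fun t => -(η * Real.exp L * C * Real.exp (-m * (t - 1)))) atTop
      (𝓝 (-(η * Real.exp L * C * 0))) := by
    refine (Tendsto.const_mul _ (Real.tendsto_exp_atBot.comp ?_)).neg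
    exact (tendsto_atTop_add_const_right _ _ tendsto_id).const_mul_atTop_of_neg (neg_lt_zero.mpr hm)
  rw [mul_zero, neg_zero] at hlim
  filter_upwards [hlim.eventually (lt_mem_nhds (neg_lt_zero.mpr hθ)), eventually_ge_atTop 1]
    with t hθt ht
  exact hθt.trans_le (by simpa using hlower (t - 1) (sub_nonneg.mpr ht))

end RadialProfile

/-! ### Stability of reflection directions -/

/-- The reflection inequality `z ≥ z ∘ σ_e` on the half domain `B(e)`. -/
def DominatesReflection (B : Set (Euc N)) (z : Euc N → ℝ) (e : Euc N) : Prop :=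
  ∀ x ∈ halfDom B e, z (reflHyp e x) ≤ z x

section

variable {B : Set (Euc N)} {z : Euc N → ℝ} {e : Euc N} {u : Euc N → ℝ → ℝ}

lemma DominatesReflection.le_of_mem_halfClo (h : DominatesReflection B z e)
    (hB : MapsTo (reflHyp e) B B) (hz : ContinuousOn z (closure B)) {x : Euc N}
    (hx : x ∈ halfClo B e) : z (reflHyp e x) ≤ z x := by
  rcases hx.2.eq_or_lt with hx0 | hx0
  · rw [reflHyp_eq_self hx0.symm]
  · have hpos : IsOpen {y : Euc N | 0 < ⟪y, e⟫} := isOpen_lt continuous_const (by fun_prop)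
    have hsub : halfDom B e ⊆ closure B := fun _ hy => subset_closure hy.1
    have hxcl : x ∈ closure (halfDom B e) := by
      rw [halfDom, ofPred_and, ofPred_mem_eq, inter_comm]
      exact hpos.inter_closure ⟨hx0, hx.1⟩
    exact ContinuousWithinAt.closure_le hxcl
      (((hz _ (reflHyp_mem_closure hB hx.1)).comp (continuous_reflHyp e).continuousWithinAt
        fun _ hy => reflHyp_mem_closure hB hy).mono hsub) ((hz x hx.1).mono hsub) h

lemma continuousOn_sub_reflHyp (hB : ∀ e ∈ sphere (0 : Euc N) 1, MapsTo (reflHyp e) B B)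
    (hz : ContinuousOn z (closure B)) :
    ContinuousOn (fun p : Euc N × Euc N => z p.2 - z (reflHyp p.1 p.2))
      (sphere 0 1 ×ˢ closure B) := by
  have hcont : Continuous fun p : Euc N × Euc N => reflHyp p.1 p.2 := by
    unfold reflHyp; fun_prop
  exact (hz.comp continuousOn_snd fun _ hp => hp.2).sub
    (hz.comp hcont.continuousOn fun p hp => reflHyp_mem_closure (hB p.1 hp.1) hp.2)

lemma eventually_forall_neg_lt_sub_reflHyp
    (hB : ∀ e ∈ sphere (0 : Euc N) 1, MapsTo (reflHyp e) B B) (hBb : Bornology.IsBounded B)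
    (hz : ContinuousOn z (closure B)) (he : e ∈ sphere (0 : Euc N) 1)
    (h : DominatesReflection B z e) {η : ℝ} (hη : 0 < η) :
    ∀ᶠ e' in 𝓝[sphere 0 1] e, ∀ x ∈ halfClo B e', -η < z x - z (reflHyp e' x) := by
  have htube : ∀ᶠ e' in 𝓝 e, ∀ x ∈ closure B, e' ∈ sphere 0 1 → x ∈ closure B → 0 ≤ ⟪x, e'⟫ →
      -η < z x - z (reflHyp e' x) := by
    refine hBb.isCompact_closure.eventually_forall_of_forall_eventually fun y hy => ?_
    by_cases hye : 0 ≤ ⟪y, e⟫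
    · have hlt := ((continuousOn_sub_reflHyp hB hz) (e, y) ⟨he, hy⟩).eventually_const_lt
        (u := -η) (by linarith [h.le_of_mem_halfClo (hB e he) hz ⟨hy, hye⟩])
      filter_upwards [eventually_nhdsWithin_iff.mp hlt] with p hp hp₁ hp₂ _
      exact hp ⟨hp₁, hp₂⟩
    · have hneg : IsOpen {p : Euc N × Euc N | ⟪p.2, p.1⟫ < 0} :=
        isOpen_lt (by fun_prop) continuous_const
      filter_upwards [hneg.mem_nhds (not_le.mp hye)] with p hp _ _ hp'
      exact absurd hp' (not_le.mpr hp)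
  filter_upwards [eventually_nhdsWithin_of_eventually_nhds htube, self_mem_nhdsWithin]
    with e' he' hs x hx
  exact he' x hx.1 hs hx.1 hx.2

lemma exists_ball_eventually_lt_sub_reflHyp
    (hB : ∀ e ∈ sphere (0 : Euc N) 1, MapsTo (reflHyp e) B B) (hz : ContinuousOn z (closure B))
    (he : e ∈ sphere (0 : Euc N) 1) {x₀ : Euc N} (hx₀ : x₀ ∈ closure B) {δ : ℝ}
    (hδ : δ < z x₀ - z (reflHyp e x₀)) :
    ∃ ρ > 0, ∀ᶠ e' in 𝓝[sphere 0 1] e, ∀ x ∈ closure B, x ∈ ball x₀ ρ →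
      δ < z x - z (reflHyp e' x) := by
  have hlt := ((continuousOn_sub_reflHyp hB hz) (e, x₀) ⟨he, hx₀⟩).eventually_const_lt hδ
  obtain ⟨ρ, hρ, hball⟩ := Metric.eventually_nhds_iff_ball.mp (eventually_nhdsWithin_iff.mp hlt)
  refine ⟨ρ, hρ, ?_⟩
  filter_upwards [self_mem_nhdsWithin, mem_nhdsWithin_of_mem_nhds (ball_mem_nhds e hρ)]
    with e' hs he' x hx hxρ
  exact hball (e', x) (ball_prod_same e x₀ ρ ▸ ⟨he', hxρ⟩) ⟨hs, hx⟩

lemma mem_omegaReflSet_of_eventually_neg_lt (hB : MapsTo (reflHyp e) B B) (he : ‖e‖ = 1)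
    (h : ∀ x ∈ halfDom B e, ∀ θ > 0, ∀ᶠ t in atTop, -θ < u x t - u (reflHyp e x) t) :
    e ∈ omegaReflSet B u := by
  refine ⟨he, fun z ⟨_, t, ht, hlim⟩ x hx => le_of_forall_pos_le_add fun θ hθ => ?_⟩
  obtain ⟨n₀, hn₀⟩ := hlim (θ / 3) (by positivity)
  obtain ⟨n, hn, hnt⟩ := ((eventually_ge_atTop n₀).and
    (ht.eventually (h x hx (θ / 3) (by positivity)))).exists
  have hx_le := abs_le.mp (hn₀ n hn x (subset_closure hx.1))
  have hσ_le := abs_le.mp (hn₀ n hn (reflHyp e x) (subset_closure (hB hx.1)))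
  linarith

end

namespace RadialProfile

variable {J : Set ℝ} {u : Euc N → ℝ → ℝ} {L α : ℝ} {z : Euc N → ℝ}
  {e : Euc N}

theorem exists_eventually_mem_omegaReflSet (K : RadialProfile J) (hL : 0 < L) (hα : 0 < α)
    (hu : ∀ e : Euc N, ‖e‖ = 1 → IsSupersolution (halfClo (radialSet N J) e)
      (halfDom (radialSet N J) e) L α fun x t => u x t - u (reflHyp e x) t)
    (hz : ContinuousOn z (closure (radialSet N J))) (he : ‖e‖ = 1)
    (hle : DominatesReflection (radialSet N J) z e)
    (hne : ∃ x ∈ halfDom (radialSet N J) e, z (reflHyp e x) ≠ z x) :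
    ∃ ε > 0, ∀ᶠ e' in 𝓝[sphere 0 1] e, ∀ t, 0 ≤ t →
      (∀ x ∈ closure (radialSet N J), |u x t - z x| ≤ ε) → e' ∈ omegaReflSet (radialSet N J) u := by
  have hσ (e : Euc N) (he : e ∈ sphere 0 1) : MapsTo (reflHyp e) (radialSet N J) (radialSet N J) :=
    mapsTo_reflHyp_radialSet (mem_sphere_zero_iff_norm.mp he) J
  have hes : e ∈ sphere (0 : Euc N) 1 := mem_sphere_zero_iff_norm.mpr he
  obtain ⟨x₀, hx₀, hx₀ne⟩ := hne
  set δ := z x₀ - z (reflHyp e x₀)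
  have hδ : 0 < δ := sub_pos.mpr ((hle x₀ hx₀).lt_of_ne hx₀ne)
  set d := min (⟪x₀, e⟫ / 2) (K.h (‖x₀‖ ^ 2))
  have hd : 0 < d := lt_min (half_pos hx₀.2) (K.h_pos _ hx₀.1)
  obtain ⟨ρ, hρ, hball⟩ := exists_ball_eventually_lt_sub_reflHyp hσ hz hes
    (subset_closure hx₀.1) (half_lt_self hδ)
  obtain ⟨η, hη, hlim⟩ := K.exists_eventually_neg_lt (N := N) hL hα hd hρ
    (by positivity : 0 < δ / 4)
  have hinner : ∀ᶠ e' in 𝓝 e, ⟪x₀, e⟫ / 2 < ⟪x₀, e'⟫ :=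
    (by fun_prop : Continuous fun e' : Euc N => ⟪x₀, e'⟫).continuousAt.eventually_const_lt
      (half_lt_self hx₀.2)
  refine ⟨min (δ / 8) (η / 4), by positivity, ?_⟩
  filter_upwards [self_mem_nhdsWithin, hball, eventually_nhdsWithin_of_eventually_nhds hinner,
    eventually_forall_neg_lt_sub_reflHyp hσ K.isBounded_radialSet hz hes hle (half_pos hη)]
    with e' hs' hball' hinner' htube' t ht herr
  have he' := mem_sphere_zero_iff_norm.mp hs'
  have hdiff (x : Euc N) (hx : x ∈ closure (radialSet N J)) :
      z x - z (reflHyp e' x) - 2 * min (δ / 8) (η / 4) ≤ u x t - u (reflHyp e' x) t := by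
    have hx_err := abs_le.mp (herr x hx)
    have hσx_err := abs_le.mp (herr _ (reflHyp_mem_closure (hσ e' hs') hx))
    linarith
  refine mem_omegaReflSet_of_eventually_neg_lt (hσ e' hs') he' fun x hx θ hθ => ?_
  have hshift := hlim e' he' _ ((hu e' he').translate ht) x₀
    ⟨hx₀.1, (min_le_left _ _).trans hinner'.le, min_le_right _ _⟩
    (fun y hy hyρ => by
      simpa using (show δ / 4 ≤ u y t - u (reflHyp e' y) t by
        linarith [hdiff y hy.1, hball' y hy.1 hyρ, min_le_left (δ / 8) (η / 4)]))
    (fun y hy => by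
      simpa using (show -η ≤ u y t - u (reflHyp e' y) t by
        linarith [hdiff y hy.1, htube' y hy, min_le_right (δ / 8) (η / 4)]))
    x (halfDom_subset_halfClo _ _ hx) θ hθ
  filter_upwards [(tendsto_atTop_add_const_right _ (-t) tendsto_id).eventually hshift] with s hs
  simpa using hs

end RadialProfile

/-! ### First moments and reflections -/

/-- The first moment `∫_B z(x) x dx`, whose component along `e` detects asymmetry under `σ_e`. -/
def moment (B : Set (Euc N)) (z : Euc N → ℝ) : Euc N := ∫ x in B, z x • x

section

open MeasureTheory

variable {B : Set (Euc N)} {z : Euc N → ℝ} {e : Euc N}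

lemma mem_halfDom_or_reflHyp_mem_halfDom (hB : MapsTo (reflHyp e) B B) (he : ‖e‖ = 1) {x : Euc N}
    (hx : x ∈ B) : x ∈ halfDom B e ∨ ⟪x, e⟫ = 0 ∨ reflHyp e x ∈ halfDom B e := by
  rcases lt_trichotomy ⟪x, e⟫ 0 with h | h | h
  · exact Or.inr (Or.inr ⟨hB hx, by rw [inner_reflHyp_self he]; linarith⟩)
  · exact Or.inr (Or.inl h)
  · exact Or.inl ⟨hx, h⟩

lemma integrableOn_of_continuousOn_closure {E : Type*} [NormedAddCommGroup E]
    (hB : Bornology.IsBounded B) {f : Euc N → E} (hf : ContinuousOn f (closure B)) :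
    IntegrableOn f B :=
  (hf.integrableOn_compact hB.isCompact_closure).mono_set subset_closure

lemma inner_moment (hB : Bornology.IsBounded B) (hz : ContinuousOn z (closure B)) (e : Euc N) :
    ⟪moment B z, e⟫ = ∫ x in B, z x * ⟪x, e⟫ := by
  have hint : IntegrableOn (fun x => z x • x) B :=
    integrableOn_of_continuousOn_closure hB (hz.smul continuousOn_id)
  rw [real_inner_comm, moment, ← integral_inner hint e]
  simp only [inner_smul_right, real_inner_comm]

lemma setIntegral_comp_reflHyp (hB : MapsTo (reflHyp e) B B) (he : ‖e‖ = 1) (f : Euc N → ℝ) :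
    ∫ x in B, f (reflHyp e x) = ∫ x in B, f x := by
  have hpre : (ℝ ∙ e)ᗮ.reflection ⁻¹' B = B := by
    ext x
    rw [mem_preimage, ← reflHyp_eq_reflection he]
    exact ⟨fun h => reflHyp_reflHyp he x ▸ hB h, fun h => hB h⟩
  simpa only [hpre, reflHyp_eq_reflection he] using
    (ℝ ∙ e)ᗮ.reflection.measurePreserving.setIntegral_preimage_emb
      (ℝ ∙ e)ᗮ.reflection.toHomeomorph.measurableEmbedding f B

lemma continuousOn_comp_reflHyp (hB : MapsTo (reflHyp e) B B) (hz : ContinuousOn z (closure B)) :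
    ContinuousOn (fun x => z (reflHyp e x)) (closure B) :=
  hz.comp (continuous_reflHyp e).continuousOn fun _ => reflHyp_mem_closure hB

lemma two_mul_inner_moment (hBb : Bornology.IsBounded B) (hB : MapsTo (reflHyp e) B B)
    (he : ‖e‖ = 1) (hz : ContinuousOn z (closure B)) :
    2 * ⟪moment B z, e⟫ = ∫ x in B, (z x - z (reflHyp e x)) * ⟪x, e⟫ := by
  have hinner : ContinuousOn (fun x : Euc N => ⟪x, e⟫) (closure B) := by fun_prop
  have hreflect : ∫ x in B, z (reflHyp e x) * ⟪x, e⟫ = -⟪moment B z, e⟫ := by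
    rw [inner_moment hBb hz, ← setIntegral_comp_reflHyp hB he fun x => z x * ⟪x, e⟫,
      ← integral_neg]
    simp only [inner_reflHyp_self he, mul_neg, neg_neg]
  have hint : IntegrableOn (fun x => z x * ⟪x, e⟫) B :=
    integrableOn_of_continuousOn_closure hBb (hz.mul hinner)
  have hint' : IntegrableOn (fun x => z (reflHyp e x) * ⟪x, e⟫) B :=
    integrableOn_of_continuousOn_closure hBb ((continuousOn_comp_reflHyp hB hz).mul hinner)
  simp only [sub_mul]
  rw [integral_sub hint hint', ← inner_moment hBb hz, hreflect]
  ring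

lemma exists_halfDom_ne_of_inner_moment_ne_zero (hBb : Bornology.IsBounded B)
    (hB : MapsTo (reflHyp e) B B) (he : ‖e‖ = 1) (hz : ContinuousOn z (closure B))
    (hm : ⟪moment B z, e⟫ ≠ 0) : ∃ x ∈ halfDom B e, z (reflHyp e x) ≠ z x := by
  by_contra! heq
  have hzero : ∀ x ∈ B, (z x - z (reflHyp e x)) * ⟪x, e⟫ = 0 := fun x hx => by
    rcases mem_halfDom_or_reflHyp_mem_halfDom hB he hx with h | h | h
    · simp [heq x h]
    · simp [h]
    · simp [← heq _ h, reflHyp_reflHyp he]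
  exact hm (by linarith [two_mul_inner_moment hBb hB he hz,
    setIntegral_eq_zero_of_forall_eq_zero (μ := volume) hzero])

namespace DominatesReflection

lemma sub_reflHyp_mul_inner_nonneg (h : DominatesReflection B z e) (hB : MapsTo (reflHyp e) B B)
    (he : ‖e‖ = 1) {x : Euc N} (hx : x ∈ B) : 0 ≤ (z x - z (reflHyp e x)) * ⟪x, e⟫ := by
  rcases mem_halfDom_or_reflHyp_mem_halfDom hB he hx with h₀ | h₀ | h₀
  · exact mul_nonneg (sub_nonneg.mpr (h x h₀)) h₀.2.le
  · simp [h₀]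
  · have hσ := h _ h₀
    have hneg := h₀.2
    rw [reflHyp_reflHyp he] at hσ
    rw [inner_reflHyp_self he] at hneg
    exact mul_nonneg_of_nonpos_of_nonpos (by linarith) (by linarith)

lemma inner_moment_nonneg (h : DominatesReflection B z e) (hBo : IsOpen B)
    (hBb : Bornology.IsBounded B) (hB : MapsTo (reflHyp e) B B) (he : ‖e‖ = 1)
    (hz : ContinuousOn z (closure B)) : 0 ≤ ⟪moment B z, e⟫ := by
  have hint := setIntegral_nonneg (μ := volume) hBo.measurableSet
    fun x hx => h.sub_reflHyp_mul_inner_nonneg hB he hx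
  linarith [two_mul_inner_moment hBb hB he hz]

lemma eq_of_inner_moment_eq_zero (h : DominatesReflection B z e) (hBo : IsOpen B)
    (hBb : Bornology.IsBounded B) (hB : MapsTo (reflHyp e) B B) (he : ‖e‖ = 1)
    (hz : ContinuousOn z (closure B)) (hm : ⟪moment B z, e⟫ = 0) {x : Euc N}
    (hx : x ∈ closure B) : z (reflHyp e x) = z x := by
  have hcont : ContinuousOn (fun x => (z x - z (reflHyp e x)) * ⟪x, e⟫) (closure B) :=
    (hz.sub (continuousOn_comp_reflHyp hB hz)).mul (by fun_prop)
  have hint : ∫ x in B, (z x - z (reflHyp e x)) * ⟪x, e⟫ = 0 := by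
    rw [← two_mul_inner_moment hBb hB he hz, hm, mul_zero]
  have hae := (setIntegral_eq_zero_iff_of_nonneg_ae
    ((ae_restrict_mem hBo.measurableSet).mono
      fun x hx => h.sub_reflHyp_mul_inner_nonneg hB he hx)
    (integrableOn_of_continuousOn_closure hBb hcont)).mp hint
  have heq : EqOn (fun x => z (reflHyp e x)) z B := fun y hy => by
    rcases mul_eq_zero.mp (Measure.eqOn_open_of_ae_eq hae hBo (hcont.mono subset_closure)
      continuousOn_const hy) with h₀ | h₀
    · exact (sub_eq_zero.mp h₀).symm
    · simp only [reflHyp_eq_self h₀]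
  exact heq.of_subset_closure (continuousOn_comp_reflHyp hB hz) hz subset_closure subset_rfl hx

end DominatesReflection

end

/-! ### Reflections along arbitrary directions of the sphere -/

section

open NormedSpace

lemma continuousAt_normalize {x : Euc N} (hx : x ≠ 0) : ContinuousAt (normalize (V := Euc N)) x :=
  (continuousAt_id.norm.inv₀ (norm_ne_zero_iff.mpr hx)).smul continuousAt_id

lemma inner_normalize_right (x y : Euc N) : ⟪x, normalize y⟫ = ‖y‖⁻¹ * ⟪x, y⟫ :=
  inner_smul_right _ _ _

lemma reflHyp_normalize_smul_sub {x y : Euc N} (hxy : ‖x‖ = ‖y‖) (hne : x ≠ y) {c : ℝ}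
    (hc : c ≠ 0) : reflHyp (normalize (c • (x - y))) x = y := by
  have hw : c • (x - y) ≠ 0 := smul_ne_zero hc (sub_ne_zero.mpr hne)
  have hspan : (ℝ ∙ normalize (c • (x - y))) = ℝ ∙ (x - y) := by
    rw [NormedSpace.normalize, smul_smul, Submodule.span_singleton_smul_eq
      (mul_ne_zero (inv_ne_zero (norm_ne_zero_iff.mpr hw)) hc).isUnit]
  rw [reflHyp_eq_reflection (norm_normalize_eq_one_iff.mpr hw)]
  simpa only [hspan] using Submodule.reflection_sub hxy

lemma frequently_inner_pos {e y : Euc N} (he : ‖e‖ = 1) (hy : y ≠ 0) (h : 0 ≤ ⟪y, e⟫) :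
    ∃ᶠ e' in 𝓝[sphere 0 1] e, 0 < ⟪y, e'⟫ := by
  have hinner (s : ℝ) (hs : 0 < s) : 0 < ⟪y, e + s • y⟫ := by
    rw [inner_add_right, inner_smul_right, real_inner_self_eq_norm_sq]
    positivity
  have hne (s : ℝ) (hs : 0 < s) : e + s • y ≠ 0 := fun h₀ => by
    simpa [h₀] using hinner s hs
  have hcont : ContinuousAt (fun s : ℝ => normalize (e + s • y)) 0 := by
    have he₀ : e + (0 : ℝ) • y ≠ 0 := by
      rw [zero_smul, add_zero, ← norm_ne_zero_iff, he]
      exact one_ne_zero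
    exact (continuousAt_normalize he₀).comp (f := fun s : ℝ => e + s • y) (by fun_prop)
  have hlim : Tendsto (fun s : ℝ => normalize (e + s • y)) (𝓝[>] 0) (𝓝[sphere 0 1] e) := by
    refine tendsto_nhdsWithin_iff.mpr ⟨?_, eventually_nhdsWithin_of_forall fun s hs =>
      mem_sphere_zero_iff_norm.mpr (norm_normalize_eq_one_iff.mpr (hne s hs))⟩
    simpa [normalize_eq_self_of_norm_eq_one he] using hcont.tendsto.mono_left nhdsWithin_le_nhds
  refine hlim.frequently (eventually_nhdsWithin_of_forall fun s hs => ?_).frequently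
  rw [inner_normalize_right]
  exact mul_pos (inv_pos.mpr (norm_pos_iff.mpr (hne s hs))) (hinner s hs)

lemma frequently_inner_ne_zero {e y : Euc N} (he : ‖e‖ = 1) (hy : y ≠ 0) :
    ∃ᶠ e' in 𝓝[sphere 0 1] e, ⟪y, e'⟫ ≠ 0 := by
  rcases le_total 0 ⟪y, e⟫ with h | h
  · exact (frequently_inner_pos he hy h).mono fun _ h' => h'.ne'
  · refine (frequently_inner_pos he (neg_ne_zero.mpr hy) ?_).mono fun e' h' h₀ => ?_
    · rwa [inner_neg_left, neg_nonneg]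
    · rw [inner_neg_left, h₀, neg_zero] at h'
      exact h'.false

lemma isPreconnected_openHemisphere (m : Euc N) :
    IsPreconnected (sphere 0 1 ∩ {e : Euc N | 0 < ⟪m, e⟫}) := by
  have hne {y : Euc N} (hy : 0 < ⟪m, y⟫) : y ≠ 0 := by
    rintro rfl
    simp at hy
  have hconv : Convex ℝ {y : Euc N | 0 < ⟪m, y⟫} :=
    convex_halfSpace_gt (innerSL ℝ m).toLinearMap.isLinear 0
  convert hconv.isPreconnected.image normalize
    fun y hy => (continuousAt_normalize (hne hy)).continuousWithinAt using 1
  ext e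
  constructor
  · rintro ⟨he, hme⟩
    exact ⟨e, hme, normalize_eq_self_of_norm_eq_one (mem_sphere_zero_iff_norm.mp he)⟩
  · rintro ⟨y, hy, rfl⟩
    refine ⟨mem_sphere_zero_iff_norm.mpr (norm_normalize_eq_one_iff.mpr (hne hy)), ?_⟩
    rw [mem_ofPred_eq, inner_normalize_right]
    exact mul_pos (inv_pos.mpr (norm_pos_iff.mpr (hne hy))) hy

theorem mem_of_isClosed_of_eventually_mem {U : Set (Euc N)} (hU : IsClosed U) {m : Euc N}
    (hm : m ≠ 0)
    (hopen : ∀ e ∈ U, ‖e‖ = 1 → 0 < ⟪m, e⟫ → ∀ᶠ e' in 𝓝[sphere 0 1] e, e' ∈ U)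
    {e₁ : Euc N} (he₁ : ‖e₁‖ = 1) (hme₁ : 0 < ⟪m, e₁⟫) (he₁U : e₁ ∈ U) {e : Euc N} (he : ‖e‖ = 1)
    (hme : 0 ≤ ⟪m, e⟫) : e ∈ U := by
  have hopenHemisphere : ∀ e' ∈ sphere (0 : Euc N) 1, 0 < ⟪m, e'⟫ → e' ∈ U := fun e' he' hme' => by
    refine ((isPreconnected_openHemisphere m).induction₂ (fun a b => a ∈ U ↔ b ∈ U)
      (fun a ⟨ha, hma⟩ => ?_) (fun _ _ _ _ _ _ => Iff.trans) (fun _ _ _ _ => Iff.symm)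
      ⟨mem_sphere_zero_iff_norm.mpr he₁, hme₁⟩ ⟨he', hme'⟩).mp he₁U
    by_cases haU : a ∈ U
    · filter_upwards [nhdsWithin_mono a inter_subset_left
        (hopen a haU (mem_sphere_zero_iff_norm.mp ha) hma)] with b hb
      exact iff_of_true haU hb
    · filter_upwards [nhdsWithin_le_nhds (hU.isOpen_compl.mem_nhds haU)] with b hb
      exact iff_of_false haU hb
  refine hU.mem_of_frequently_of_tendsto (f := id) (b := 𝓝[sphere 0 1] e) ?_ nhdsWithin_le_nhds
  exact ((frequently_inner_pos he hm hme).and_eventually self_mem_nhdsWithin).mono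
    fun e' h => hopenHemisphere e' h.2 h.1

/-- A point `y` near `x` is carried to `σ_e x` by a reflection close to `σ_e`, so that both `x` and
`y` share the value of `z` at `σ_e x`. -/
theorem eventually_eq_of_eventually_comp_reflHyp_eq {r : ℝ} (hr : r ≠ 0) {z : Euc N → ℝ}
    {e : Euc N} (he : ‖e‖ = 1)
    (h : ∀ᶠ e' in 𝓝[sphere 0 1] e, ∀ x ∈ sphere 0 r, z (reflHyp e' x) = z x)
    {x : Euc N} (hx : x ∈ sphere 0 r) : ∀ᶠ y in 𝓝[sphere 0 r] x, z x = z y := by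
  have hx₀ : x ≠ 0 := ne_of_mem_sphere hx hr
  obtain ⟨e₁, he₁x, he₁, h₁⟩ := ((frequently_inner_ne_zero he hx₀).and_eventually
    (eventually_mem_nhdsWithin.and (eventually_eventually_nhdsWithin.mpr h))).exists
  have he₁' := mem_sphere_zero_iff_norm.mp he₁
  have he₁₀ : e₁ ≠ 0 := ne_of_mem_sphere he₁ one_ne_zero
  have hdiff : (2 * ⟪x, e₁⟫)⁻¹ • (x - reflHyp e₁ x) = e₁ := by
    rw [reflHyp, sub_sub_cancel, inv_smul_smul₀ (mul_ne_zero two_ne_zero he₁x)]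
  have hne : x ≠ reflHyp e₁ x := fun h₀ => by
    rw [← h₀, sub_self, smul_zero] at hdiff
    exact he₁₀ hdiff.symm
  have hcont : ContinuousAt (fun y => normalize ((2 * ⟪x, e₁⟫)⁻¹ • (y - reflHyp e₁ x))) x :=
    (continuousAt_normalize (by rwa [hdiff])).comp
      (f := fun y => (2 * ⟪x, e₁⟫)⁻¹ • (y - reflHyp e₁ x)) (by fun_prop)
  rw [ContinuousAt, hdiff, normalize_eq_self_of_norm_eq_one he₁'] at hcont
  filter_upwards [self_mem_nhdsWithin, nhdsWithin_le_nhds (isOpen_ne.mem_nhds hne),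
    nhdsWithin_le_nhds (hcont.eventually (eventually_nhdsWithin_iff.mp h₁))] with y hy hyne hynear
  have hc : (2 * ⟪x, e₁⟫)⁻¹ ≠ 0 := inv_ne_zero (mul_ne_zero two_ne_zero he₁x)
  have hnorm : ‖y‖ = ‖reflHyp e₁ x‖ := by
    rw [norm_reflHyp he₁', mem_sphere_zero_iff_norm.mp hy, mem_sphere_zero_iff_norm.mp hx]
  have hzy := hynear (mem_sphere_zero_iff_norm.mpr (norm_normalize_eq_one_iff.mpr
    (smul_ne_zero hc (sub_ne_zero.mpr hyne)))) y hy
  rw [reflHyp_normalize_smul_sub hnorm hyne hc] at hzy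
  exact (h₁.self_of_nhdsWithin he₁ x hx).symm.trans hzy

theorem eq_of_eventually_comp_reflHyp_eq (hN : 2 ≤ N) {r : ℝ} {z : Euc N → ℝ} {e : Euc N}
    (he : ‖e‖ = 1) (h : ∀ᶠ e' in 𝓝[sphere 0 1] e, ∀ x ∈ sphere 0 r, z (reflHyp e' x) = z x)
    {x y : Euc N} (hx : x ∈ sphere 0 r) (hy : y ∈ sphere 0 r) : z x = z y := by
  rcases eq_or_ne r 0 with rfl | hr
  · rw [sphere_zero, mem_singleton_iff] at hx hy
    rw [hx, hy]
  · have hrank : 1 < Module.rank ℝ (Euc N) :=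
      Module.lt_rank_of_lt_finrank (by rwa [finrank_euclideanSpace_fin])
    exact (isPreconnected_sphere hrank 0 r).induction₂ (fun a b => z a = z b)
      (fun a ha => eventually_eq_of_eventually_comp_reflHyp_eq hr he h ha)
      (fun _ _ _ _ _ _ => Eq.trans) (fun _ _ _ _ => Eq.symm) hx hy

end

/-! ### Symmetry of the limit profiles -/

section

open NormedSpace

variable {B : Set (Euc N)} {u : Euc N → ℝ → ℝ} {z : Euc N → ℝ} {e₀ p : Euc N}

lemma isClosed_omegaReflSet (hBo : IsOpen B)
    (hB : ∀ e ∈ sphere (0 : Euc N) 1, MapsTo (reflHyp e) B B) :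
    IsClosed (omegaReflSet B u) := by
  refine isClosed_of_closure_subset fun e he => ?_
  have hes : e ∈ sphere (0 : Euc N) 1 :=
    closure_minimal (fun _ h => mem_sphere_zero_iff_norm.mpr h.1) isClosed_sphere he
  refine ⟨mem_sphere_zero_iff_norm.mp hes, fun z hz x hx => ?_⟩
  have hzcont : ContinuousAt z (reflHyp e x) :=
    hz.1.continuousAt (mem_of_superset (hBo.mem_nhds (hB e hes hx.1)) subset_closure)
  have hcont : ContinuousAt (fun e' : Euc N => z (reflHyp e' x)) e :=
    ContinuousAt.comp (f := fun e' : Euc N => reflHyp e' x) hzcont (by unfold reflHyp; fun_prop)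
  have hinner : ∀ᶠ e' in 𝓝 e, 0 < ⟪x, e'⟫ :=
    (isOpen_lt continuous_const (by fun_prop)).mem_nhds hx.2
  have := mem_closure_iff_nhdsWithin_neBot.mp he
  refine le_of_tendsto (hcont.tendsto.mono_left (nhdsWithin_le_nhds (s := omegaReflSet B u))) ?_
  filter_upwards [nhdsWithin_le_nhds hinner, self_mem_nhdsWithin] with e' hpos he'
  exact he'.2 z hz x ⟨hx.1, hpos⟩

lemma foliatedSchwarzOn_of_forall_dominatesReflection
    (hB : ∀ e ∈ sphere (0 : Euc N) 1, MapsTo (reflHyp e) B B) (hz : ContinuousOn z (closure B))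
    (h : ∀ e : Euc N, ‖e‖ = 1 → 0 ≤ ⟪p, e⟫ → DominatesReflection B z e) :
    FoliatedSchwarzOn (closure B) z p := by
  intro x hx y _ hxy hp
  rcases eq_or_ne x y with rfl | hne
  · exact le_rfl
  have hnorm : ‖normalize (x - y)‖ = 1 := norm_normalize_eq_one_iff.mpr (sub_ne_zero.mpr hne)
  have hpe : 0 ≤ ⟪p, normalize (x - y)⟫ := by
    rw [inner_normalize_right, inner_sub_right, real_inner_comm, real_inner_comm y]
    exact mul_nonneg (by positivity) (sub_nonneg.mpr hp)
  have hxe : 0 ≤ ⟪x, normalize (x - y)⟫ := by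
    rw [inner_normalize_right, inner_sub_right, real_inner_self_eq_norm_mul_norm]
    nth_rw 2 [hxy]
    exact mul_nonneg (by positivity) (sub_nonneg.mpr (real_inner_le_norm x y))
  have hσ : reflHyp (normalize (x - y)) x = y := by
    simpa using reflHyp_normalize_smul_sub hxy hne one_ne_zero
  simpa only [hσ] using (h _ hnorm hpe).le_of_mem_halfClo
    (hB _ (mem_sphere_zero_iff_norm.mpr hnorm)) hz ⟨hx, hxe⟩

theorem exists_foliatedSchwarzOn_of_moment_ne_zero (hBo : IsOpen B) (hBb : Bornology.IsBounded B)
    (hB : ∀ e ∈ sphere (0 : Euc N) 1, MapsTo (reflHyp e) B B)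
    (hstab : ∀ e ∈ omegaReflSet B u, (∃ x ∈ halfDom B e, z (reflHyp e x) ≠ z x) →
      ∀ᶠ e' in 𝓝[sphere 0 1] e, e' ∈ omegaReflSet B u)
    (he₀ : ‖e₀‖ = 1) (h₀ : ∀ᶠ e in 𝓝[sphere 0 1] e₀, e ∈ omegaReflSet B u)
    (hz : z ∈ omegaLimitSet B u) (hm : moment B z ≠ 0) :
    ∃ p : Euc N, ‖p‖ = 1 ∧ ∀ z ∈ omegaLimitSet B u, FoliatedSchwarzOn (closure B) z p := by
  have he₀s : e₀ ∈ sphere (0 : Euc N) 1 := mem_sphere_zero_iff_norm.mpr he₀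
  have hm₀ : 0 ≤ ⟪moment B z, e₀⟫ :=
    DominatesReflection.inner_moment_nonneg ((h₀.self_of_nhdsWithin he₀s).2 z hz) hBo hBb
      (hB e₀ he₀s) he₀ hz.1
  obtain ⟨e₁, hme₁, he₁⟩ := ((frequently_inner_pos he₀ hm hm₀).and_eventually h₀).exists
  have hopen : ∀ e ∈ omegaReflSet B u, ‖e‖ = 1 → 0 < ⟪moment B z, e⟫ →
      ∀ᶠ e' in 𝓝[sphere 0 1] e, e' ∈ omegaReflSet B u := fun e he hes hme =>
    hstab e he (exists_halfDom_ne_of_inner_moment_ne_zero hBb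
      (hB e (mem_sphere_zero_iff_norm.mpr hes)) hes hz.1 hme.ne')
  refine ⟨normalize (moment B z), norm_normalize_eq_one_iff.mpr hm, fun z' hz' =>
    foliatedSchwarzOn_of_forall_dominatesReflection hB hz'.1 fun e he hpe => ?_⟩
  rw [real_inner_comm, inner_normalize_right, real_inner_comm] at hpe
  exact (mem_of_isClosed_of_eventually_mem (isClosed_omegaReflSet hBo hB) hm hopen he₁.1 hme₁ he₁
    he (nonneg_of_mul_nonneg_right hpe (inv_pos.mpr (norm_pos_iff.mpr hm)))).2 z' hz'

theorem eq_of_eventually_dominatesReflection_of_moment_eq_zero (hN : 2 ≤ N) (hBo : IsOpen B)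
    (hBb : Bornology.IsBounded B) (hB : ∀ e ∈ sphere (0 : Euc N) 1, MapsTo (reflHyp e) B B)
    (he₀ : ‖e₀‖ = 1) (hz : ContinuousOn z (closure B))
    (h₀ : ∀ᶠ e in 𝓝[sphere 0 1] e₀, DominatesReflection B z e) (hm : moment B z = 0) {x y : Euc N}
    (hx : x ∈ closure B) (hxy : ‖x‖ = ‖y‖) : z x = z y := by
  have hsphere : ∀ x' ∈ sphere (0 : Euc N) ‖x‖, x' ∈ closure B := fun x' hx' => by
    rcases eq_or_ne x x' with rfl | hne
    · exact hx
    rw [← reflHyp_normalize_smul_sub (mem_sphere_zero_iff_norm.mp hx').symm hne one_ne_zero,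
      one_smul]
    exact reflHyp_mem_closure (hB _ (mem_sphere_zero_iff_norm.mpr
      (norm_normalize_eq_one_iff.mpr (sub_ne_zero.mpr hne)))) hx
  refine eq_of_eventually_comp_reflHyp_eq hN he₀ ?_ (mem_sphere_zero_iff_norm.mpr rfl)
    (mem_sphere_zero_iff_norm.mpr hxy.symm)
  filter_upwards [h₀, self_mem_nhdsWithin] with e he hes x' hx'
  exact he.eq_of_inner_moment_eq_zero hBo hBb (hB e hes) (mem_sphere_zero_iff_norm.mp hes) hz
    (by rw [hm, inner_zero_left]) (hsphere x' hx')

end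

theorem RadialProfile.exists_foliatedSchwarzOn {J : Set ℝ} (K : RadialProfile J) (hN : 2 ≤ N)
    {u : Euc N → ℝ → ℝ} {L α : ℝ} (hL : 0 < L) (hα : 0 < α)
    (hu : ∀ e : Euc N, ‖e‖ = 1 → IsSupersolution (halfClo (radialSet N J) e)
      (halfDom (radialSet N J) e) L α fun x t => u x t - u (reflHyp e x) t)
    (hu₀ : ContinuousOn (u · 0) (closure (radialSet N J))) {e₀ : Euc N} (he₀ : ‖e₀‖ = 1)
    (hle : DominatesReflection (radialSet N J) (u · 0) e₀)
    (hne : ∃ x ∈ halfDom (radialSet N J) e₀, u (reflHyp e₀ x) 0 ≠ u x 0) :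
    ∃ p : Euc N, ‖p‖ = 1 ∧
      ∀ z ∈ omegaLimitSet (radialSet N J) u, FoliatedSchwarzOn (closure (radialSet N J)) z p := by
  have hB (e : Euc N) (he : e ∈ sphere 0 1) : MapsTo (reflHyp e) (radialSet N J) (radialSet N J) :=
    mapsTo_reflHyp_radialSet (mem_sphere_zero_iff_norm.mp he) J
  obtain ⟨ε₀, hε₀, hstab₀⟩ := K.exists_eventually_mem_omegaReflSet hL hα hu hu₀ he₀ hle hne
  have h₀ : ∀ᶠ e in 𝓝[sphere 0 1] e₀, e ∈ omegaReflSet (radialSet N J) u :=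
    hstab₀.mono fun e he => he 0 le_rfl fun x _ => by simpa using hε₀.le
  by_cases hm : ∃ z ∈ omegaLimitSet (radialSet N J) u, moment (radialSet N J) z ≠ 0
  · obtain ⟨z, hz, hmz⟩ := hm
    refine exists_foliatedSchwarzOn_of_moment_ne_zero K.isOpen_radialSet K.isBounded_radialSet hB
      (fun e he hne => ?_) he₀ h₀ hz hmz
    obtain ⟨ε, hε, hstab⟩ := K.exists_eventually_mem_omegaReflSet hL hα hu hz.1 he.1
      (he.2 z hz) hne
    obtain ⟨_, t, ht, hlim⟩ := hz
    obtain ⟨n₀, hn₀⟩ := hlim ε hε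
    obtain ⟨n, hn, htn⟩ := ((eventually_ge_atTop n₀).and (ht.eventually_ge_atTop 0)).exists
    exact hstab.mono fun e' he' => he' (t n) htn (hn₀ n hn)
  · push Not at hm
    exact ⟨e₀, he₀, fun z hz x hx y _ hxy _ =>
      (eq_of_eventually_dominatesReflection_of_moment_eq_zero hN K.isOpen_radialSet
        K.isBounded_radialSet hB he₀ hz.1
        (h₀.mono fun _ he => he.2 z hz) (hm z hz) hx hxy).ge⟩

theorem asymptotic_foliated_schwarz_symmetry_fully_nonlinear_general (hN : 2 ≤ N) {B : Set (Euc N)}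
    (hB : IsRadialDomain B) {𝓑 : Set (ℝ × Euc N × Mat N)} (h𝓑 : IsOpen 𝓑) (hconv : Convex ℝ 𝓑)
    {F : ℝ → Euc N → ℝ × Euc N × Mat N → ℝ} (hinv : IsReflectionInvariant B 𝓑 F) {L α : ℝ}
    (hL : 0 < L) (hα : 0 < α) (hF : ∀ t, 0 ≤ t → ∀ x ∈ B, IsUniformlyElliptic 𝓑 L α (F t x))
    {u ut : Euc N → ℝ → ℝ} {Du : Euc N → ℝ → Euc N →L[ℝ] ℝ}
    {D2u : Euc N → ℝ → Euc N →L[ℝ] Euc N →L[ℝ] ℝ} (hu : IsClassicalSolution B 𝓑 F u ut Du D2u)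
    {e₀ : Euc N} (he₀ : ‖e₀‖ = 1) (hle : DominatesReflection B (u · 0) e₀)
    (hne : ∃ x ∈ halfDom B e₀, u (reflHyp e₀ x) 0 ≠ u x 0) :
    ∃ p : Euc N, ‖p‖ = 1 ∧ ∀ z ∈ omegaLimitSet B u, FoliatedSchwarzOn (closure B) z p := by
  obtain ⟨J, ⟨K⟩, rfl⟩ := hB.exists_radialProfile
  have hu₀ : ContinuousOn (u · 0) (closure (radialSet N J)) :=
    hu.continuousOn.comp (f := fun x => (x, (0 : ℝ))) (by fun_prop)
      fun _ hx => ⟨hx, self_mem_Ici⟩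
  exact K.exists_foliatedSchwarzOn hN hL hα (fun e he => hu.isSupersolution_sub_reflHyp
    K.isOpen_radialSet hF hL.le hα.le h𝓑 hconv hinv he) hu₀ he₀ hle hne

/-- Theorem `teodirichlet` of the paper:
asymptotic foliated Schwarz symmetry for the fully nonlinear parabolic problem
`u_t = F(t,x,u,∇u,D²u)` in `B × (0,∞)`, `u = 0` on `∂B × (0,∞)`, `u(·,0) = u₀`,
under hypotheses (F1)–(F4) on `F`, the reflection hypothesis (U1) on `u₀` and
uniform boundedness (U2). -/
theorem asymptotic_foliated_schwarz_symmetry_fully_nonlinear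
    (N : ℕ) (hN : 2 ≤ N)
    (B : Set (EuclideanSpace ℝ (Fin N))) (hB : IsRadialDomain B)
    (𝓑 : Set (ℝ × EuclideanSpace ℝ (Fin N) × (Fin N → Fin N → ℝ)))
    (h𝓑open : IsOpen 𝓑) (h𝓑conv : Convex ℝ 𝓑)
    (h𝓑zero : ((0:ℝ), (0 : EuclideanSpace ℝ (Fin N)), (0 : Fin N → Fin N → ℝ)) ∈ 𝓑)
    (F : ℝ → EuclideanSpace ℝ (Fin N) →
      (ℝ × EuclideanSpace ℝ (Fin N) × (Fin N → Fin N → ℝ)) → ℝ)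
    -- (F1) reflection invariance
    (hF1dom : ∀ e : EuclideanSpace ℝ (Fin N), ‖e‖ = 1 → ∀ x ∈ B,
      ∀ v : ℝ, ∀ p : EuclideanSpace ℝ (Fin N), ∀ q : Fin N → Fin N → ℝ,
      (v, p, q) ∈ 𝓑 →
      reflHyp e x ∈ B ∧ (v, reflHyp e p, matConj (reflMat e) q) ∈ 𝓑)
    (hF1sym : ∀ e : EuclideanSpace ℝ (Fin N), ‖e‖ = 1 → ∀ t ∈ Ioi (0:ℝ), ∀ x ∈ B,
      ∀ v : ℝ, ∀ p : EuclideanSpace ℝ (Fin N), ∀ q : Fin N → Fin N → ℝ,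
      (v, p, q) ∈ 𝓑 →
      F t (reflHyp e x) (v, reflHyp e p, matConj (reflMat e) q) = F t x (v, p, q))
    -- (F2) regularity: continuity, uniform Lipschitz continuity in (u,p,q),
    -- differentiability with respect to the matrix variable q
    (hF_cont : ContinuousOn (fun z : ℝ × EuclideanSpace ℝ (Fin N) ×
        (ℝ × EuclideanSpace ℝ (Fin N) × (Fin N → Fin N → ℝ)) => F z.1 z.2.1 z.2.2)
      (Ici 0 ×ˢ closure B ×ˢ 𝓑))
    (hF_lip : ∃ L > (0:ℝ), ∀ t ∈ Ici (0:ℝ), ∀ x ∈ B, ∀ P ∈ 𝓑, ∀ P' ∈ 𝓑,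
      |F t x P - F t x P'| ≤ L * ‖P - P'‖)
    (Fq : ℝ → EuclideanSpace ℝ (Fin N) →
      (ℝ × EuclideanSpace ℝ (Fin N) × (Fin N → Fin N → ℝ)) →
      ((Fin N → Fin N → ℝ) →L[ℝ] ℝ))
    (hFq : ∀ t ∈ Ici (0:ℝ), ∀ x ∈ B,
      ∀ v : ℝ, ∀ p : EuclideanSpace ℝ (Fin N), ∀ q : Fin N → Fin N → ℝ,
      (v, p, q) ∈ 𝓑 →
      HasFDerivAt (fun q' => F t x (v, p, q')) (Fq t x (v, p, q)) q)
    -- (F3) boundedness of F(·,·,0,0,0)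
    (hF3 : ∃ C : ℝ, ∀ t ∈ Ici (0:ℝ), ∀ x ∈ B,
      |F t x ((0:ℝ), (0 : EuclideanSpace ℝ (Fin N)), (0 : Fin N → Fin N → ℝ))| ≤ C)
    -- (F4) uniform ellipticity: ∂_{q_ij}F ξᵢξⱼ ≥ α₀ |ξ|²
    (α₀ : ℝ) (hα₀ : 0 < α₀)
    (hF4 : ∀ t ∈ Ici (0:ℝ), ∀ x ∈ B, ∀ P ∈ 𝓑, ∀ ξ : Fin N → ℝ,
      α₀ * (∑ i, ξ i ^ 2) ≤ Fq t x P (fun i j => ξ i * ξ j))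
    -- the solution and its derivatives
    (u : EuclideanSpace ℝ (Fin N) → ℝ → ℝ)
    (u₀ : EuclideanSpace ℝ (Fin N) → ℝ)
    (ut : EuclideanSpace ℝ (Fin N) → ℝ → ℝ)
    (Du : EuclideanSpace ℝ (Fin N) → ℝ → (EuclideanSpace ℝ (Fin N) →L[ℝ] ℝ))
    (D2u : EuclideanSpace ℝ (Fin N) → ℝ →
      (EuclideanSpace ℝ (Fin N) →L[ℝ] EuclideanSpace ℝ (Fin N) →L[ℝ] ℝ))
    -- u ∈ C(B̄ × [0,∞))
    (hu_cont : ContinuousOn (fun p : EuclideanSpace ℝ (Fin N) × ℝ => u p.1 p.2)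
      (closure B ×ˢ Ici 0))
    -- u ∈ C^{2,1}(B × (0,∞)): the derivatives exist and are continuous there
    (hut : ∀ x ∈ B, ∀ t ∈ Ioi (0:ℝ), HasDerivAt (fun s => u x s) (ut x t) t)
    (hDu : ∀ x ∈ B, ∀ t ∈ Ioi (0:ℝ), HasFDerivAt (fun y => u y t) (Du x t) x)
    (hD2u : ∀ x ∈ B, ∀ t ∈ Ioi (0:ℝ), HasFDerivAt (fun y => Du y t) (D2u x t) x)
    (hreg : ContinuousOn (fun p : EuclideanSpace ℝ (Fin N) × ℝ =>
      (ut p.1 p.2, Du p.1 p.2, D2u p.1 p.2)) (B ×ˢ Ioi 0))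
    -- the equation u_t = F(t,x,u,∇u,D²u) in B × (0,∞), with values in 𝓑
    (hdom : ∀ x ∈ B, ∀ t ∈ Ioi (0:ℝ),
      (u x t, gradVec (Du x t), hessMat (D2u x t)) ∈ 𝓑)
    (hPDE : ∀ x ∈ B, ∀ t ∈ Ioi (0:ℝ),
      ut x t = F t x (u x t, gradVec (Du x t), hessMat (D2u x t)))
    -- the boundary condition u = 0 on ∂B × (0,∞)
    (hbc : ∀ x ∈ frontier B, ∀ t ∈ Ioi (0:ℝ), u x t = 0)
    -- the initial condition u(·,0) = u₀
    (hinit : ∀ x ∈ closure B, u x 0 = u₀ x)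
    -- (U2): uniform boundedness
    (hU2 : ∃ C : ℝ, ∀ t ∈ Ici (0:ℝ), ∀ x ∈ closure B, |u x t| ≤ C)
    -- (U1): reflection inequality for the initial profile
    (hU1 : ∃ e : EuclideanSpace ℝ (Fin N), ‖e‖ = 1 ∧
      (∀ x ∈ halfDom B e, u₀ (reflHyp e x) ≤ u₀ x) ∧
      (∃ x ∈ halfDom B e, u₀ (reflHyp e x) ≠ u₀ x)) :
    ∃ p : EuclideanSpace ℝ (Fin N), ‖p‖ = 1 ∧
      ∀ z ∈ omegaLimitSet B u, FoliatedSchwarzOn (closure B) z p := by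
  obtain ⟨L, hL, hlip⟩ := hF_lip
  obtain ⟨e₀, he₀, hle, x₀, hx₀, hne⟩ := hU1
  have hinv : IsReflectionInvariant B 𝓑 F :=
    ⟨fun e he x hx => (hF1dom e he x hx _ _ _ h𝓑zero).1,
      fun e he v p q h => (hF1dom e he x₀ hx₀.1 v p q h).2, hF1sym⟩
  have hell : ∀ t, 0 ≤ t → ∀ x ∈ B, IsUniformlyElliptic 𝓑 L α₀ (F t x) := fun t ht x hx =>
    ⟨hlip t ht x hx, fun P hP => ⟨Fq t x P, hFq t ht x hx _ _ _ hP, fun ξ => by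
      rw [EuclideanSpace.real_norm_sq_eq]
      exact hF4 t ht x hx P hP ξ⟩⟩
  have hu : IsClassicalSolution B 𝓑 F u ut Du D2u :=
    ⟨hu_cont, hut, hDu, hD2u, hdom, hPDE, hbc⟩
  have hu₀ : ∀ x ∈ halfDom B e₀, u x 0 = u₀ x ∧ u (reflHyp e₀ x) 0 = u₀ (reflHyp e₀ x) :=
    fun x hx => ⟨hinit x (subset_closure hx.1),
      hinit _ (subset_closure (hinv.mapsTo e₀ he₀ hx.1))⟩
  refine asymptotic_foliated_schwarz_symmetry_fully_nonlinear_general hN hB h𝓑open h𝓑conv hinv hL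
    hα₀ hell hu he₀ (fun x hx => ?_) ⟨x₀, hx₀, ?_⟩
  · simpa only [hu₀ x hx] using hle x hx
  · simpa only [hu₀ x₀ hx₀] using hne

end
end

section
/- Let v ∈ C(ℝ) be an even and 2π-periodic function, and let 𝓡 = {η ∈ ℝ : v(η+φ) = v(η−φ) for all φ ∈ ℝ} be the set of points of reflectional symmetry of v. Suppose that for some η ∈ ℝ one has v(η+φ) ≥ v(η−φ) for all φ ∈ [0,π], and v(η+φ₀) > v(η−φ₀) for some φ₀ ∈ (0,π). Then 𝓡 = {nπ : n ∈ ℤ}. -/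
/-!
For an even function, `x` is a point of reflectional symmetry exactly when `2x` is a period. If
some period of `v` is not a multiple of `2π`, its representative modulo `2π` of least absolute
value yields a period `T` with `0 < T ≤ π`. By `2π`-periodicity the comparison
`v (η - φ) ≤ v (η + φ)` on `[0, π]` reverses on `[π, 2π]`, and since this interval contains a
full period of length `T`, the reversed inequality holds for all `φ`; replacing `φ` by `-φ`
makes it an equality, so `η` itself would be a point of symmetry, which the strict inequality
rules out.
-/

section Group

variable {G α : Type*} [AddCommGroup G]

/-- `IsReflectionPoint v η` says that `η` is a point of reflectional symmetry of `v`, i.e.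
`η ∈ 𝓡` in the notation of the paper. -/
def IsReflectionPoint (v : G → α) (η : G) : Prop :=
  ∀ φ : G, v (η + φ) = v (η - φ)

theorem isReflectionPoint_iff_periodic_two_nsmul {v : G → α} (heven : Function.Even v) {x : G} :
    IsReflectionPoint v x ↔ Function.Periodic v (2 • x) := by
  constructor
  · intro hx φ
    calc v (φ + 2 • x) = v (x + (x + φ)) := by congr 1; abel
      _ = v (x - (x + φ)) := hx _
      _ = v (-φ) := by congr 1; abel
      _ = v φ := heven φ
  · intro hx φ
    calc v (x + φ) = v (-(x + φ)) := (heven _).symm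
      _ = v (-(x + φ) + 2 • x) := (hx _).symm
      _ = v (x - φ) := by congr 1; abel

end Group

section LinearOrderedGroup

variable {G α : Type*} [AddCommGroup G] [LinearOrder G] [IsOrderedAddMonoid G] [Archimedean G]

theorem periodic_iff_exists_zsmul_of_forall_not_periodic {f : G → α} {p : G} (hp : 0 < p)
    (hper : Function.Periodic f (2 • p))
    (hshort : ∀ T ∈ Set.Ioc 0 p, ¬ Function.Periodic f T) {c : G} :
    Function.Periodic f c ↔ ∃ n : ℤ, c = n • 2 • p := by
  constructor
  · intro hc
    obtain ⟨n, ⟨hlower, hupper⟩, -⟩ :=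
      existsUnique_sub_zsmul_mem_Ioc (nsmul_pos hp two_ne_zero) c (-p)
    have hT : Function.Periodic f (c - n • 2 • p) := hc.sub_period (hper.zsmul n)
    have hT_abs : |c - n • 2 • p| ≤ p :=
      abs_le.2 ⟨hlower.le, hupper.trans_eq (by abel)⟩
    have hT_abs_periodic : Function.Periodic f |c - n • 2 • p| := by
      rcases abs_choice (c - n • 2 • p) with h | h <;> rw [h]
      exacts [hT, hT.neg]
    by_contra! hne
    exact hshort _ ⟨abs_pos.2 (sub_ne_zero.2 (hne n)), hT_abs⟩ hT_abs_periodic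
  · rintro ⟨n, rfl⟩
    exact hper.zsmul n

variable [PartialOrder α]

theorem isReflectionPoint_of_forall_le_of_periodic {v : G → α} {p T η : G}
    (hper : Function.Periodic v (2 • p))
    (hle : ∀ φ ∈ Set.Icc 0 p, v (η - φ) ≤ v (η + φ))
    (hT : T ∈ Set.Ioc 0 p) (hperT : Function.Periodic v T) : IsReflectionPoint v η := by
  have hge_on_second_half : ∀ φ ∈ Set.Icc p (2 • p), v (η + φ) ≤ v (η - φ) := by
    rintro φ ⟨hpφ, hφ⟩
    have h := hle (2 • p - φ) ⟨sub_nonneg.2 hφ, sub_le_iff_le_add.2 (by rw [two_nsmul]; gcongr)⟩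
    have hleft : v (η - (2 • p - φ)) = v (η + φ) := by
      rw [← sub_add, sub_add_eq_add_sub, hper.sub_eq]
    have hright : v (η + (2 • p - φ)) = v (η - φ) := by
      rw [add_sub_left_comm, add_comm, hper]
    rwa [hleft, hright] at h
  have hge (φ : G) : v (η + φ) ≤ v (η - φ) := by
    have hpair : Function.Periodic (fun ψ => (v (η + ψ), v (η - ψ))) T := fun ψ => by
      simp only [← add_assoc, ← sub_sub, hperT _, hperT.sub_eq]
    obtain ⟨ψ, ⟨hpψ, hψ⟩, heq⟩ := hpair.exists_mem_Ico hT.1 φ p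
    obtain ⟨hadd, hsub⟩ := Prod.mk.inj heq
    rw [hadd, hsub]
    exact hge_on_second_half ψ ⟨hpψ, hψ.le.trans (by rw [two_nsmul]; gcongr; exact hT.2)⟩
  intro φ
  refine (hge φ).antisymm ?_
  simpa only [← sub_eq_add_neg, sub_neg_eq_add] using hge (-φ)

theorem reflection_symmetry_points_eq_integer_multiples_of_pi_general {v : G → α} {p η : G}
    (hp : 0 < p) (heven : Function.Even v) (hper : Function.Periodic v (2 • p))
    (hle : ∀ φ ∈ Set.Icc 0 p, v (η - φ) ≤ v (η + φ)) (hη : ¬ IsReflectionPoint v η) :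
    {x | IsReflectionPoint v x} = {x | ∃ n : ℤ, x = n • p} := by
  have hshort : ∀ T ∈ Set.Ioc 0 p, ¬ Function.Periodic v T := fun T hT hperT =>
    hη (isReflectionPoint_of_forall_le_of_periodic hper hle hT hperT)
  ext x
  calc IsReflectionPoint v x ↔ Function.Periodic v (2 • x) :=
        isReflectionPoint_iff_periodic_two_nsmul heven
    _ ↔ ∃ n : ℤ, 2 • x = n • 2 • p :=
        periodic_iff_exists_zsmul_of_forall_not_periodic hp hper hshort
    _ ↔ ∃ n : ℤ, x = n • p := by
        simp only [smul_comm _ 2 p, nsmul_right_inj two_ne_zero]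

end LinearOrderedGroup

/-- Lemma `lemma1` of the paper:
Let `v ∈ C(ℝ)` be even and `2π`-periodic, and let
`𝓡 = {η : v(η+φ) = v(η−φ) for all φ}` be its set of points of reflectional
symmetry.  If for some `η` one has `v(η+φ) ≥ v(η−φ)` for all `φ ∈ [0,π]` and
`v(η+φ₀) > v(η−φ₀)` for some `φ₀ ∈ (0,π)`, then `𝓡 = {nπ : n ∈ ℤ}`. -/
theorem reflection_symmetry_points_eq_integer_multiples_of_pi
    (v : ℝ → ℝ) (hv : Continuous v)
    (heven : ∀ φ : ℝ, v (-φ) = v φ)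
    (hper : ∀ φ : ℝ, v (φ + 2 * Real.pi) = v φ)
    (η : ℝ)
    (hmono : ∀ φ ∈ Set.Icc (0 : ℝ) Real.pi, v (η - φ) ≤ v (η + φ))
    (hstrict : ∃ φ₀ ∈ Set.Ioo (0 : ℝ) Real.pi, v (η - φ₀) < v (η + φ₀)) :
    {η' : ℝ | ∀ φ : ℝ, v (η' + φ) = v (η' - φ)} =
      {x : ℝ | ∃ n : ℤ, x = n * Real.pi} := by
  obtain ⟨φ₀, -, hlt⟩ := hstrict
  have hper' : Function.Periodic v (2 • Real.pi) := by
    simpa only [nsmul_eq_mul, Nat.cast_ofNat, Function.Periodic] using hper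
  simpa only [zsmul_eq_mul, IsReflectionPoint] using
    reflection_symmetry_points_eq_integer_multiples_of_pi_general Real.pi_pos heven hper' hmono
      fun hη => hlt.ne' (hη φ₀)
end

section
/- Let v ∈ C(ℝ) be even, 2π-periodic and non-constant. Then the set 𝓡 = {η ∈ ℝ : v(η+φ) = v(η−φ) for all φ ∈ ℝ} of points of reflectional symmetry of v equals {nπ/k : n ∈ ℤ} for some positive integer k. -/
/-!
For an even function `f`, reflection about `0` followed by reflection about `η` is translation
by `2η`, so `η` is a point of symmetry exactly when `2η` is a period. The periods form a subgroup,
which cannot be dense when `f` is non-constant and continuous at some point. A non-dense subgroup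
of an Archimedean group is cyclic, and since this one contains `2p` it is generated by `2p / k`
for some positive integer `k`.
-/

open Function AddSubgroup

/-- The group of all periods of `f`, with `0` counted as a period. It is used to apply the
dichotomy between dense and cyclic subgroups to the periods. -/
def periods {G α : Type*} [AddGroup G] (f : G → α) : AddSubgroup G where
  carrier := {c | Periodic f c}
  zero_mem' x := by rw [add_zero]
  add_mem' := Periodic.add_period
  neg_mem' := Periodic.neg

theorem mem_periods {G α : Type*} [AddGroup G] {f : G → α} {c : G} :
    c ∈ periods f ↔ Periodic f c :=
  Iff.rfl

theorem eq_of_dense_periods_of_continuousAt {G α : Type*} [AddGroup G] [TopologicalSpace G]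
    [ContinuousAdd G] [TopologicalSpace α] [T1Space α] {f : G → α} {x₀ : G}
    (hdense : Dense (periods f : Set G)) (hf : ContinuousAt f x₀) (x : G) : f x = f x₀ := by
  by_contra hne
  have hx₀ : x + (-x + x₀) = x₀ := add_neg_cancel_left x x₀
  have hshift : ContinuousAt (fun c => f (x + c)) (-x + x₀) :=
    ContinuousAt.comp (g := f) (by rwa [hx₀]) (by fun_prop)
  have hnear : ∀ᶠ c in nhds (-x + x₀), f (x + c) ≠ f x :=
    hshift.eventually_ne (by rw [hx₀]; exact Ne.symm hne)
  obtain ⟨c, hc_period, hc_ne⟩ := hdense.inter_nhds_nonempty hnear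
  exact hc_ne (hc_period x)

theorem symmetric_about_iff_periodic_two_nsmul {G α : Type*} [AddCommGroup G] {f : G → α}
    (hf : f.Even) (η : G) : (∀ φ, f (η + φ) = f (η - φ)) ↔ Periodic f (2 • η) := by
  refine (Equiv.addRight η).forall_congr_right.symm.trans (forall_congr' fun φ => ?_)
  have hleft : η + (φ + η) = φ + 2 • η := by abel
  have hright : η - (φ + η) = -φ := by abel
  rw [Equiv.coe_addRight, hleft, hright, hf φ]

theorem exists_nsmul_eq_of_mem_zmultiples {G : Type*} [AddGroup G] {a c : G}
    (hc : c ∈ zmultiples a) : ∃ (k : ℕ) (b : G), k • b = c ∧ zmultiples b = zmultiples a := by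
  obtain ⟨m, rfl⟩ := mem_zmultiples_iff.mp hc
  obtain ⟨k, rfl | rfl⟩ := m.eq_nat_or_neg
  · exact ⟨k, a, (natCast_zsmul a k).symm, rfl⟩
  · exact ⟨k, -a, by rw [neg_zsmul, natCast_zsmul, neg_nsmul], zmultiples_neg⟩

theorem exists_zmultiples_eq_zmultiples_div {K : Type*} [DivisionRing K] {a c : K}
    (hc : c ≠ 0) (hmem : c ∈ zmultiples a) :
    ∃ k : ℕ, 0 < k ∧ zmultiples a = zmultiples (c / k) := by
  obtain ⟨k, b, rfl, hb⟩ := exists_nsmul_eq_of_mem_zmultiples hmem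
  rw [nsmul_eq_mul] at hc ⊢
  have hk : (k : K) ≠ 0 := left_ne_zero_of_mul hc
  refine ⟨k, Nat.pos_of_ne_zero fun h => hk (by rw [h, Nat.cast_zero]), ?_⟩
  rw [(Nat.cast_commute k b).eq, mul_div_cancel_right₀ b hk, hb]

section ArchimedeanField

variable {K α : Type*} [Field K] [LinearOrder K] [IsStrictOrderedRing K] [Archimedean K]
  [TopologicalSpace K] [OrderTopology K] [TopologicalSpace α] [T1Space α] {f : K → α} {x₀ : K}

theorem exists_periods_eq_zmultiples_div (hf : ContinuousAt f x₀)
    (hnonconst : ¬ ∃ b, ∀ x, f x = b) {c : K} (hc : c ≠ 0) (hper : Periodic f c) :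
    ∃ k : ℕ, 0 < k ∧ periods f = zmultiples (c / k) := by
  have hnot_dense : ¬ Dense (periods f : Set K) := fun hdense =>
    hnonconst ⟨f x₀, eq_of_dense_periods_of_continuousAt hdense hf⟩
  obtain ⟨a, ha⟩ := (periods f).dense_or_cyclic.resolve_left hnot_dense
  rw [← zmultiples_eq_closure] at ha
  rw [ha]
  exact exists_zmultiples_eq_zmultiples_div hc (ha ▸ mem_periods.mpr hper)

theorem reflection_symmetry_points_eq_pi_div_k_general (hf : ContinuousAt f x₀) (heven : f.Even)
    {p : K} (hp : p ≠ 0) (hper : Periodic f (2 * p)) (hnonconst : ¬ ∃ b, ∀ x, f x = b) :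
    ∃ k : ℕ, 0 < k ∧
      {η : K | ∀ φ : K, f (η + φ) = f (η - φ)} = {x : K | ∃ n : ℤ, x = n * p / k} := by
  obtain ⟨k, hk, hperiods⟩ :=
    exists_periods_eq_zmultiples_div hf hnonconst (mul_ne_zero two_ne_zero hp) hper
  refine ⟨k, hk, Set.ext fun η => ?_⟩
  rw [Set.mem_ofPred_eq, symmetric_about_iff_periodic_two_nsmul heven, ← mem_periods, hperiods,
    mem_zmultiples_iff]
  refine exists_congr fun n => ?_
  have hdouble : n • (2 * p / k) = 2 * (n * p / k) := by rw [zsmul_eq_mul]; ring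
  rw [hdouble, nsmul_eq_mul, Nat.cast_ofNat, mul_right_inj' two_ne_zero, eq_comm]

end ArchimedeanField

/-- Let `v ∈ C(ℝ)` be even, `2π`-periodic and non-constant.  Then the set
`𝓡 = {η : v(η+φ) = v(η−φ) for all φ}` of points of reflectional symmetry of `v`
equals `{nπ/k : n ∈ ℤ}` for some positive integer `k`. -/
theorem reflection_symmetry_points_eq_pi_div_k
    (v : ℝ → ℝ) (hv : Continuous v)
    (heven : ∀ φ : ℝ, v (-φ) = v φ)
    (hper : ∀ φ : ℝ, v (φ + 2 * Real.pi) = v φ)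
    (hnonconst : ¬ ∃ c : ℝ, ∀ φ : ℝ, v φ = c) :
    ∃ k : ℕ, 0 < k ∧
      {η : ℝ | ∀ φ : ℝ, v (η + φ) = v (η - φ)} =
        {x : ℝ | ∃ n : ℤ, x = n * Real.pi / k} :=
  reflection_symmetry_points_eq_pi_div_k_general (hv.continuousAt (x := 0)) heven
    Real.pi_ne_zero hper hnonconst
end
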